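/- arXiv:2512.16540 — 2 statements merged into one kernel-verified Lean document; each statement's English description precedes it below -/
import Mathlib

section
/- Let P = {P_1,…,P_k} be a partition of [s] and set q_i = min P_i. In the Chow ring A*(P_s) = ℤ[t_0,…,t_s]/(t_0^{n²}, t_1^n,…,t_s^n) of P_s = P^{n²-1} × (P^{n-1})^{×s}, the class of W_{s,P} satisfies [W_{s,P}] = φ_P([W̃_k]) · ∏_{i=1}^{k} ∏_{p ∈ P_i \ {q_i}} ( Σ_{r=0}^{n-1} t_{q_i}^{n-1-r} t_p^r ), where W̃_k = W_{k,{{1},…,{k}}} and φ_P : A*(P_k) → A*(P_s) is the ring map sending h_0 ↦ t_0 and h_i ↦ t_{q_i} for i ∈ [k] (the empty product over P_i \ {q_i} being 1 when |P_i| = 1). -/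
noncomputable section

/-! ## Zariski topology on complex affine space -/

/-- The Zariski topology on the affine space `ι → ℂ`: the basic open sets are the
complements of hypersurfaces. -/
def zTop (ι : Type*) : TopologicalSpace (ι → ℂ) :=
  TopologicalSpace.generateFrom
    {U | ∃ p : MvPolynomial ι ℂ, U = {x | MvPolynomial.eval x p ≠ 0}}

/-- Zariski open subset of affine space. -/
def zOpen {ι : Type*} (U : Set (ι → ℂ)) : Prop := @IsOpen _ (zTop ι) U

/-- Zariski closed subset of affine space. -/
def zClosed {ι : Type*} (Z : Set (ι → ℂ)) : Prop := @IsClosed _ (zTop ι) Z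

/-- Zariski density. -/
def zDense {ι : Type*} (S : Set (ι → ℂ)) : Prop := @Dense _ (zTop ι) S

/-- Zariski closure. -/
def zClosure {ι : Type*} (S : Set (ι → ℂ)) : Set (ι → ℂ) := @closure _ (zTop ι) S

/-- Irreducibility in the Zariski topology. -/
def zIrred {ι : Type*} (S : Set (ι → ℂ)) : Prop := @IsIrreducible _ (zTop ι) S

/-- The dimension of a subset of affine space: the topological Krull dimension of the
subspace topology induced by the Zariski topology. -/
def zDim {ι : Type*} (S : Set (ι → ℂ)) : WithBot ℕ∞ :=
  @topologicalKrullDim S (TopologicalSpace.induced Subtype.val (zTop ι))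

/-- The common zero set of a family of polynomials. -/
def vanishSet {ι : Type*} (S : Set (MvPolynomial ι ℂ)) : Set (ι → ℂ) :=
  {x | ∀ p ∈ S, MvPolynomial.eval x p = 0}

/-- The ideal of all polynomials vanishing on a subset of affine space. -/
def vanishingIdealOf {ι : Type*} (X : Set (ι → ℂ)) : Ideal (MvPolynomial ι ℂ) where
  carrier := {p | ∀ x ∈ X, MvPolynomial.eval x p = 0}
  add_mem' := by
    intro a b ha hb x hx
    simp [ha x hx, hb x hx]
  zero_mem' := by
    intro x hx
    simp
  smul_mem' := by
    intro c p hp x hx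
    simp [smul_eq_mul, hp x hx]

/-- A subset of `ι → ℂ` is a cone if it is stable under scalar multiplication. -/
def IsCone {ι : Type*} (X : Set (ι → ℂ)) : Prop :=
  ∀ (c : ℂ) (v : ι → ℂ), v ∈ X → c • v ∈ X

/-- The affine-linear subspace cut out by `k` affine-linear equations whose coefficients are
recorded by `a` (the `none` coordinate records the constant term). -/
def affSlice {ι : Type*} [Fintype ι] {k : ℕ} (a : Fin k × Option ι → ℂ) : Set (ι → ℂ) :=
  {x | ∀ j : Fin k, a (j, none) + ∑ i : ι, a (j, some i) * x i = 0}

/-- `hasConeDegree C k δ` : the projective variety with affine cone `C ⊆ ℂ^ι` and projective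
dimension `k` has degree `δ`, expressed by saying that a generic affine-linear slice of `C` of
codimension `k + 1` consists of exactly `δ` points. -/
def hasConeDegree {ι : Type*} [Fintype ι] (C : Set (ι → ℂ)) (k δ : ℕ) : Prop :=
  ∃ U : Set (Fin (k + 1) × Option ι → ℂ), zOpen U ∧ zDense U ∧
    ∀ a ∈ U, (C ∩ affSlice a).ncard = δ

/-! ## Eigenvectors and the Kalman variety -/

/-- `v` is an eigenvector of the matrix `A`. -/
def IsEigenvector {n : ℕ} (A : Matrix (Fin n) (Fin n) ℂ) (v : Fin n → ℂ) : Prop :=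
  v ≠ 0 ∧ ∃ lam : ℂ, A.mulVec v = lam • v

/-- The space of `n × n` complex matrices, presented as an affine space. -/
abbrev MatSpace (n : ℕ) := Fin n × Fin n → ℂ

/-- The matrix corresponding to a point of `MatSpace n`. -/
def toMat {n : ℕ} (A : MatSpace n) : Matrix (Fin n) (Fin n) ℂ :=
  Matrix.of fun i j => A (i, j)

/-- The affine cone over the Kalman variety `𝒦(X)` of the projective variety whose affine
cone is `X`: all matrices having an eigenvector lying on `X`. -/
def kalmanCone {n : ℕ} (X : Set (Fin n → ℂ)) : Set (MatSpace n) :=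
  {A | ∃ v ∈ X, IsEigenvector (toMat A) v}



/-! ## Symmetric powers of matrices and Kalman matrices -/

/-- Index set for the monomials of degree `d` in `n` variables. -/
abbrev MonIdx (n d : ℕ) := Sym (Fin n) d

/-- The exponent vector of the monomial indexed by `σ`. -/
def monExp {n d : ℕ} (σ : MonIdx n d) : Fin n →₀ ℕ :=
  Multiset.toFinsupp (σ : Multiset (Fin n))

/-- The generic `n × n` matrix, whose entries are the variables of `ℂ[A]`. -/
def genMat (n : ℕ) : Matrix (Fin n) (Fin n) (MvPolynomial (Fin n × Fin n) ℂ) :=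
  Matrix.of fun i j => MvPolynomial.X (i, j)

/-- The `d`-th symmetric power `ρ_d(A)` of a square matrix `A`, i.e. the matrix (in the basis of
monomials of degree `d`) of the induced action of `A` on forms of degree `d`: the entry at
`(τ, σ)` is the coefficient of `x^σ` in `(A·x)^τ`. -/
def symPow {R : Type*} [CommRing R] {n : ℕ} (d : ℕ) (A : Matrix (Fin n) (Fin n) R) :
    Matrix (MonIdx n d) (MonIdx n d) R :=
  Matrix.of fun τ σ =>
    MvPolynomial.coeff (monExp σ)
      (∏ j : Fin n, (∑ k : Fin n, MvPolynomial.C (A j k) * MvPolynomial.X k) ^ (monExp τ j))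

/-- The coefficient vector of a form of degree `d`. -/
def coeffVec {n : ℕ} (d : ℕ) (f : MvPolynomial (Fin n) ℂ) : MonIdx n d → ℂ :=
  fun σ => MvPolynomial.coeff (monExp σ) f

/-- The form of degree `d` with coefficient vector `c`. -/
def polyOf {n d : ℕ} (c : MonIdx n d → ℂ) : MvPolynomial (Fin n) ℂ :=
  ∑ σ : MonIdx n d, MvPolynomial.monomial (monExp σ) (c σ)

/-- The rectangular Kalman matrix of order `d` associated with a `p × N` coefficient matrix `C`:
its rows are the rows of `C`, `C·ρ_d(A)`, ..., `C·ρ_d(A)^{t-1}` for the generic matrix `A`. -/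
def kalmanMat {n d p : ℕ} (t : ℕ) (C : Matrix (Fin p) (MonIdx n d) ℂ) :
    Matrix (Fin t × Fin p) (MonIdx n d) (MvPolynomial (Fin n × Fin n) ℂ) :=
  Matrix.of fun r τ =>
    ∑ κ : MonIdx n d, MvPolynomial.C (C r.2 κ) * ((symPow d (genMat n)) ^ (r.1 : ℕ)) κ τ

/-- The square Kalman matrix `K_d(f)` of a form `f` with coefficient vector `c`: the rows are
`C_f ρ_d(A)^i` for `i = 0, …, N - 1` (indexed by monomials through a fixed enumeration). -/
def kalmanSq {n : ℕ} (d : ℕ) (c : MonIdx n d → ℂ) :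
    Matrix (MonIdx n d) (MonIdx n d) (MvPolynomial (Fin n × Fin n) ℂ) :=
  Matrix.of fun σ τ =>
    ∑ κ : MonIdx n d, MvPolynomial.C (c κ) *
      ((symPow d (genMat n)) ^ ((Fintype.equivFin (MonIdx n d)) σ : ℕ)) κ τ

/-- The determinant of the square Kalman matrix of order `d`. -/
def kalmanDet {n : ℕ} (d : ℕ) (c : MonIdx n d → ℂ) : MvPolynomial (Fin n × Fin n) ℂ :=
  (kalmanSq d c).det

/-- The locus of matrices at which all maximal minors of a (rectangular) matrix of polynomials
in `ℂ[A]` vanish. -/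
def maxMinorsZeroSet {n d : ℕ} {ridx : Type*}
    (M : Matrix ridx (MonIdx n d) (MvPolynomial (Fin n × Fin n) ℂ)) : Set (MatSpace n) :=
  {A | ∀ e : MonIdx n d → ridx, Function.Injective e →
    MvPolynomial.eval A (Matrix.det (Matrix.of fun σ τ => M (e σ) τ)) = 0}



/-! ## Polarizations and μ-Kalman varieties -/

/-- Evaluation of the multihomogeneous polarization `f_μ` of `f` at a tuple of vectors
`v_1, …, v_s` (up to a nonzero rational normalization constant): the coefficient of `t^μ`
in `f(t_1 v_1 + ⋯ + t_s v_s)`. -/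
def polarEval {n s : ℕ} (f : MvPolynomial (Fin n) ℂ) (μ : Fin s → ℕ)
    (v : Fin s → Fin n → ℂ) : ℂ :=
  MvPolynomial.coeff (Finsupp.equivFunOnFinite.symm μ)
    (MvPolynomial.eval₂ MvPolynomial.C
      (fun k => ∑ i : Fin s, MvPolynomial.C (v i k) * MvPolynomial.X i) f)

/-- The affine cone over the `μ`-Kalman variety `𝒦_μ(f)`: the Zariski closure of the set of
matrices admitting linearly independent eigenvectors `v_1, …, v_s` with `f_μ(v_1, …, v_s) = 0`. -/
def muKalmanCone {n : ℕ} (f : MvPolynomial (Fin n) ℂ) {s : ℕ} (μ : Fin s → ℕ) :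
    Set (MatSpace n) :=
  zClosure {A | ∃ v : Fin s → (Fin n → ℂ),
    (∀ i, IsEigenvector (toMat A) (v i)) ∧ LinearIndependent ℂ v ∧ polarEval f μ v = 0}

/-- The parts of a partition of `d`, listed as a tuple. -/
def partTuple (d : ℕ) (μ : Nat.Partition d) : Fin (Multiset.card μ.parts) → ℕ :=
  fun i => μ.parts.toList.get (i.cast (Multiset.length_toList _).symm)

/-- The multiset of nonzero exponents of the monomial indexed by `σ`. -/
def expMultiset {n d : ℕ} (σ : Sym (Fin n) d) : Multiset ℕ :=
  Multiset.filter (fun e => e ≠ 0)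
    (Multiset.map (fun i => Multiset.toFinsupp (σ : Multiset (Fin n)) i) Finset.univ.val)

/-! ## Tangent spaces, smooth points and singular loci -/

/-- The Zariski tangent space of `X ⊆ ℂ^ι` at `x`: the common kernel of the differentials at
`x` of all polynomials vanishing on `X`. -/
def tangentSpace {ι : Type*} [Fintype ι] (X : Set (ι → ℂ)) (x : ι → ℂ) :
    Submodule ℂ (ι → ℂ) where
  carrier := {u | ∀ p : MvPolynomial ι ℂ, (∀ y ∈ X, MvPolynomial.eval y p = 0) →
      ∑ i : ι, u i * MvPolynomial.eval x (MvPolynomial.pderiv i p) = 0}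
  add_mem' := by
    intro a b ha hb p hp
    have h1 := ha p hp
    have h2 := hb p hp
    simp only [Pi.add_apply, add_mul, Finset.sum_add_distrib, h1, h2, add_zero]
  zero_mem' := by
    intro p hp
    simp
  smul_mem' := by
    intro c u hu p hp
    have h1 := hu p hp
    simp only [Pi.smul_apply, smul_eq_mul, mul_assoc, ← Finset.mul_sum, h1, mul_zero]

/-- The local dimension of `X` at `x`, in the Zariski topology. -/
def zLocalDim {ι : Type*} (X : Set (ι → ℂ)) (x : ι → ℂ) : WithBot ℕ∞ :=
  ⨅ (U : Set (ι → ℂ)) (_ : zOpen U) (_ : x ∈ U), zDim (X ∩ U)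

/-- `x` is a smooth point of `X`: the Zariski tangent space has dimension equal to the local
dimension of `X` at `x`. -/
def smoothAt {ι : Type*} [Fintype ι] (X : Set (ι → ℂ)) (x : ι → ℂ) : Prop :=
  ((Module.finrank ℂ (tangentSpace X x) : ℕ∞) : WithBot ℕ∞) = zLocalDim X x

/-- The affine cone over the singular locus of the projective variety whose affine cone is `X`:
the nonzero points of `X` that are not smooth points. -/
def projSingCone {ι : Type*} [Fintype ι] (X : Set (ι → ℂ)) : Set (ι → ℂ) :=
  {x | x ∈ X ∧ x ≠ 0 ∧ ¬ smoothAt X x}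

/-- The affine cone over the (reduced) singular locus of the Kalman variety of the projective
variety with affine cone `X`. -/
def singKalmanCone {n : ℕ} (X : Set (Fin n → ℂ)) : Set (MatSpace n) :=
  zClosure (projSingCone (zClosure (kalmanCone X)))



/-! ## The spaces `ℙ_s = ℙ^{n²-1} × (ℙ^{n-1})^s` (as multicones) -/

/-- Coordinates for the multicone over `ℙ^{n²-1} × (ℙ^{n-1})^{×s}`. -/
abbrev MIdx (n s : ℕ) := (Fin n × Fin n) ⊕ (Fin s × Fin n)

/-- The matrix component of a point of the multicone. -/
def matPart {n s : ℕ} (x : MIdx n s → ℂ) : MatSpace n := fun ij => x (Sum.inl ij)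

/-- The `i`-th vector component of a point of the multicone. -/
def vecPart {n s : ℕ} (x : MIdx n s → ℂ) (i : Fin s) : Fin n → ℂ := fun k => x (Sum.inr (i, k))

/-- A partition of `{1, …, s}` into `k` (indexed) nonempty pairwise disjoint blocks. -/
structure IdxPartition (s k : ℕ) where
  block : Fin k → Finset (Fin s)
  nonempty : ∀ i, (block i).Nonempty
  disj : ∀ i j, i ≠ j → Disjoint (block i) (block j)
  cover : ∀ p : Fin s, ∃ i, p ∈ block i

/-- The minimal representative of the `i`-th block. -/
def IdxPartition.rep {s k : ℕ} (P : IdxPartition s k) (i : Fin k) : Fin s :=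
  (P.block i).min' (P.nonempty i)

/-- The finest partition, all of whose blocks are singletons. -/
def singletonPartition (s : ℕ) : IdxPartition s s where
  block i := {i}
  nonempty i := ⟨i, by simp⟩
  disj i j h := Finset.disjoint_singleton.2 h
  cover p := ⟨p, by simp⟩

/-- A tuple of nonzero vectors is `P`-compatible: vectors within each block of `P` are
proportional, and representatives of the distinct blocks are linearly independent. -/
def PCompatible {n s k : ℕ} (P : IdxPartition s k) (v : Fin s → Fin n → ℂ) : Prop :=
  (∀ p, v p ≠ 0) ∧
  (∀ i, ∀ p ∈ P.block i, ∀ q ∈ P.block i, ∃ c : ℂ, v p = c • v q) ∧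
  (∀ r : Fin k → Fin s, (∀ i, r i ∈ P.block i) → LinearIndependent ℂ (fun i => v (r i)))

/-- The multicone over `W_s`: tuples `(A, v_1, …, v_s)` where each `v_i` is an eigenvector of
the (nonzero) matrix `A`. -/
def Wcone (n s : ℕ) : Set (MIdx n s → ℂ) :=
  {x | matPart x ≠ 0 ∧ ∀ i, IsEigenvector (toMat (matPart x)) (vecPart x i)}

/-- The multicone over `W_{s,P}`: the Zariski closure of the set of tuples in `W_s` whose
vector part is `P`-compatible. -/
def WsPcone (n : ℕ) {s k : ℕ} (P : IdxPartition s k) : Set (MIdx n s → ℂ) :=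
  zClosure {x | x ∈ Wcone n s ∧ PCompatible P (fun i => vecPart x i)}

/-! ## Multidegrees -/

/-- Parameter space for a multiprojective slice of multidegree type `γ`. -/
abbrev MSliceParam (n s : ℕ) (γ : Fin (s + 1) → ℕ) : Type :=
  (Fin (n ^ 2 - γ 0) × Option (Fin n × Fin n)) ⊕ ((Σ j : Fin s, Fin (n - γ j.succ)) × Option (Fin n))

/-- The multiprojective affine-linear slice with parameters `a`: it cuts the matrix factor by
`n² - γ 0` affine-linear equations and the `j`-th vector factor by `n - γ (j+1)` affine-linear
equations. -/
def mSlice {n s : ℕ} (γ : Fin (s + 1) → ℕ) (a : MSliceParam n s γ → ℂ) :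
    Set (MIdx n s → ℂ) :=
  {x | (∀ r : Fin (n ^ 2 - γ 0),
          a (Sum.inl (r, none)) +
            ∑ ij : Fin n × Fin n, a (Sum.inl (r, some ij)) * x (Sum.inl ij) = 0) ∧
       (∀ j : Fin s, ∀ r : Fin (n - γ j.succ),
          a (Sum.inr (⟨j, r⟩, none)) +
            ∑ k : Fin n, a (Sum.inr (⟨j, r⟩, some k)) * x (Sum.inr (j, k)) = 0)}

/-- `hasMD W γ δ` : the coefficient of the monomial `h_0^{γ 0} h_1^{γ 1} ⋯ h_s^{γ s}` in the
Chow class of the multiprojective variety with multicone `W ⊆ ℂ^{n²} × (ℂ^n)^s` equals `δ`: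
a generic multiprojective slice of type `γ` meets `W` in exactly `δ` points. -/
def hasMD {n s : ℕ} (W : Set (MIdx n s → ℂ)) (γ : Fin (s + 1) → ℕ) (δ : ℕ) : Prop :=
  ∃ U : Set (MSliceParam n s γ → ℂ), zOpen U ∧ zDense U ∧
    ∀ a ∈ U, (W ∩ mSlice γ a).ncard = δ

/-- The exponent vector of the monomial `h_0 · h_1^{n-1} ⋯ h_i^{n-2} ⋯ h_s^{n-1}`. -/
def specialExp (n s : ℕ) (i : Fin s) : Fin (s + 1) → ℕ :=
  fun j => if j = 0 then 1 else if j = i.succ then n - 2 else n - 1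

/-- `γ` lies in the box of admissible exponents of the Chow ring of `ℙ^{n²-1} × (ℙ^{n-1})^s`. -/
def inBox (n s : ℕ) (γ : Fin (s + 1) → ℕ) : Prop :=
  γ 0 < n ^ 2 ∧ ∀ j : Fin s, γ j.succ < n

/-- `representsClass W c q` : the polynomial `q` represents the Chow class of the
multiprojective variety with multicone `W`, of codimension `c`: its coefficients in the
admissible box in degree `c` are the multidegrees of `W`, and all other coefficients vanish. -/
def representsClass {n s : ℕ} (W : Set (MIdx n s → ℂ)) (c : ℕ)
    (q : MvPolynomial (Fin (s + 1)) ℤ) : Prop :=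
  (∀ γ : Fin (s + 1) → ℕ, inBox n s γ → (∑ j, γ j) = c →
      ∃ δ : ℕ, q.coeff (Finsupp.equivFunOnFinite.symm γ) = (δ : ℤ) ∧ hasMD W γ δ) ∧
  (∀ γ : Fin (s + 1) → ℕ, ¬ (inBox n s γ ∧ (∑ j, γ j) = c) →
      q.coeff (Finsupp.equivFunOnFinite.symm γ) = 0)

/-! ## The Chow ring of `ℙ^{n²-1} × (ℙ^{n-1})^s` -/

/-- The defining ideal of the Chow ring `ℤ[h_0, …, h_s]/(h_0^{n²}, h_1^n, …, h_s^n)`. -/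
def chowIdeal (n s : ℕ) : Ideal (MvPolynomial (Fin (s + 1)) ℤ) :=
  Ideal.span ({MvPolynomial.X 0 ^ n ^ 2} ∪
    Set.range fun j : Fin s => MvPolynomial.X j.succ ^ n)

/-- The Chow ring `A^*(ℙ_s) = ℤ[h_0, …, h_s]/(h_0^{n²}, h_1^n, …, h_s^n)`. -/
abbrev ChowRing (n s : ℕ) := MvPolynomial (Fin (s + 1)) ℤ ⧸ chowIdeal n s

/-- The variable substitution `h_0 ↦ t_0`, `h_i ↦ t_{q_i}` underlying `φ_P`. -/
def blockVarMap {s k : ℕ} (P : IdxPartition s k) : Fin (k + 1) → Fin (s + 1) :=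
  Fin.cases 0 fun i => (P.rep i).succ

lemma phiP_aux {n s k : ℕ} (P : IdxPartition s k) :
    ∀ a ∈ chowIdeal n k,
      ((Ideal.Quotient.mk (chowIdeal n s)).comp
        (MvPolynomial.rename (R := ℤ) (blockVarMap P)).toRingHom) a = 0 := by
  intro a ha
  rw [RingHom.comp_apply, Ideal.Quotient.eq_zero_iff_mem]
  have hmap : (MvPolynomial.rename (R := ℤ) (blockVarMap P)).toRingHom a ∈
      Ideal.map (MvPolynomial.rename (R := ℤ) (blockVarMap P)).toRingHom
        (chowIdeal n k) :=
    Ideal.mem_map_of_mem _ ha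
  have hle : Ideal.map
      (MvPolynomial.rename (R := ℤ) (blockVarMap P)).toRingHom
      (chowIdeal n k) ≤ chowIdeal n s := by
    rw [chowIdeal, Ideal.map_span, Ideal.span_le]
    rintro q ⟨p, hp, rfl⟩
    rcases hp with hp | ⟨j, rfl⟩
    · rw [Set.mem_singleton_iff] at hp
      subst hp
      simp only [AlgHom.toRingHom_eq_coe, RingHom.coe_coe, map_pow, MvPolynomial.rename_X,
        Fin.cases_zero]
      exact Ideal.subset_span (Or.inl rfl)
    · simp only [AlgHom.toRingHom_eq_coe, RingHom.coe_coe, map_pow, MvPolynomial.rename_X,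
        Fin.cases_succ]
      exact Ideal.subset_span (Or.inr ⟨P.rep j, rfl⟩)
  exact hle hmap

/-- The ring map `φ_P : A^*(ℙ_k) → A^*(ℙ_s)` sending `h_0 ↦ t_0` and `h_i ↦ t_{q_i}`. -/
def phiP (n : ℕ) {s k : ℕ} (P : IdxPartition s k) : ChowRing n k →+* ChowRing n s :=
  Ideal.Quotient.lift (chowIdeal n k)
    ((Ideal.Quotient.mk (chowIdeal n s)).comp
      (MvPolynomial.rename (R := ℤ) (blockVarMap P)).toRingHom)
    (phiP_aux P)



/-! ## Discriminants of characteristic polynomials -/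

/-- `∏_{i<j} (l i - l j)^2` for a list `l`. -/
def listPairProdSq (l : List ℂ) : ℂ :=
  ∏ p ∈ Finset.univ.filter (fun p : Fin l.length × Fin l.length => p.1 < p.2),
    (l.get p.1 - l.get p.2) ^ 2

/-- The product of the squared differences of all pairs of elements of a multiset; applied to
the multiset of roots of a characteristic polynomial this is the discriminant. -/
def pairProdSq (m : Multiset ℂ) : ℂ := listPairProdSq m.toList

/-- The coordinate vector (for the action of the symmetric power `ρ_d`) of the symmetric
product `v_1 ⋯ v_d` of the vectors `v i`: its `σ`-th coordinate is the coefficient of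
`t_1 ⋯ t_d` in `∏_k (∑_i t_i v i k)^{σ_k}`. -/
def symProdVec {n d : ℕ} (v : Fin d → Fin n → ℂ) : MonIdx n d → ℂ := fun σ =>
  MvPolynomial.coeff (Finsupp.equivFunOnFinite.symm fun _ : Fin d => 1)
    (∏ k : Fin n, (∑ i : Fin d, MvPolynomial.C (v i k) * MvPolynomial.X i) ^ (monExp σ k))


lemma zTop_basis (ι : Type*) : @TopologicalSpace.IsTopologicalBasis _ (zTop ι)
    {U | ∃ p : MvPolynomial ι ℂ, U = {x | MvPolynomial.eval x p ≠ 0}} := by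
  let _ := zTop ι
  refine ⟨?_, ?_, rfl⟩
  · rintro _ ⟨p, rfl⟩ _ ⟨q, rfl⟩ x ⟨hx1, hx2⟩
    refine ⟨_, ⟨p * q, rfl⟩, ?_, ?_⟩
    · simp only [Set.mem_ofPred_eq, map_mul]
      exact mul_ne_zero hx1 hx2
    · intro y hy
      simp only [Set.mem_ofPred_eq, map_mul] at hy
      exact ⟨left_ne_zero_of_mul hy, right_ne_zero_of_mul hy⟩
  · apply Set.eq_univ_of_forall
    intro x
    exact ⟨_, ⟨1, rfl⟩, by simp⟩

lemma mem_zClosure {ι : Type*} (S : Set (ι → ℂ)) (x : ι → ℂ) :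
    x ∈ zClosure S ↔ ∀ p : MvPolynomial ι ℂ, (∀ y ∈ S, MvPolynomial.eval y p = 0) →
      MvPolynomial.eval x p = 0 := by
  let _ := zTop ι
  unfold zClosure
  rw [(zTop_basis ι).mem_closure_iff]
  constructor
  · intro h p hp
    by_contra hx
    obtain ⟨y, hy1, hy2⟩ := h _ ⟨p, rfl⟩ hx
    exact hy1 (hp y hy2)
  · rintro h _ ⟨p, rfl⟩ hx
    by_contra hne
    apply hx
    apply h
    intro y hy
    by_contra hy'
    exact hne ⟨y, hy', hy⟩

lemma exists_poly_of_zOpen {ι : Type*} (U : Set (ι → ℂ)) (hU : zOpen U) (hd : zDense U) :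
    ∃ p : MvPolynomial ι ℂ, p ≠ 0 ∧ ∀ x, MvPolynomial.eval x p ≠ 0 → x ∈ U := by
  let _ := zTop ι
  have hne : U.Nonempty := Dense.nonempty (X := ι → ℂ) hd
  obtain ⟨x, hx⟩ := hne
  obtain ⟨_, ⟨p, rfl⟩, hp1, hp2⟩ := (zTop_basis ι).exists_subset_of_mem_open hx hU
  refine ⟨p, ?_, fun y hy => hp2 hy⟩
  rintro rfl
  simp at hp1

lemma hasMD_poly {n s : ℕ} {W : Set (MIdx n s → ℂ)} {γ : Fin (s + 1) → ℕ} {δ : ℕ}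
    (h : hasMD W γ δ) : ∃ p : MvPolynomial (MSliceParam n s γ) ℂ, p ≠ 0 ∧
      ∀ a, MvPolynomial.eval a p ≠ 0 → (W ∩ mSlice γ a).ncard = δ := by
  obtain ⟨U, hU, hd, h⟩ := h
  obtain ⟨p, hp, hpU⟩ := exists_poly_of_zOpen U hU hd
  exact ⟨p, hp, fun a ha => h a (hpU a ha)⟩

lemma exists_eval_ne {ι : Type*} (p : MvPolynomial ι ℂ) (hp : p ≠ 0) :
    ∃ x, MvPolynomial.eval x p ≠ 0 := by
  by_contra h
  push Not at h
  exact hp (MvPolynomial.funext (by simpa using h))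

lemma eval_bind {ι κ : Type*} (f : ι → MvPolynomial κ ℂ) (p : MvPolynomial ι ℂ) (t : κ → ℂ) :
    MvPolynomial.eval t (MvPolynomial.bind₁ f p) =
      MvPolynomial.eval (fun i => MvPolynomial.eval t (f i)) p := by
  have := MvPolynomial.eval₂Hom_bind₁ (RingHom.id ℂ) t f p
  exact this

/-- index of the block -/
def IdxPartition.bi {s k : ℕ} (P : IdxPartition s k) (p : Fin s) : Fin k := (P.cover p).choose

lemma IdxPartition.mem_bi {s k : ℕ} (P : IdxPartition s k) (p : Fin s) : p ∈ P.block (P.bi p) :=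
  (P.cover p).choose_spec

lemma IdxPartition.mem_iff {s k : ℕ} (P : IdxPartition s k) (p : Fin s) (i : Fin k) :
    p ∈ P.block i ↔ P.bi p = i := by
  constructor
  · intro h
    by_contra hne
    exact Finset.disjoint_left.1 (P.disj _ _ hne) (P.mem_bi p) h
  · rintro rfl
    exact P.mem_bi p

lemma IdxPartition.rep_mem {s k : ℕ} (P : IdxPartition s k) (i : Fin k) : P.rep i ∈ P.block i :=
  Finset.min'_mem _ _

@[simp] lemma IdxPartition.bi_rep {s k : ℕ} (P : IdxPartition s k) (i : Fin k) :
    P.bi (P.rep i) = i := (P.mem_iff _ _).1 (P.rep_mem i)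

lemma IdxPartition.rep_inj {s k : ℕ} (P : IdxPartition s k) : Function.Injective P.rep :=
  Function.LeftInverse.injective P.bi_rep

/-- projection to the representatives -/
def projRep {n s k : ℕ} (P : IdxPartition s k) (x : MIdx n s → ℂ) : MIdx n k → ℂ :=
  Sum.elim (fun ij => x (Sum.inl ij)) (fun il => x (Sum.inr (P.rep il.1, il.2)))

/-- lift from the representatives with scalars -/
def liftRep {n s k : ℕ} (P : IdxPartition s k) (c : Fin s → ℂ) (y : MIdx n k → ℂ) :
    MIdx n s → ℂ :=
  Sum.elim (fun ij => y (Sum.inl ij)) (fun pl => c pl.1 * y (Sum.inr (P.bi pl.1, pl.2)))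

lemma vecPart_projRep {n s k : ℕ} (P : IdxPartition s k) (x : MIdx n s → ℂ) (i : Fin k) :
    vecPart (projRep P x) i = vecPart x (P.rep i) := rfl

lemma matPart_projRep {n s k : ℕ} (P : IdxPartition s k) (x : MIdx n s → ℂ) :
    matPart (projRep P x) = matPart x := rfl

lemma vecPart_liftRep {n s k : ℕ} (P : IdxPartition s k) (c : Fin s → ℂ) (y : MIdx n k → ℂ)
    (p : Fin s) : vecPart (liftRep P c y) p = c p • vecPart y (P.bi p) := rfl

lemma matPart_liftRep {n s k : ℕ} (P : IdxPartition s k) (c : Fin s → ℂ) (y : MIdx n k → ℂ) :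
    matPart (liftRep P c y) = matPart y := rfl

lemma projRep_mem {n s k : ℕ} (P : IdxPartition s k) {x : MIdx n s → ℂ}
    (hx : x ∈ WsPcone n P) : projRep P x ∈ WsPcone n (singletonPartition k) := by
  unfold WsPcone at *
  rw [mem_zClosure] at *
  intro p hp
  have := hx (MvPolynomial.bind₁ (Sum.elim (fun ij => MvPolynomial.X (Sum.inl ij))
    (fun il : Fin k × Fin n => MvPolynomial.X (Sum.inr (P.rep il.1, il.2)))) p) ?_
  · rw [eval_bind] at this
    convert this using 2
    ext (ij | il) <;> simp [projRep]
  · rintro y ⟨⟨hy1, hy2⟩, hy3, hy4, hy5⟩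
    rw [eval_bind]
    have h := hp (projRep P y) ⟨⟨hy1, fun i => hy2 (P.rep i)⟩, fun i => hy3 (P.rep i), ?_, ?_⟩
    · convert h using 2
      ext (ij | il) <;> simp [projRep]
    · intro i p hp q hq
      simp only [singletonPartition, Finset.mem_singleton] at hp hq
      subst hp; subst hq
      exact ⟨1, by simp⟩
    · intro r hr
      have : r = id := by
        ext i
        have := hr i
        simp only [singletonPartition, Finset.mem_singleton] at this
        simp [this]
      subst this
      exact hy5 P.rep P.rep_mem

lemma liftRep_mem {n s k : ℕ} (P : IdxPartition s k) (c : Fin s → ℂ) (hc : ∀ p, c p ≠ 0)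
    {y : MIdx n k → ℂ}
    (hy : y ∈ WsPcone n (singletonPartition k)) : liftRep P c y ∈ WsPcone n P := by
  unfold WsPcone at *
  rw [mem_zClosure] at *
  intro p hp
  have := hy (MvPolynomial.bind₁ (Sum.elim (fun ij => MvPolynomial.X (Sum.inl ij))
    (fun pl : Fin s × Fin n => MvPolynomial.C (c pl.1) *
      MvPolynomial.X (Sum.inr (P.bi pl.1, pl.2)))) p) ?_
  · rw [eval_bind] at this
    convert this using 2
    ext (ij | il) <;> simp [liftRep]
  · rintro y ⟨⟨hy1, hy2⟩, hy3, hy4, hy5⟩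
    rw [eval_bind]
    have h := hp (liftRep P c y) ⟨⟨hy1, ?_⟩, ?_, ?_, ?_⟩
    · convert h using 2
      ext (ij | il) <;> simp [liftRep]
    · intro q
      obtain ⟨h1, lam, h2⟩ := hy2 (P.bi q)
      rw [vecPart_liftRep, matPart_liftRep]
      refine ⟨smul_ne_zero (hc q) h1, lam, ?_⟩
      rw [Matrix.mulVec_smul, h2, smul_comm]
    · intro q
      exact smul_ne_zero (hc q) (hy3 (P.bi q))
    · intro i p hp q hq
      rw [P.mem_iff] at hp hq
      refine ⟨c p / c q, ?_⟩
      simp only [vecPart_liftRep, hp, hq, smul_smul]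
      rw [div_mul_cancel₀ _ (hc q)]
    · intro r hr
      have hl := hy5 id (fun i => by simp [singletonPartition])
      have h2 := hl.units_smul (fun i => Units.mk0 (c (r i)) (hc _))
      convert h2 using 1
      ext i l
      have := (P.mem_iff _ _).1 (hr i)
      simp [vecPart_liftRep, this, Units.smul_def]

lemma WsP_prop {n s k : ℕ} (P : IdxPartition s k) {x : MIdx n s → ℂ}
    (hx : x ∈ WsPcone n P) (p : Fin s) (h0 : vecPart x (P.rep (P.bi p)) ≠ 0) :
    ∃ c : ℂ, vecPart x p = c • vecPart x (P.rep (P.bi p)) := by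
  have hmin : ∀ l j : Fin n, vecPart x p l * vecPart x (P.rep (P.bi p)) j =
      vecPart x p j * vecPart x (P.rep (P.bi p)) l := by
    intro l j
    unfold WsPcone at hx
    rw [mem_zClosure] at hx
    have := hx (MvPolynomial.X (Sum.inr (p, l)) * MvPolynomial.X (Sum.inr (P.rep (P.bi p), j)) -
      MvPolynomial.X (Sum.inr (p, j)) * MvPolynomial.X (Sum.inr (P.rep (P.bi p), l))) ?_
    · simp only [map_sub, map_mul, MvPolynomial.eval_X] at this
      exact sub_eq_zero.1 this
    · rintro y ⟨-, -, hy, -⟩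
      obtain ⟨c, hc⟩ := hy (P.bi p) p (P.mem_bi p) _ (P.rep_mem _)
      have h1 := congrFun hc l
      have h2 := congrFun hc j
      simp only [vecPart, Pi.smul_apply, smul_eq_mul] at h1 h2
      simp only [map_sub, map_mul, MvPolynomial.eval_X, h1, h2]
      ring
  obtain ⟨j, hj⟩ := Function.ne_iff.1 h0
  refine ⟨vecPart x p j / vecPart x (P.rep (P.bi p)) j, ?_⟩
  ext l
  simp only [Pi.smul_apply, smul_eq_mul]
  simp only [Pi.zero_apply] at hj
  field_simp
  exact hmin l j


/-- index set of the homogeneous equations -/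
abbrev JJ {s : ℕ} (m : Fin s → ℕ) := Σ p : Fin s, {r : Fin (m p) // r.val ≠ 0}

/-- common parameter space for the two slices -/
inductive TIdx (n s c : ℕ) (m : Fin s → ℕ) : Type
  | mat (y : Fin (n ^ 2 - c) × Option (Fin n × Fin n))
  | lin (j : JJ m) (l : Fin n)
  | nrm (p : Fin s) (o : Option (Fin n))
  | ee (j : JJ m)
  | ff (j : JJ m)

/-- homogeneous forms -/
def linP {n s c : ℕ} {m : Fin s → ℕ} (j : JJ m) : Option (Fin n) → MvPolynomial (TIdx n s c m) ℂ
  | none => 0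
  | some l => MvPolynomial.X (TIdx.lin j l)

/-- the map to the slices of `W_{s,P}` -/
def aPoly {n s : ℕ} (γ : Fin (s + 1) → ℕ) :
    MSliceParam n s γ → MvPolynomial (TIdx n s (γ 0) (fun p => n - γ p.succ)) ℂ
  | Sum.inl y => MvPolynomial.X (TIdx.mat y)
  | Sum.inr (⟨p, r⟩, o) => if h : r.val = 0 then MvPolynomial.X (TIdx.nrm p o) else
      linP ⟨p, r, h⟩ o + MvPolynomial.X (TIdx.ee ⟨p, r, h⟩) * MvPolynomial.X (TIdx.nrm p o)

/-- the map to the slices of `W_k` -/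
def bPoly {n s k : ℕ} (P : IdxPartition s k) (c : ℕ) (m : Fin s → ℕ) (g : Fin k → ℕ)
    (E : JJ (fun i => n - g i) ≃ JJ m) :
    MSliceParam n k (Fin.cons c g : Fin (k + 1) → ℕ) → MvPolynomial (TIdx n s c m) ℂ
  | Sum.inl y => MvPolynomial.X (TIdx.mat y)
  | Sum.inr (⟨i, r⟩, o) => if h : r.val = 0 then MvPolynomial.X (TIdx.nrm (P.rep i) o) else
      linP (E ⟨i, r, h⟩) o +
        MvPolynomial.X (TIdx.ff (E ⟨i, r, h⟩)) * MvPolynomial.X (TIdx.nrm (P.rep i) o)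

/-- slice parameters -/
def aOf {n s : ℕ} (γ : Fin (s + 1) → ℕ) (t : TIdx n s (γ 0) (fun p => n - γ p.succ) → ℂ) :
    MSliceParam n s γ → ℂ := fun i => MvPolynomial.eval t (aPoly γ i)

/-- slice parameters -/
def bOf {n s k : ℕ} (P : IdxPartition s k) (c : ℕ) (m : Fin s → ℕ) (g : Fin k → ℕ)
    (E : JJ (fun i => n - g i) ≃ JJ m) (t : TIdx n s c m → ℂ) :
    MSliceParam n k (Fin.cons c g : Fin (k + 1) → ℕ) → ℂ :=
  fun i => MvPolynomial.eval t (bPoly P c m g E i)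

/-- equations on the matrix factor -/
def matEq {n s c : ℕ} {m : Fin s → ℕ} (t : TIdx n s c m → ℂ) (A : MatSpace n) : Prop :=
  ∀ r : Fin (n ^ 2 - c), t (TIdx.mat (r, none)) +
    ∑ ij : Fin n × Fin n, t (TIdx.mat (r, some ij)) * A ij = 0

/-- linear part of normalization -/
def nlin {n s c : ℕ} {m : Fin s → ℕ} (t : TIdx n s c m → ℂ) (p : Fin s) (v : Fin n → ℂ) : ℂ :=
  ∑ l, t (TIdx.nrm p (some l)) * v l

/-- homogeneous form -/
def hlin {n s c : ℕ} {m : Fin s → ℕ} (t : TIdx n s c m → ℂ) (j : JJ m) (v : Fin n → ℂ) : ℂ :=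
  ∑ l, t (TIdx.lin j l) * v l

lemma nlin_smul {n s c : ℕ} {m : Fin s → ℕ} (t : TIdx n s c m → ℂ) (p : Fin s) (v : Fin n → ℂ)
    (z : ℂ) : nlin t p (z • v) = z * nlin t p v := by
  simp only [nlin, Finset.mul_sum, Pi.smul_apply, smul_eq_mul]
  exact Finset.sum_congr rfl fun _ _ => by ring

lemma hlin_smul {n s c : ℕ} {m : Fin s → ℕ} (t : TIdx n s c m → ℂ) (j : JJ m) (v : Fin n → ℂ)
    (z : ℂ) : hlin t j (z • v) = z * hlin t j v := by
  simp only [hlin, Finset.mul_sum, Pi.smul_apply, smul_eq_mul]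
  exact Finset.sum_congr rfl fun _ _ => by ring

lemma mem_mSlice_a {n s : ℕ} (γ : Fin (s + 1) → ℕ) (hγ : ∀ p : Fin s, γ p.succ < n)
    (t : TIdx n s (γ 0) (fun p => n - γ p.succ) → ℂ) (x : MIdx n s → ℂ) :
    x ∈ mSlice γ (aOf γ t) ↔ matEq t (matPart x) ∧
      (∀ p, t (TIdx.nrm p none) + nlin t p (vecPart x p) = 0) ∧
      ∀ j, hlin t j (vecPart x j.1) = 0 := by
  have key : ∀ (p : Fin s) (r : Fin (n - γ p.succ)) (h : r.val ≠ 0),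
      aOf γ t (Sum.inr (⟨p, r⟩, none)) +
        ∑ l, aOf γ t (Sum.inr (⟨p, r⟩, some l)) * x (Sum.inr (p, l)) =
      hlin t ⟨p, r, h⟩ (vecPart x p) +
        t (TIdx.ee ⟨p, r, h⟩) * (t (TIdx.nrm p none) + nlin t p (vecPart x p)) := by
    intro p r h
    simp only [aOf, aPoly, h, dif_neg, linP, map_add, map_mul, MvPolynomial.eval_X,
      not_false_eq_true, hlin, nlin, vecPart, mul_add, Finset.mul_sum, add_mul,
      Finset.sum_add_distrib, zero_add, mul_assoc]
    ring
  have key0 : ∀ (p : Fin s) (r : Fin (n - γ p.succ)) (h : r.val = 0),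
      aOf γ t (Sum.inr (⟨p, r⟩, none)) +
        ∑ l, aOf γ t (Sum.inr (⟨p, r⟩, some l)) * x (Sum.inr (p, l)) =
        t (TIdx.nrm p none) + nlin t p (vecPart x p) := by
    intro p r h
    simp only [aOf, aPoly, h, dif_pos, MvPolynomial.eval_X, nlin, vecPart]
  have hmat : (∀ r : Fin (n ^ 2 - γ 0),
          aOf γ t (Sum.inl (r, none)) +
            ∑ ij : Fin n × Fin n, aOf γ t (Sum.inl (r, some ij)) * x (Sum.inl ij) = 0) ↔
       matEq t (matPart x) := by
    simp only [aOf, aPoly, MvPolynomial.eval_X, matEq, matPart]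
  unfold mSlice
  rw [Set.mem_ofPred_eq, hmat]
  refine and_congr_right fun _ => ?_
  constructor
  · intro h
    have h1 : ∀ p, t (TIdx.nrm p none) + nlin t p (vecPart x p) = 0 := by
      intro p
      have := h p ⟨0, by have := hγ p; omega⟩
      rwa [key0 _ _ rfl] at this
    refine ⟨h1, ?_⟩
    rintro ⟨p, r, hr⟩
    have := h p r
    rwa [key p r hr, h1, mul_zero, add_zero] at this
  · rintro ⟨h1, h2⟩ p r
    by_cases hr : r.val = 0
    · rw [key0 p r hr, h1]
    · rw [key p r hr, h1, h2 ⟨p, r, hr⟩]; simp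

lemma mem_mSlice_b {n s k : ℕ} (P : IdxPartition s k) (c : ℕ) (m : Fin s → ℕ) (g : Fin k → ℕ)
    (E : JJ (fun i => n - g i) ≃ JJ m) (hE : ∀ x, P.bi (E x).1 = x.1) (hg : ∀ i, g i < n)
    (t : TIdx n s c m → ℂ) (y : MIdx n k → ℂ) :
    y ∈ mSlice _ (bOf P c m g E t) ↔ matEq t (matPart y) ∧
      (∀ i, t (TIdx.nrm (P.rep i) none) + nlin t (P.rep i) (vecPart y i) = 0) ∧
      ∀ j, hlin t j (vecPart y (P.bi j.1)) = 0 := by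
  have key : ∀ (p : Fin k) (r : Fin (n - g p)) (h : r.val ≠ 0),
      bOf P c m g E t (Sum.inr (⟨p, r⟩, none)) +
        ∑ l, bOf P c m g E t (Sum.inr (⟨p, r⟩, some l)) * y (Sum.inr (p, l)) =
      hlin t (E ⟨p, r, h⟩) (vecPart y p) +
        t (TIdx.ff (E ⟨p, r, h⟩)) *
          (t (TIdx.nrm (P.rep p) none) + nlin t (P.rep p) (vecPart y p)) := by
    intro p r h
    simp only [bOf, bPoly, h, dif_neg, linP, map_add, map_mul, MvPolynomial.eval_X,
      not_false_eq_true, hlin, nlin, vecPart, mul_add, Finset.mul_sum, add_mul,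
      Finset.sum_add_distrib, zero_add, mul_assoc]
    ring
  have key0 : ∀ (p : Fin k) (r : Fin (n - g p)) (h : r.val = 0),
      bOf P c m g E t (Sum.inr (⟨p, r⟩, none)) +
        ∑ l, bOf P c m g E t (Sum.inr (⟨p, r⟩, some l)) * y (Sum.inr (p, l)) =
        t (TIdx.nrm (P.rep p) none) + nlin t (P.rep p) (vecPart y p) := by
    intro p r h
    simp only [bOf, bPoly, h, dif_pos, MvPolynomial.eval_X, nlin, vecPart]
  have hmat : (∀ r : Fin (n ^ 2 - c),
          bOf P c m g E t (Sum.inl (r, none)) +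
            ∑ ij : Fin n × Fin n, bOf P c m g E t (Sum.inl (r, some ij)) * y (Sum.inl ij) = 0) ↔
       matEq t (matPart y) := by
    simp only [bOf, bPoly, MvPolynomial.eval_X, matEq, matPart]
    exact Iff.rfl
  unfold mSlice
  rw [Set.mem_ofPred_eq]
  refine and_congr hmat ?_
  constructor
  · intro h
    have h1 : ∀ i, t (TIdx.nrm (P.rep i) none) + nlin t (P.rep i) (vecPart y i) = 0 := by
      intro p
      exact (key0 p ⟨0, by have := hg p; omega⟩ rfl).symm.trans (h p ⟨0, _⟩)
    refine ⟨h1, ?_⟩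
    intro j
    obtain ⟨⟨i, r, hr⟩, rfl⟩ := E.surjective j
    rw [hE]
    have := (key i r hr).symm.trans (h i r)
    rwa [h1, mul_zero, add_zero] at this
  · rintro ⟨h1, h2⟩ p r
    by_cases hr : r.val = 0
    · exact (key0 p r hr).trans (h1 p)
    · have h3 := h2 (E ⟨p, r, hr⟩)
      rw [hE] at h3
      refine (key p r hr).trans ?_
      rw [h1, h3]; simp

lemma surj_a {n s : ℕ} (γ : Fin (s + 1) → ℕ) (hγ : ∀ p : Fin s, γ p.succ < n)
    (q : MvPolynomial (MSliceParam n s γ) ℂ) (hq : q ≠ 0) :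
    MvPolynomial.bind₁ (aPoly γ) q ≠ 0 := by
  have z : ∀ p : Fin s, 0 < n - γ p.succ := fun p => by have := hγ p; omega
  obtain ⟨a, ha⟩ := exists_eval_ne (q * ∏ p : Fin s,
    MvPolynomial.X (Sum.inr (⟨p, ⟨0, z p⟩⟩, none))) (mul_ne_zero hq
      (Finset.prod_ne_zero_iff.2 fun _ _ => MvPolynomial.X_ne_zero _))
  simp only [map_mul, map_prod, MvPolynomial.eval_X] at ha
  have h1 := left_ne_zero_of_mul ha
  have h2 := Finset.prod_ne_zero_iff.1 (right_ne_zero_of_mul ha)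
  intro h0
  let N : Fin s → Option (Fin n) → ℂ := fun p o => a (Sum.inr (⟨p, ⟨0, z p⟩⟩, o))
  let e : JJ (fun p => n - γ p.succ) → ℂ := fun j =>
    a (Sum.inr (⟨j.1, j.2.1⟩, none)) / N j.1 none
  have := congrArg (MvPolynomial.eval (fun i => match i with
    | TIdx.mat y => a (Sum.inl y)
    | TIdx.nrm p o => N p o
    | TIdx.ee j => e j
    | TIdx.ff _ => 0
    | TIdx.lin j l => a (Sum.inr (⟨j.1, j.2.1⟩, some l)) - e j * N j.1 (some l))) h0
  rw [eval_bind, map_zero] at this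
  apply h1
  refine Eq.trans (congrArg (fun z => MvPolynomial.eval z q) (funext ?_)) this
  rintro (y | ⟨⟨p, r⟩, o⟩)
  · simp [aPoly]
  · by_cases hr : r.val = 0
    · obtain ⟨r, hr'⟩ := r
      simp only at hr
      subst hr
      simp [aPoly, N]
    · rcases o with _ | l
      · simp [aPoly, hr, linP, e, N, h2 p (Finset.mem_univ p)]
      · simp [aPoly, hr, linP]

lemma surj_b {n s k : ℕ} (P : IdxPartition s k) (c : ℕ) (m : Fin s → ℕ) (g : Fin k → ℕ)
    (E : JJ (fun i => n - g i) ≃ JJ m) (hg : ∀ i, g i < n)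
    (q : MvPolynomial (MSliceParam n k (Fin.cons c g : Fin (k + 1) → ℕ)) ℂ) (hq : q ≠ 0) :
    MvPolynomial.bind₁ (bPoly P c m g E) q ≠ 0 := by
  have z : ∀ p : Fin k, 0 < n - g p := fun p => by have := hg p; omega
  obtain ⟨a, ha⟩ := exists_eval_ne (q * ∏ p : Fin k,
    MvPolynomial.X (Sum.inr (⟨p, ⟨0, z p⟩⟩, none))) (mul_ne_zero hq
      (Finset.prod_ne_zero_iff.2 fun _ _ => MvPolynomial.X_ne_zero _))
  simp only [map_mul, map_prod, MvPolynomial.eval_X] at ha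
  have h1 := left_ne_zero_of_mul ha
  have h2 := Finset.prod_ne_zero_iff.1 (right_ne_zero_of_mul ha)
  intro h0
  let N : Fin k → Option (Fin n) → ℂ := fun p o => a (Sum.inr (⟨p, ⟨0, z p⟩⟩, o))
  let e : JJ (fun i => n - g i) → ℂ := fun j =>
    a (Sum.inr (⟨j.1, j.2.1⟩, none)) / N j.1 none
  let lv : JJ (fun i => n - g i) → Option (Fin n) → ℂ := fun j o => a (Sum.inr (⟨j.1, j.2.1⟩, o))
  have := congrArg (MvPolynomial.eval (fun i => match i with
    | TIdx.mat y => a (Sum.inl y)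
    | TIdx.nrm p o => N (P.bi p) o
    | TIdx.ee _ => 0
    | TIdx.ff j => e (E.symm j)
    | TIdx.lin j l => lv (E.symm j) (some l) -
        e (E.symm j) * N (E.symm j).1 (some l))) h0
  rw [eval_bind, map_zero] at this
  apply h1
  refine Eq.trans (congrArg (fun z => MvPolynomial.eval z q) (funext ?_)) this
  rintro (y | ⟨⟨p, r⟩, o⟩)
  · simp [bPoly]
  · change Fin (n - g p) at r
    by_cases hr : r.val = 0
    · obtain ⟨r, hr'⟩ := r
      simp only at hr
      subst hr
      simp only [bPoly, dif_pos, MvPolynomial.eval_X, P.bi_rep]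
      rfl
    · rcases o with _ | l
      · simp only [bPoly, hr, linP, dif_neg, not_false_eq_true, map_add, map_mul,
          MvPolynomial.eval_X, P.bi_rep, E.symm_apply_apply, map_zero, zero_add]
        exact (div_mul_cancel₀ _ (h2 p (Finset.mem_univ p))).symm
      · simp only [bPoly, hr, linP, dif_neg, not_false_eq_true, map_add, map_mul,
          MvPolynomial.eval_X, P.bi_rep, E.symm_apply_apply, sub_add_cancel]
        rfl

lemma lin_poly_ne {s n : ℕ} (p : Fin s) (c : Fin n → ℂ) (hc : c ≠ 0) :
    (∑ l, MvPolynomial.X (p, l) * MvPolynomial.C (c l) : MvPolynomial (Fin s × Fin n) ℂ) ≠ 0 := by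
  obtain ⟨l, hl⟩ := Function.ne_iff.1 hc
  intro h
  have := congrArg (MvPolynomial.eval (Pi.single (p, l) 1)) h
  simp [Pi.single_apply] at this
  exact hl this

lemma avoid {X : Type*} {s n : ℕ} (S : Set X) (w : Fin s → X → Fin n → ℂ)
    (hw : ∀ p, ∀ x ∈ S, w p x ≠ 0) :
    ∃ g : MvPolynomial (Fin s × Fin n) ℂ, g ≠ 0 ∧ ∀ u, MvPolynomial.eval u g ≠ 0 →
      ∀ B ⊆ S, {x ∈ S | ∀ p, ∑ l, u (p, l) * w p x l ≠ 0} ⊆ B → B.ncard = S.ncard := by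
  by_cases hS : S.Finite
  · refine ⟨∏ x ∈ hS.toFinset, ∏ p, ∑ l, MvPolynomial.X (p, l) * MvPolynomial.C (w p x l), ?_, ?_⟩
    · refine Finset.prod_ne_zero_iff.2 fun x hx => Finset.prod_ne_zero_iff.2 fun p _ => ?_
      exact lin_poly_ne p _ (hw p x (by simpa using hx))
    · intro u hu B hBS hB
      congr 1
      refine Set.Subset.antisymm hBS fun x hx => hB ⟨hx, fun p => ?_⟩
      rw [map_prod] at hu
      have h1 := Finset.prod_ne_zero_iff.1 hu x (by simpa using hx)
      rw [map_prod] at h1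
      have h2 := Finset.prod_ne_zero_iff.1 h1 p (Finset.mem_univ p)
      simpa using h2
  · have hSi : S.Infinite := hS
    have hne : (Filter.cofinite ⊓ Filter.principal S).NeBot :=
      hSi.cofinite_inf_principal_neBot
    let F : Ultrafilter X := Ultrafilter.of (Filter.cofinite ⊓ Filter.principal S)
    have hF : (F : Filter X) ≤ Filter.cofinite ⊓ Filter.principal S := Ultrafilter.of_le _
    have hFS : ∀ᶠ x in (F : Filter X), x ∈ S := hF (Filter.mem_inf_of_right (Filter.mem_principal_self S))
    let bad : Fin s → Submodule ℂ (Fin n → ℂ) := fun p =>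
      { carrier := {u | ∀ᶠ x in (F : Filter X), ∑ l, u l * w p x l = 0}
        add_mem' := by
          intro a b ha hb
          filter_upwards [ha, hb] with x h1 h2
          simp [add_mul, Finset.sum_add_distrib, h1, h2]
        zero_mem' := by simp
        smul_mem' := by
          intro c a ha
          filter_upwards [ha] with x h1
          simp [mul_assoc, ← Finset.mul_sum, h1] }
    have hbad : ∀ p, ∃ f : (Fin n → ℂ) →ₗ[ℂ] ℂ, f ≠ 0 ∧ bad p ≤ LinearMap.ker f := by
      intro p
      apply Submodule.exists_le_ker_of_lt_top
      rw [lt_top_iff_ne_top]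
      intro htop
      have h1 : ∀ l : Fin n, ∀ᶠ x in (F : Filter X), w p x l = 0 := by
        intro l
        have : (Pi.single l 1 : Fin n → ℂ) ∈ bad p := by rw [htop]; trivial
        have h2 : ∀ᶠ x in (F : Filter X), ∑ l', (Pi.single l 1 : Fin n → ℂ) l' * w p x l' = 0 := this
        filter_upwards [h2] with x hx
        simpa [Pi.single_apply] using hx
      obtain ⟨x, hx1, hx2⟩ := ((Filter.eventually_all.2 h1).and hFS).exists
      exact hw p x hx2 (funext hx1)
    choose f hf0 hf using hbad
    have hfe : ∀ p (v : Fin n → ℂ), f p v = ∑ l, v l * f p (Pi.single l 1) := by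
      intro p v
      conv_lhs => rw [pi_eq_sum_univ' v]
      simp [map_sum, map_smul]
    refine ⟨∏ p, ∑ l, MvPolynomial.X (p, l) * MvPolynomial.C (f p (Pi.single l 1)), ?_, ?_⟩
    · refine Finset.prod_ne_zero_iff.2 fun p _ => lin_poly_ne p _ ?_
      intro h
      apply hf0 p
      ext l
      simpa using congrFun h l
    · intro u hu B hBS hB
      rw [map_prod] at hu
      have h1 : ∀ p, ∀ᶠ x in (F : Filter X), ∑ l, u (p, l) * w p x l ≠ 0 := by
        intro p
        have h2 := Finset.prod_ne_zero_iff.1 hu p (Finset.mem_univ p)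
        have h3 : f p (fun l => u (p, l)) ≠ 0 := by
          rw [hfe]
          simpa using h2
        rw [Ultrafilter.eventually_not]
        intro h4
        exact h3 (hf p (show (fun l => u (p, l)) ∈ bad p from h4))
      have h5 := (Filter.eventually_all.2 h1).and hFS
      rw [hSi.ncard, Set.Infinite.ncard]
      refine Set.Infinite.mono hB ?_
      intro hfin
      have h6 : ∀ᶠ x in (F : Filter X), x ∉ {x ∈ S | ∀ p, ∑ l, u (p, l) * w p x l ≠ 0} :=
        hF (Filter.mem_inf_of_left hfin.compl_mem_cofinite)
      obtain ⟨x, hx1, hx2⟩ := (h5.and h6).exists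
      exact hx2 ⟨hx1.2, hx1.1⟩


lemma vec_ne_of_nrm {n s c : ℕ} {m : Fin s → ℕ} {t : TIdx n s c m → ℂ} {p : Fin s} {v : Fin n → ℂ}
    (h0 : t (TIdx.nrm p none) ≠ 0) (h : t (TIdx.nrm p none) + nlin t p v = 0) : v ≠ 0 := by
  rintro rfl
  apply h0
  simpa [nlin] using h

/-- equations for the slice of `W_{s,P}` -/
def SA {n s k : ℕ} (P : IdxPartition s k) {c : ℕ} {m : Fin s → ℕ} (t : TIdx n s c m → ℂ) :
    Set (MIdx n s → ℂ) :=
  {x | x ∈ WsPcone n P ∧ matEq t (matPart x) ∧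
      (∀ p, t (TIdx.nrm p none) + nlin t p (vecPart x p) = 0) ∧
      ∀ j, hlin t j (vecPart x j.1) = 0}

/-- equations for the slice of `W_k` -/
def SB {n s k : ℕ} (P : IdxPartition s k) {c : ℕ} {m : Fin s → ℕ} (t : TIdx n s c m → ℂ) :
    Set (MIdx n k → ℂ) :=
  {y | y ∈ WsPcone n (singletonPartition k) ∧ matEq t (matPart y) ∧
      (∀ i, t (TIdx.nrm (P.rep i) none) + nlin t (P.rep i) (vecPart y i) = 0) ∧
      ∀ j, hlin t j (vecPart y (P.bi j.1)) = 0}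

lemma SA_scal {n s k : ℕ} (P : IdxPartition s k) {c : ℕ} {m : Fin s → ℕ} {t : TIdx n s c m → ℂ}
    (ht : ∀ p, t (TIdx.nrm p none) ≠ 0) {x : MIdx n s → ℂ} (hx : x ∈ SA P t) (p : Fin s) :
    ∃ z : ℂ, z ≠ 0 ∧ vecPart x p = z • vecPart x (P.rep (P.bi p)) := by
  obtain ⟨h1, -, h3, -⟩ := hx
  obtain ⟨z, hz⟩ := WsP_prop P h1 p (vec_ne_of_nrm (ht _) (h3 _))
  refine ⟨z, ?_, hz⟩
  rintro rfl
  rw [zero_smul] at hz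
  exact vec_ne_of_nrm (ht _) (h3 p) hz

lemma SA_ncard {n s k : ℕ} (P : IdxPartition s k) {c : ℕ} {m : Fin s → ℕ} (t : TIdx n s c m → ℂ)
    (ht : ∀ p, t (TIdx.nrm p none) ≠ 0) :
    (SA P t).ncard = {y ∈ SB P t | ∀ p, nlin t p (vecPart y (P.bi p)) ≠ 0}.ncard := by
  have hinj : Set.InjOn (projRep P) (SA P t) := by
    intro x hx x' hx' hxx
    have hrep : ∀ i, vecPart x (P.rep i) = vecPart x' (P.rep i) := by
      intro i
      rw [← vecPart_projRep, ← vecPart_projRep, hxx]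
    have hvec : ∀ p, vecPart x p = vecPart x' p := by
      intro p
      obtain ⟨z, hz0, hz⟩ := SA_scal P ht hx p
      obtain ⟨z', hz0', hz'⟩ := SA_scal P ht hx' p
      have h1 := hx.2.2.1 p
      have h2 := hx'.2.2.1 p
      rw [hz, hrep, nlin_smul] at h1
      rw [hz', nlin_smul] at h2
      have h3 : nlin t p (vecPart x' (P.rep (P.bi p))) ≠ 0 := by
        intro h
        rw [h] at h2
        exact ht p (by simpa using h2)
      have h4 : z = z' := by
        apply mul_right_cancel₀ h3
        linear_combination h1 - h2
      rw [hz, hz', hrep, h4]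
    ext (ij | ⟨p, l⟩)
    · exact congrFun hxx (Sum.inl ij)
    · exact congrFun (hvec p) l
  rw [← hinj.ncard_image]
  congr 1
  ext y
  constructor
  · rintro ⟨x, hx, rfl⟩
    have hx' := hx
    obtain ⟨h1, h2, h3, h4⟩ := hx
    refine ⟨⟨projRep_mem P h1, h2, fun i => h3 (P.rep i), ?_⟩, ?_⟩
    · intro j
      rw [vecPart_projRep]
      obtain ⟨z, hz0, hz⟩ := SA_scal P ht hx' j.1
      have := h4 j
      rw [hz, hlin_smul] at this
      exact (mul_eq_zero.1 this).resolve_left hz0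
    · intro p
      rw [vecPart_projRep]
      obtain ⟨z, hz0, hz⟩ := SA_scal P ht hx' p
      have := h3 p
      rw [hz, nlin_smul] at this
      intro h
      rw [h] at this
      exact ht p (by simpa using this)
  · rintro ⟨⟨h1, h2, h3, h4⟩, h5⟩
    let z : Fin s → ℂ := fun p => - t (TIdx.nrm p none) / nlin t p (vecPart y (P.bi p))
    have hz : ∀ p, z p ≠ 0 := fun p => div_ne_zero (neg_ne_zero.2 (ht p)) (h5 p)
    refine ⟨liftRep P z y, ⟨liftRep_mem P z hz h1, h2, ?_, ?_⟩, ?_⟩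
    · intro p
      rw [vecPart_liftRep, nlin_smul]
      simp only [z]
      rw [div_mul_cancel₀ _ (h5 p)]
      ring
    · intro j
      rw [vecPart_liftRep, hlin_smul, h4, mul_zero]
    · have hz1 : ∀ i, z (P.rep i) = 1 := by
        intro i
        have h6 := h3 i
        have h7 := h5 (P.rep i)
        simp only [z]
        rw [P.bi_rep] at *
        rw [div_eq_one_iff_eq h7]
        linear_combination -h6
      ext (ij | ⟨i, l⟩)
      · rfl
      · change z (P.rep i) * y (Sum.inr (P.bi (P.rep i), l)) = _
        rw [hz1, P.bi_rep, one_mul]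

lemma slice_SA {n s k : ℕ} (P : IdxPartition s k) (γ : Fin (s + 1) → ℕ)
    (hγ : ∀ p : Fin s, γ p.succ < n)
    (t : TIdx n s (γ 0) (fun p => n - γ p.succ) → ℂ) :
    WsPcone n P ∩ mSlice γ (aOf γ t) = SA P t := by
  ext x
  rw [Set.mem_inter_iff, mem_mSlice_a γ hγ]
  rfl

lemma slice_SB {n s k : ℕ} (P : IdxPartition s k) (c : ℕ) (m : Fin s → ℕ) (g : Fin k → ℕ)
    (E : JJ (fun i => n - g i) ≃ JJ m) (hE : ∀ x, P.bi (E x).1 = x.1) (hg : ∀ i, g i < n)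
    (t : TIdx n s c m → ℂ) :
    WsPcone n (singletonPartition k) ∩ mSlice _ (bOf P c m g E t) = SB P t := by
  ext x
  rw [Set.mem_inter_iff, mem_mSlice_b P c m g E hE hg]
  rfl

open Classical in
/-- varying the non-representative normalizations -/
def tauP {n s k : ℕ} (P : IdxPartition s k) {c : ℕ} {m : Fin s → ℕ} (t : TIdx n s c m → ℂ) :
    TIdx n s c m → MvPolynomial (Fin s × Fin n) ℂ := fun i => match i with
  | TIdx.nrm p (some l) => if p = P.rep (P.bi p) then MvPolynomial.C (t (TIdx.nrm p (some l)))
      else MvPolynomial.X (p, l)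
  | i => MvPolynomial.C (t i)

lemma md_pos {n s k : ℕ} (P : IdxPartition s k) (γ : Fin (s + 1) → ℕ)
    (hγ : ∀ p : Fin s, γ p.succ < n) (g : Fin k → ℕ) (hg : ∀ i, g i < n)
    (E : JJ (fun i => n - g i) ≃ JJ (fun p : Fin s => n - γ p.succ))
    (hE : ∀ x, P.bi (E x).1 = x.1) (δ δ' : ℕ)
    (h1 : hasMD (WsPcone n P) γ δ)
    (h2 : hasMD (WsPcone n (singletonPartition k)) (Fin.cons (γ 0) g : Fin (k + 1) → ℕ) δ') :
    δ = δ' := by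
  obtain ⟨q1, hq1, H1⟩ := hasMD_poly h1
  obtain ⟨q2, hq2, H2⟩ := hasMD_poly h2
  obtain ⟨t0, ht0⟩ := exists_eval_ne (MvPolynomial.bind₁ (aPoly γ) q1 *
    MvPolynomial.bind₁ (bPoly P (γ 0) _ g E) q2 * ∏ p, MvPolynomial.X (TIdx.nrm p none))
    (mul_ne_zero (mul_ne_zero (surj_a γ hγ q1 hq1) (surj_b P _ _ g E hg q2 hq2))
      (Finset.prod_ne_zero_iff.2 fun _ _ => MvPolynomial.X_ne_zero _))
  simp only [map_mul, map_prod, MvPolynomial.eval_X] at ht0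
  have htn : ∀ p, t0 (TIdx.nrm p none) ≠ 0 := fun p =>
    Finset.prod_ne_zero_iff.1 (right_ne_zero_of_mul ht0) p (Finset.mem_univ p)
  have ht1 := left_ne_zero_of_mul (left_ne_zero_of_mul ht0)
  have ht2 := right_ne_zero_of_mul (left_ne_zero_of_mul ht0)
  rw [eval_bind] at ht2
  have hB := H2 _ ht2
  have hB' : (SB P t0).ncard = δ' := by
    rw [← hB, ← slice_SB P (γ 0) _ g E hE hg t0]
    rfl
  obtain ⟨G, hG, HG⟩ := avoid (SB P t0) (fun p y => vecPart y (P.bi p)) (by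
    intro p y hy
    exact vec_ne_of_nrm (htn _) (hy.2.2.1 (P.bi p)))
  have hQ : MvPolynomial.bind₁ (tauP P t0) (MvPolynomial.bind₁ (aPoly γ) q1) ≠ 0 := by
    intro h
    have := congrArg (MvPolynomial.eval (fun pl => t0 (TIdx.nrm pl.1 (some pl.2)))) h
    rw [eval_bind, map_zero] at this
    apply ht1
    refine Eq.trans (congrArg (fun z => MvPolynomial.eval z _) (funext ?_)) this
    rintro (_ | _ | ⟨p, _ | l⟩ | _ | _)
    · simp [tauP]
    · simp [tauP]
    · simp [tauP]
    · by_cases hp : p = P.rep (P.bi p)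
      · simp only [tauP]; rw [if_pos hp]; simp
      · simp only [tauP]; rw [if_neg hp]; simp
    · simp [tauP]
    · simp [tauP]
  obtain ⟨u, hu⟩ := exists_eval_ne _ (mul_ne_zero hQ hG)
  rw [map_mul] at hu
  have hu1 := left_ne_zero_of_mul hu
  have hu2 := HG u (right_ne_zero_of_mul hu)
  rw [eval_bind] at hu1
  set t : TIdx n s (γ 0) (fun p => n - γ p.succ) → ℂ :=
    fun i => MvPolynomial.eval u (tauP P t0 i) with ht
  rw [eval_bind] at hu1
  have hA := H1 _ hu1
  have hA' : (SA P t).ncard = δ := by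
    rw [← hA, ← slice_SA P γ hγ t]
    rfl
  have tn : ∀ p, t (TIdx.nrm p none) = t0 (TIdx.nrm p none) := by
    intro p; simp [ht, tauP]
  have trep : ∀ i l, t (TIdx.nrm (P.rep i) (some l)) = t0 (TIdx.nrm (P.rep i) (some l)) := by
    intro i l
    simp only [ht, tauP]
    rw [if_pos (by rw [P.bi_rep])]
    simp
  have tnr : ∀ p l, p ≠ P.rep (P.bi p) → t (TIdx.nrm p (some l)) = u (p, l) := by
    intro p l hp
    simp only [ht, tauP]
    rw [if_neg hp]
    simp
  have tlin : ∀ j l, t (TIdx.lin j l) = t0 (TIdx.lin j l) := by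
    intro j l; simp [ht, tauP]
  have tmat : ∀ y, t (TIdx.mat y) = t0 (TIdx.mat y) := by
    intro y; simp [ht, tauP]
  have hSB : SB P t = SB P t0 := by
    simp only [SB, matEq, hlin, nlin, tn, trep, tlin, tmat]
  have hnl : ∀ y ∈ SB P t0, ∀ i, nlin t0 (P.rep i) (vecPart y i) ≠ 0 := by
    intro y hy i h
    have := hy.2.2.1 i
    rw [h] at this
    exact htn _ (by simpa using this)
  rw [← hA', ← hB', SA_ncard P t (fun p => by rw [tn]; exact htn p), hSB]
  refine hu2 _ (fun y hy => hy.1) ?_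
  rintro y ⟨hy1, hy2⟩
  refine ⟨hy1, fun p => ?_⟩
  by_cases hp : p = P.rep (P.bi p)
  · have := hnl y hy1 (P.bi p)
    rw [hp, P.bi_rep]
    simpa only [nlin, trep] using this
  · have := hy2 p
    simpa only [nlin, tnr p _ hp] using this

lemma md_neg {n s k : ℕ} (P : IdxPartition s k) (γ : Fin (s + 1) → ℕ)
    (hγ : ∀ p : Fin s, γ p.succ < n) (i : Fin k)
    (em : Fin n → JJ (fun p : Fin s => n - γ p.succ)) (hem : Function.Injective em)
    (hi : ∀ a, P.bi (em a).1 = i) (δ : ℕ)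
    (h1 : hasMD (WsPcone n P) γ δ) : δ = 0 := by
  classical
  obtain ⟨q1, hq1, H1⟩ := hasMD_poly h1
  let D : MvPolynomial (TIdx n s (γ 0) (fun p => n - γ p.succ)) ℂ :=
    Matrix.det (Matrix.of fun a l => MvPolynomial.X (TIdx.lin (em a) l))
  have hDe : ∀ t, MvPolynomial.eval t D = Matrix.det (Matrix.of fun a l => t (TIdx.lin (em a) l)) := by
    intro t
    simp only [D]
    rw [RingHom.map_det]
    congr 1
    ext a l
    simp
  have hD : D ≠ 0 := by
    intro h
    have h2 := hDe (fun i => match i with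
      | TIdx.lin j l => if j = em l then 1 else 0
      | _ => 0)
    rw [h, map_zero] at h2
    have h3 : (Matrix.of fun a l => if em a = em l then (1 : ℂ) else 0) = 1 := by
      ext a l
      simp [Matrix.one_apply, hem.eq_iff]
    simp only [h3, Matrix.det_one] at h2
    exact zero_ne_one h2
  obtain ⟨t, ht⟩ := exists_eval_ne (MvPolynomial.bind₁ (aPoly γ) q1 *
    D * ∏ p, MvPolynomial.X (TIdx.nrm p none))
    (mul_ne_zero (mul_ne_zero (surj_a γ hγ q1 hq1) hD)
      (Finset.prod_ne_zero_iff.2 fun _ _ => MvPolynomial.X_ne_zero _))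
  simp only [map_mul, map_prod, MvPolynomial.eval_X] at ht
  have htn : ∀ p, t (TIdx.nrm p none) ≠ 0 := fun p =>
    Finset.prod_ne_zero_iff.1 (right_ne_zero_of_mul ht) p (Finset.mem_univ p)
  have ht1 := left_ne_zero_of_mul (left_ne_zero_of_mul ht)
  have ht2 := right_ne_zero_of_mul (left_ne_zero_of_mul ht)
  rw [eval_bind] at ht1
  rw [hDe] at ht2
  have hA := H1 _ ht1
  have hA' : (SA P t).ncard = δ := by
    rw [← hA, ← slice_SA P γ hγ t]
    rfl
  rw [← hA']
  have : SA P t = ∅ := by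
    rw [Set.eq_empty_iff_forall_notMem]
    intro x hx
    apply vec_ne_of_nrm (htn _) (hx.2.2.1 (P.rep i))
    apply Matrix.eq_zero_of_mulVec_eq_zero ht2
    ext a
    obtain ⟨z, hz0, hz⟩ := SA_scal P htn hx (em a).1
    have := hx.2.2.2 (em a)
    rw [hz, hlin_smul, hi] at this
    exact (mul_eq_zero.1 this).resolve_left hz0
  rw [this, Set.ncard_empty]

lemma card_nz (m : ℕ) : Fintype.card {r : Fin m // r.val ≠ 0} = m - 1 := by
  rcases m with _ | m
  · simp
  · have : Fintype.card {r : Fin (m + 1) // r.val ≠ 0} = Fintype.card {r : Fin (m + 1) // r ≠ 0} := by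
      apply Fintype.card_congr
      exact Equiv.subtypeEquivRight (fun r => not_congr (Fin.ext_iff (a := r) (b := 0)).symm)
    rw [this]
    simp

lemma card_fiber {s k : ℕ} (P : IdxPartition s k) (m : Fin s → ℕ) (i : Fin k) :
    Fintype.card {j : JJ m // P.bi j.1 = i} = ∑ p ∈ P.block i, (m p - 1) := by
  rw [Fintype.card_subtype]
  have h : (Finset.univ.filter fun j : JJ m => P.bi j.1 = i) =
      (P.block i).sigma (fun p => Finset.univ) := by
    ext ⟨p, r⟩
    simp [P.mem_iff]
  rw [h, Finset.card_sigma]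
  exact Finset.sum_congr rfl fun p _ => by rw [Finset.card_univ, card_nz]

lemma exists_E {s k : ℕ} (P : IdxPartition s k) (m : Fin s → ℕ) (m' : Fin k → ℕ)
    (h : ∀ i, m' i - 1 = ∑ p ∈ P.block i, (m p - 1)) :
    ∃ E : JJ m' ≃ JJ m, ∀ x, P.bi (E x).1 = x.1 := by
  have e : ∀ i, Nonempty ({r : Fin (m' i) // r.val ≠ 0} ≃ {j : JJ m // P.bi j.1 = i}) := by
    intro i
    apply Fintype.card_eq.1
    rw [card_nz, card_fiber, h]
  refine ⟨(Equiv.sigmaCongrRight fun i => (e i).some).trans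
    (Equiv.sigmaFiberEquiv (fun j : JJ m => P.bi j.1)), ?_⟩
  rintro ⟨i, r⟩
  exact ((e i).some r).2


lemma mem_chowIdeal {n s : ℕ} (q : MvPolynomial (Fin (s + 1)) ℤ)
    (h : ∀ γ : Fin (s + 1) →₀ ℕ, inBox n s γ → q.coeff γ = 0) : q ∈ chowIdeal n s := by
  rw [q.as_sum]
  refine Ideal.sum_mem _ fun γ hγ => ?_
  have hb : ¬ inBox n s γ := fun hb => (MvPolynomial.mem_support_iff.1 hγ) (h γ hb)
  have key : ∀ (j : Fin (s + 1)) (e : ℕ), e ≤ γ j →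
      (MvPolynomial.X j ^ e : MvPolynomial (Fin (s + 1)) ℤ) ∈ chowIdeal n s →
      MvPolynomial.monomial γ (q.coeff γ) ∈ chowIdeal n s := by
    intro j e he hm
    have hle : Finsupp.single j e ≤ γ := by
      rwa [Finsupp.single_le_iff]
    have : MvPolynomial.monomial γ (q.coeff γ) =
        MvPolynomial.monomial (γ - Finsupp.single j e) (q.coeff γ) * MvPolynomial.X j ^ e := by
      rw [MvPolynomial.X_pow_eq_monomial, MvPolynomial.monomial_mul, mul_one,
        tsub_add_cancel_of_le hle]
    rw [this]
    exact Ideal.mul_mem_left _ _ hm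
  unfold inBox at hb
  by_cases h0 : γ 0 < n ^ 2
  · have : ∃ j : Fin s, n ≤ γ j.succ := by
      by_contra hc
      push Not at hc
      exact hb ⟨h0, hc⟩
    obtain ⟨j, hj⟩ := this
    exact key _ _ hj (Ideal.subset_span (Or.inr ⟨j, rfl⟩))
  · exact key 0 _ (not_lt.1 h0) (Ideal.subset_span (Or.inl rfl))

def FF {σ : Type*} (n : ℕ) (q : σ → σ) (p : σ) : MvPolynomial σ ℤ :=
  ∑ r ∈ Finset.range n, MvPolynomial.X (q p) ^ (n - 1 - r) * MvPolynomial.X p ^ r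

lemma FF_vars {σ : Type*} (n : ℕ) (q : σ → σ) (p t : σ) (h1 : t ≠ q p) (h2 : t ≠ p) :
    t ∉ (FF n q p).vars := by
  classical
  intro h
  unfold FF at h
  have := MvPolynomial.vars_sum_subset _ _ h
  rw [Finset.mem_biUnion] at this
  obtain ⟨r, -, hr⟩ := this
  rcases Finset.mem_union.1 (MvPolynomial.vars_mul _ _ hr) with h | h
  · have := MvPolynomial.vars_pow _ _ h
    rw [MvPolynomial.vars_X] at this
    exact h1 (Finset.mem_singleton.1 this)
  · have := MvPolynomial.vars_pow _ _ h
    rw [MvPolynomial.vars_X] at this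
    exact h2 (Finset.mem_singleton.1 this)

lemma coeff_of_not_vars {σ : Type*} (G : MvPolynomial σ ℤ) (p : σ) (h : p ∉ G.vars)
    (m : σ →₀ ℕ) (hm : m p ≠ 0) : G.coeff m = 0 := by
  by_contra hc
  exact h ((MvPolynomial.mem_vars_iff_mem_support p).2 ⟨m, MvPolynomial.mem_support_iff.2 hc,
    Finsupp.mem_support_iff.2 hm⟩)

lemma coeff_step {σ : Type*} [DecidableEq σ] (n : ℕ) (q : σ → σ) (p : σ) (hq : q p ≠ p)
    (G : MvPolynomial σ ℤ) (hG : p ∉ G.vars) (γ : σ →₀ ℕ) (hγ : γ p < n) :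
    (G * FF n q p).coeff γ = if n - 1 - γ p ≤ γ (q p) then
      G.coeff (γ - (Finsupp.single (q p) (n - 1 - γ p) + Finsupp.single p (γ p))) else 0 := by
  have hle : ∀ r, (Finsupp.single (q p) (n - 1 - r) + Finsupp.single p r ≤ γ) ↔
      (n - 1 - r ≤ γ (q p) ∧ r ≤ γ p) := by
    intro r
    constructor
    · intro h
      have h1 := h (q p)
      have h2 := h p
      simp [Finsupp.single_apply, hq, hq.symm] at h1 h2
      exact ⟨by omega, h2⟩
    · rintro ⟨h1, h2⟩ j
      by_cases hj : j = q p
      · subst hj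
        simp [Finsupp.single_apply, hq.symm]; omega
      · by_cases hj2 : j = p
        · subst hj2
          simp [Finsupp.single_apply, hq, h2]
        · simp [Finsupp.single_apply, Ne.symm hj, Ne.symm hj2]
  unfold FF
  rw [Finset.mul_sum, MvPolynomial.coeff_sum, Finset.sum_eq_single (γ p)]
  · rw [MvPolynomial.X_pow_eq_monomial, MvPolynomial.X_pow_eq_monomial, MvPolynomial.monomial_mul,
      MvPolynomial.coeff_mul_monomial']
    simp only [hle, le_refl, and_true, mul_one]
  · intro r _ hr
    rw [MvPolynomial.X_pow_eq_monomial, MvPolynomial.X_pow_eq_monomial, MvPolynomial.monomial_mul,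
      MvPolynomial.coeff_mul_monomial']
    split_ifs with h
    · rw [hle] at h
      rw [coeff_of_not_vars G p hG, zero_mul]
      have h3 : (γ - (Finsupp.single (q p) (n - 1 - r) + Finsupp.single p r)) p = γ p - r := by
        simp [Finsupp.single_apply, hq]
      rw [h3]; omega
    · rfl
  · intro h
    exact absurd (Finset.mem_range.2 hγ) h

lemma prod_vars {σ : Type*} (n : ℕ) (q : σ → σ) (G : MvPolynomial σ ℤ) (T : Finset σ) (t : σ)
    (hG : t ∉ G.vars) (ht : t ∉ T) (hq : ∀ p ∈ T, q p ≠ t) :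
    t ∉ (G * ∏ p ∈ T, FF n q p).vars := by
  classical
  intro h
  rcases Finset.mem_union.1 (MvPolynomial.vars_mul _ _ h) with h | h
  · exact hG h
  · have := MvPolynomial.vars_prod _ h
    rw [Finset.mem_biUnion] at this
    obtain ⟨p, hp, hr⟩ := this
    exact FF_vars n q p t (hq p hp).symm (fun e => ht (e ▸ hp)) hr

lemma coeff_prod {σ : Type*} [DecidableEq σ] (n : ℕ) (q : σ → σ) (G : MvPolynomial σ ℤ) (T : Finset σ)
    (hG : ∀ t ∈ T, t ∉ G.vars) (hq : ∀ p ∈ T, q p ∉ T) (γ : σ →₀ ℕ) (hγ : ∀ p ∈ T, γ p < n) :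
    ((∃ j, γ j < ∑ t ∈ T with q t = j, (n - 1 - γ t)) →
      (G * ∏ p ∈ T, FF n q p).coeff γ = 0) ∧
    ∀ m : σ →₀ ℕ, (∀ t ∈ T, m t = 0) →
      (∀ j, j ∉ T → γ j = m j + ∑ t ∈ T with q t = j, (n - 1 - γ t)) →
      (G * ∏ p ∈ T, FF n q p).coeff γ = G.coeff m := by
  induction T using Finset.induction_on generalizing γ with
  | empty =>
    simp only [Finset.filter_empty, Finset.sum_empty, Finset.prod_empty, mul_one]
    refine ⟨by simp, fun m _ h => ?_⟩
    congr 1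
    ext j
    simpa using h j
  | insert p T hp ih =>
    have hqp : q p ∉ insert p T := hq p (Finset.mem_insert_self _ _)
    have hqpp : q p ≠ p := fun h => hqp (by rw [h]; exact Finset.mem_insert_self _ _)
    have hqT : q p ∉ T := fun h => hqp (Finset.mem_insert_of_mem h)
    have hqt : ∀ t ∈ T, q t ≠ p := fun t ht h =>
      hq t (Finset.mem_insert_of_mem ht) (h ▸ Finset.mem_insert_self _ _)
    have hv := prod_vars n q G T p (hG p (Finset.mem_insert_self _ _)) hp hqt
    rw [Finset.prod_insert hp, mul_comm (FF n q p), ← mul_assoc,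
      coeff_step n q p hqpp _ hv γ (hγ p (Finset.mem_insert_self _ _))]
    set γ' := γ - (Finsupp.single (q p) (n - 1 - γ p) + Finsupp.single p (γ p)) with hγ'
    have e1 : γ' p = 0 := by simp [hγ', Finsupp.single_apply, hqpp]
    have e2 : γ' (q p) = γ (q p) - (n - 1 - γ p) := by
      simp [hγ', Finsupp.single_apply, hqpp.symm]
    have e3 : ∀ j, j ≠ p → j ≠ q p → γ' j = γ j := by
      intro j h1 h2
      simp [hγ', Finsupp.single_apply, h1.symm, h2.symm]
    have e4 : ∀ t ∈ T, γ' t = γ t := fun t ht =>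
      e3 t (fun h => hp (h ▸ ht)) (fun h => hqT (h ▸ ht))
    have e5 : ∀ j, ∑ t ∈ T with q t = j, (n - 1 - γ' t) = ∑ t ∈ T with q t = j, (n - 1 - γ t) :=
      fun j => Finset.sum_congr rfl fun t ht => by rw [e4 t (Finset.mem_filter.1 ht).1]
    have e6 : ∀ j, ∑ t ∈ insert p T with q t = j, (n - 1 - γ t) =
        (if q p = j then n - 1 - γ p else 0) + ∑ t ∈ T with q t = j, (n - 1 - γ t) := by
      intro j
      rw [Finset.filter_insert]
      split_ifs with h
      · rw [Finset.sum_insert (fun h => hp (Finset.mem_filter.1 h).1)]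
      · rw [zero_add]
    have e7 : ∑ t ∈ T with q t = p, (n - 1 - γ t) = 0 := by
      apply Finset.sum_eq_zero
      intro t ht
      exact absurd (Finset.mem_filter.1 ht).2 (hqt t (Finset.mem_filter.1 ht).1)
    obtain ⟨ih1, ih2⟩ := ih (fun t ht => hG t (Finset.mem_insert_of_mem ht))
      (fun t ht h => hq t (Finset.mem_insert_of_mem ht) (Finset.mem_insert_of_mem h)) γ'
      (fun t ht => by rw [e4 t ht]; exact hγ t (Finset.mem_insert_of_mem ht))
    simp only [e5] at ih1 ih2
    simp only [e6]
    refine ⟨?_, ?_⟩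
    · rintro ⟨j, hj⟩
      split_ifs with h
      · apply ih1
        refine ⟨j, ?_⟩
        by_cases hjq : j = q p
        · subst hjq
          rw [if_pos rfl] at hj
          rw [e2]; omega
        · rw [if_neg (Ne.symm hjq), zero_add] at hj
          by_cases hjp : j = p
          · subst hjp; rw [e7] at hj; omega
          · rwa [e3 j hjp hjq]
      · rfl
    · intro m hm hj
      have h1 := hj (q p) hqp
      rw [if_pos rfl] at h1
      rw [if_pos (by omega)]
      apply ih2 m (fun t ht => hm t (Finset.mem_insert_of_mem ht))
      intro j hjT
      by_cases hjq : j = q p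
      · subst hjq
        rw [e2]; omega
      · by_cases hjp : j = p
        · subst hjp; rw [e1, e7, hm _ (Finset.mem_insert_self _ _)]
        · have := hj j (by simp [hjp, hjT])
          rw [if_neg (Ne.symm hjq), zero_add] at this
          rwa [e3 j hjp hjq]


def qfun {s k : ℕ} (P : IdxPartition s k) : Fin (s + 1) → Fin (s + 1) :=
  Fin.cases 0 fun p => (P.rep (P.bi p)).succ

def nonrepT {s k : ℕ} (P : IdxPartition s k) : Finset (Fin (s + 1)) :=
  (Finset.univ.filter fun p => P.rep (P.bi p) ≠ p).map (Fin.succEmb s)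

lemma mem_nonrepT {s k : ℕ} (P : IdxPartition s k) (t : Fin (s + 1)) :
    t ∈ nonrepT P ↔ ∃ p : Fin s, P.rep (P.bi p) ≠ p ∧ p.succ = t := by
  simp [nonrepT]

lemma erase_eq {s k : ℕ} (P : IdxPartition s k) (i : Fin k) :
    (P.block i).erase (P.rep i) =
      (Finset.univ.filter fun p => P.rep (P.bi p) ≠ p).filter fun p => P.bi p = i := by
  ext p
  simp only [Finset.mem_erase, P.mem_iff, Finset.mem_filter, Finset.mem_univ, true_and]
  constructor
  · rintro ⟨h1, rfl⟩
    exact ⟨h1.symm, rfl⟩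
  · rintro ⟨h1, rfl⟩
    exact ⟨h1.symm, rfl⟩

lemma prod_flat {s k : ℕ} (n : ℕ) (P : IdxPartition s k) :
    (∏ i : Fin k, ∏ p ∈ (P.block i).erase (P.rep i),
      (∑ r ∈ Finset.range n, MvPolynomial.X (P.rep i).succ ^ (n - 1 - r) *
        MvPolynomial.X p.succ ^ r : MvPolynomial (Fin (s + 1)) ℤ)) =
    ∏ t ∈ nonrepT P, FF n (qfun P) t := by
  rw [nonrepT, Finset.prod_map, ← Finset.prod_fiberwise (g := P.bi)]
  refine Finset.prod_congr rfl fun i _ => ?_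
  rw [erase_eq]
  refine Finset.prod_congr rfl fun p hp => ?_
  rw [← (Finset.mem_filter.1 hp).2]
  rfl

lemma sum_flat {s k : ℕ} (P : IdxPartition s k) (f : Fin (s + 1) → ℕ) (i : Fin k) :
    ∑ t ∈ nonrepT P with qfun P t = (P.rep i).succ, f t =
      ∑ p ∈ (P.block i).erase (P.rep i), f p.succ := by
  rw [nonrepT, Finset.filter_map, Finset.sum_map, erase_eq]
  refine Finset.sum_congr ?_ fun p _ => rfl
  apply Finset.filter_congr
  intro p _
  change (P.rep (P.bi p)).succ = (P.rep i).succ ↔ _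
  rw [Fin.succ_inj]
  exact P.rep_inj.eq_iff

lemma bvm_inj {s k : ℕ} (P : IdxPartition s k) : Function.Injective (blockVarMap P) := by
  intro a b
  refine Fin.cases ?_ (fun a => ?_) a <;> refine Fin.cases ?_ (fun b => ?_) b
  · simp
  · intro h; exact absurd h (Fin.succ_ne_zero _).symm
  · intro h; exact absurd h (Fin.succ_ne_zero _)
  · intro h
    have h' : a = b := P.rep_inj (Fin.succ_injective _ h)
    rw [h']

def DD {s k : ℕ} (n : ℕ) (P : IdxPartition s k) (γ : Fin (s + 1) → ℕ) (i : Fin k) : ℕ :=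
  ∑ p ∈ P.block i, (n - 1 - γ p.succ)

lemma DD_eq {s k : ℕ} (n : ℕ) (P : IdxPartition s k) (γ : Fin (s + 1) → ℕ) (i : Fin k) :
    DD n P γ i = (n - 1 - γ (P.rep i).succ) +
      ∑ p ∈ (P.block i).erase (P.rep i), (n - 1 - γ p.succ) :=
  (Finset.add_sum_erase _ _ (P.rep_mem i)).symm

lemma not_range {s k : ℕ} (P : IdxPartition s k) (t : Fin (s + 1)) (ht : t ∈ nonrepT P) :
    t ∉ Set.range (blockVarMap P) := by
  rw [mem_nonrepT] at ht
  obtain ⟨p, hp, rfl⟩ := ht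
  rintro ⟨j, hj⟩
  revert hj
  refine Fin.cases ?_ (fun i => ?_) j
  · intro h; exact (Fin.succ_ne_zero _) h.symm
  · intro h
    have : P.rep i = p := Fin.succ_injective _ h
    subst this
    simp at hp

lemma rhs_coeff {s k : ℕ} (n : ℕ) (P : IdxPartition s k) (wk : MvPolynomial (Fin (k + 1)) ℤ)
    (γ : Fin (s + 1) →₀ ℕ) (hγ : ∀ p : Fin s, γ p.succ < n) :
    ((∃ i, n ≤ DD n P γ i) →
      (MvPolynomial.rename (blockVarMap P) wk *
        ∏ t ∈ nonrepT P, FF n (qfun P) t).coeff γ = 0) ∧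
    ((∀ i, DD n P γ i < n) →
      (MvPolynomial.rename (blockVarMap P) wk *
        ∏ t ∈ nonrepT P, FF n (qfun P) t).coeff γ =
      wk.coeff (Finsupp.equivFunOnFinite.symm
        (Fin.cons (γ 0) (fun i => n - 1 - DD n P γ i) : Fin (k + 1) → ℕ))) := by
  have main := coeff_prod n (qfun P) (MvPolynomial.rename (blockVarMap P) wk) (nonrepT P)
    (fun t ht h => by
      obtain ⟨i, -, hi⟩ := MvPolynomial.mem_vars_rename _ _ h
      exact not_range P t ht ⟨i, hi⟩)
    (fun t ht h => by
      rw [mem_nonrepT] at ht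
      obtain ⟨p, hp, rfl⟩ := ht
      exact not_range P _ h ⟨(P.bi p).succ, rfl⟩)
    γ (fun t ht => by
      rw [mem_nonrepT] at ht
      obtain ⟨p, hp, rfl⟩ := ht
      exact hγ p)
  obtain ⟨m1, m2⟩ := main
  refine ⟨?_, ?_⟩
  · rintro ⟨i, hi⟩
    apply m1
    refine ⟨(P.rep i).succ, ?_⟩
    rw [sum_flat P (fun t => n - 1 - γ t)]
    rw [DD_eq] at hi
    have := hγ (P.rep i)
    omega
  · intro hD
    set g := (Finsupp.equivFunOnFinite.symm
        (Fin.cons (γ 0) (fun i => n - 1 - DD n P γ i) : Fin (k + 1) → ℕ)) with hg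
    rw [m2 (g.mapDomain (blockVarMap P)), MvPolynomial.coeff_rename_mapDomain _ (bvm_inj P)]
    · intro t ht
      exact Finsupp.mapDomain_of_notMem_range _ _ (not_range P t ht)
    · intro j hj
      revert hj
      refine Fin.cases ?_ (fun p => ?_) j
      · intro _
        have h1 : Finsupp.mapDomain (blockVarMap P) g 0 = γ 0 :=
          Finsupp.mapDomain_apply (bvm_inj P) g 0
        rw [h1, Finset.sum_eq_zero, add_zero]
        intro t ht
        rw [Finset.mem_filter, mem_nonrepT] at ht
        obtain ⟨⟨p, -, rfl⟩, h⟩ := ht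
        exact absurd h (Fin.succ_ne_zero _)
      · intro hp
        have hp : P.rep (P.bi p) = p := by
          by_contra h
          exact hp ((mem_nonrepT P _).2 ⟨p, h, rfl⟩)
        have h1 : Finsupp.mapDomain (blockVarMap P) g (P.rep (P.bi p)).succ =
            n - 1 - DD n P γ (P.bi p) :=
          Finsupp.mapDomain_apply (bvm_inj P) g (P.bi p).succ
        have h2 := sum_flat P (fun t => n - 1 - γ t) (P.bi p)
        have h3 := DD_eq n P γ (P.bi p)
        have h4 := hD (P.bi p)
        rw [hp] at h1 h2 h3
        rw [h1, h2, h3]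
        have := hγ p
        rw [h3] at h4
        omega

lemma sum_DD {s k : ℕ} (n : ℕ) (P : IdxPartition s k) (γ : Fin (s + 1) → ℕ) :
    ∑ i, DD n P γ i = ∑ p : Fin s, (n - 1 - γ p.succ) := by
  rw [← Finset.sum_fiberwise (g := P.bi)]
  refine Finset.sum_congr rfl fun i _ => Finset.sum_congr ?_ fun _ _ => rfl
  ext p
  simp [P.mem_iff]

lemma sum_compl {s : ℕ} (n : ℕ) (f : Fin s → ℕ) (h : ∀ p, f p < n) :
    ∑ p, f p + ∑ p, (n - 1 - f p) = s * (n - 1) := by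
  rw [← Finset.sum_add_distrib, Finset.sum_congr rfl (g := fun _ => n - 1)]
  · simp
  · intro p _
    have := h p
    omega

lemma final_aux (n s k : ℕ) (hn : 0 < n)
    (P : IdxPartition s k)
    (wk : MvPolynomial (Fin (k + 1)) ℤ)
    (hwk : representsClass (WsPcone n (singletonPartition k)) (k * (n - 1)) wk)
    (wsp : MvPolynomial (Fin (s + 1)) ℤ)
    (hwsp : representsClass (WsPcone n P) (s * (n - 1)) wsp)
    (γ : Fin (s + 1) →₀ ℕ) (hb : inBox n s γ) :
    wsp.coeff γ = (MvPolynomial.rename (blockVarMap P) wk *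
        ∏ t ∈ nonrepT P, FF n (qfun P) t).coeff γ := by
  obtain ⟨c1, c2⟩ := rhs_coeff n P wk γ hb.2
  have hγe : Finsupp.equivFunOnFinite.symm (γ : Fin (s + 1) → ℕ) = γ :=
    Finsupp.equivFunOnFinite.symm_apply_apply γ
  by_cases hD : ∀ i, DD n P γ i < n
  · rw [c2 hD]
    set g : Fin k → ℕ := fun i => n - 1 - DD n P γ i with hg
    have hgn : ∀ i, g i < n := fun i => by simp only [hg]; omega
    have hbox : inBox n k (Fin.cons (γ 0) g : Fin (k + 1) → ℕ) := ⟨hb.1, hgn⟩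
    have s1 := sum_compl n (fun p : Fin s => γ p.succ) hb.2
    have s2 := sum_compl n (DD n P γ) hD
    have s3 := sum_DD n P γ
    have hsum : (∑ j, γ j = s * (n - 1)) ↔
        ∑ j, (Fin.cons (γ 0) g : Fin (k + 1) → ℕ) j = k * (n - 1) := by
      rw [Fin.sum_univ_succ, Fin.sum_univ_succ]
      simp only [Fin.cons_zero, Fin.cons_succ]
      simp only [hg]
      omega
    by_cases hs : ∑ j, γ j = s * (n - 1)
    · obtain ⟨δ, e1, h1⟩ := hwsp.1 γ hb hs
      obtain ⟨δ', e2, h2⟩ := hwk.1 _ hbox (hsum.1 hs)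
      rw [hγe] at e1
      rw [e1, e2]
      obtain ⟨E, hE⟩ := exists_E P (fun p : Fin s => n - γ p.succ) (fun i => n - g i) (by
        intro i
        have h1 : DD n P γ i < n := hD i
        have h2 : n - g i - 1 = DD n P γ i := by simp only [hg]; omega
        rw [h2]
        exact Finset.sum_congr rfl fun p _ => by omega)
      rw [md_pos P γ hb.2 g hgn E hE δ δ' h1 h2]
    · rw [hwk.2 _ (fun h => hs (hsum.2 h.2))]
      have := hwsp.2 γ (fun h => hs h.2)
      rwa [hγe] at this
  · push Not at hD
    rw [c1 hD]
    obtain ⟨i, hi⟩ := hD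
    by_cases hs : ∑ j, γ j = s * (n - 1)
    · obtain ⟨δ, e1, h1⟩ := hwsp.1 γ hb hs
      rw [hγe] at e1
      rw [e1]
      have hc := card_fiber P (fun p : Fin s => n - γ p.succ) i
      have hc2 : ∑ p ∈ P.block i, (n - γ p.succ - 1) = DD n P γ i :=
        Finset.sum_congr rfl fun p _ => by omega
      rw [hc2] at hc
      obtain ⟨em⟩ := Function.Embedding.nonempty_of_card_le
        (α := Fin n) (β := {j : JJ (fun p : Fin s => n - γ p.succ) // P.bi j.1 = i})
        (by rw [hc, Fintype.card_fin]; exact hi)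
      have := md_neg P γ hb.2 i (fun a => (em a).1)
        (Subtype.val_injective.comp em.injective) (fun a => (em a).2) δ h1
      rw [this]; rfl
    · have := hwsp.2 γ (fun h => hs h.2)
      rwa [hγe] at this

/-- For a partition `P = {P_1, …, P_k}` of `{1, …, s}` with `q_i = min P_i`,
the Chow class of `W_{s,P}` in `A^*(ℙ_s) = ℤ[t_0, …, t_s]/(t_0^{n²}, t_1^n, …, t_s^n)`
satisfies `[W_{s,P}] = φ_P([W̃_k]) · ∏_i ∏_{p ∈ P_i \ {q_i}} (∑_r t_{q_i}^{n-1-r} t_p^r)`. -/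
theorem WsP_class_formula (n s k : ℕ) (hn : 0 < n) (hs : 0 < s) (hsn : s ≤ n)
    (P : IdxPartition s k)
    (wk : MvPolynomial (Fin (k + 1)) ℤ)
    (hwk : representsClass (WsPcone n (singletonPartition k)) (k * (n - 1)) wk)
    (wsp : MvPolynomial (Fin (s + 1)) ℤ)
    (hwsp : representsClass (WsPcone n P) (s * (n - 1)) wsp) :
    Ideal.Quotient.mk (chowIdeal n s) wsp =
      phiP n P (Ideal.Quotient.mk (chowIdeal n k) wk) *
        ∏ i : Fin k, ∏ p ∈ (P.block i).erase (P.rep i),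
          Ideal.Quotient.mk (chowIdeal n s)
            (∑ r ∈ Finset.range n, MvPolynomial.X (P.rep i).succ ^ (n - 1 - r) *
              MvPolynomial.X p.succ ^ r) := by
  have h1 : phiP n P (Ideal.Quotient.mk (chowIdeal n k) wk) =
      Ideal.Quotient.mk (chowIdeal n s) (MvPolynomial.rename (blockVarMap P) wk) := rfl
  rw [h1]
  simp only [← map_prod]
  rw [prod_flat, ← map_mul, Ideal.Quotient.eq]
  apply mem_chowIdeal
  intro γ hb
  rw [MvPolynomial.coeff_sub, final_aux n s k hn P wk hwk wsp hwsp γ hb, sub_self]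

end
end

section
/- For every partition P of [s], the coefficient c_{s,P} of the class h_0·Σ_{i=1}^{s} h_1^{n-1}···h_i^{n-2}···h_s^{n-1} in [W_{s,P}] ∈ A^{s(n-1)}(P_s) equals the coefficient c̃_{|P|} of h_0·Σ_{i=1}^{|P|} h_1^{n-1}···h_i^{n-2}···h_{|P|}^{n-1} in [W̃_{|P|}] ∈ A^{|P|(n-1)}(P_{|P|}). -/
noncomputable section

section ZK
open Polynomial


lemma zk_res_ne_zero_iff (f g : ℂ[X]) (d e : ℕ) (hf : f.natDegree = d) (hf0 : f ≠ 0)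
    (hg : g.natDegree ≤ e) :
    resultant f g d e ≠ 0 ↔ ∀ t, f.eval t = 0 → g.eval t ≠ 0 := by
  obtain ⟨k, rfl⟩ := Nat.exists_eq_add_of_le hg
  subst hf
  rw [resultant_add_right_deg _ _ _ _ _ le_rfl]
  have h1 : f.coeff f.natDegree ^ k ≠ 0 := pow_ne_zero _ (by simpa using hf0)
  rw [mul_ne_zero_iff, and_iff_right h1, Ne, resultant_eq_zero_iff,
    isCoprime_iff_aeval_ne_zero_of_isAlgClosed ℂ ℂ]
  simp only [coe_aeval_eq_eval, hf0, ne_eq, not_false_eq_true, true_or, true_and, not_not]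
  constructor
  · intro h t ht; have := h t; tauto
  · intro h t; have := h t; tauto

lemma zk_det_updateCol_mulVec {n : ℕ} {R : Type*} [CommRing R] (M : Matrix (Fin n) (Fin n) R)
    (v : Fin n → R) (p : Fin n) : (M.updateCol p (M.mulVec v)).det = v p * M.det := by
  rw [← Matrix.cramer_apply, Matrix.cramer_eq_adjugate_mulVec, Matrix.mulVec_mulVec,
    Matrix.adjugate_mul, Matrix.smul_mulVec, Matrix.one_mulVec]
  simp [mul_comm]

lemma zk_dvd_col {n : ℕ} (M : Matrix (Fin n) (Fin n) ℂ[X]) (t : ℂ) (v : Fin n → ℂ)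
    (hv : (M.map (eval t)).mulVec v = 0) :
    ∃ u : Fin n → ℂ[X], M.mulVec (fun i => C (v i)) = (X - C t) • u := by
  have h : ∀ i, ∃ u : ℂ[X], M.mulVec (fun i => C (v i)) i = (X - C t) * u := by
    intro i
    have : (X - C t) ∣ M.mulVec (fun i => C (v i)) i := by
      rw [dvd_iff_isRoot, IsRoot]
      have := congrFun hv i
      simpa [Matrix.mulVec, dotProduct, eval_finsetSum] using this
    exact this
  choose u hu using h
  exact ⟨u, funext hu⟩

lemma zk_two_ker {n : ℕ} (M : Matrix (Fin n) (Fin n) ℂ[X]) (t : ℂ) (v w : Fin n → ℂ)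
    (hv0 : v ≠ 0) (hw : ∀ c : ℂ, w ≠ c • v)
    (hv : (M.map (eval t)).mulVec v = 0) (hw' : (M.map (eval t)).mulVec w = 0) :
    (X - C t) ^ 2 ∣ M.det := by
  obtain ⟨p, hp⟩ := Function.ne_iff.1 hv0
  simp only [Pi.zero_apply] at hp
  set w1 : Fin n → ℂ := w - (w p / v p) • v with hw1
  have hw1p : w1 p = 0 := by simp [hw1, hp]
  have hw10 : w1 ≠ 0 := fun h => hw (w p / v p) (by rw [← sub_eq_zero]; exact h)
  have hw1k : (M.map (eval t)).mulVec w1 = 0 := by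
    rw [hw1, Matrix.mulVec_sub, Matrix.mulVec_smul, hv, hw']; simp
  obtain ⟨q, hq⟩ := Function.ne_iff.1 hw10
  simp only [Pi.zero_apply] at hq
  have hpq : p ≠ q := by rintro rfl; exact hq hw1p
  obtain ⟨u, hu⟩ := zk_dvd_col M t v hv
  obtain ⟨u', hu'⟩ := zk_dvd_col M t w1 hw1k
  have e1 := zk_det_updateCol_mulVec M (fun i => C (v i)) p
  have e2 := zk_det_updateCol_mulVec (M.updateCol p (M.mulVec (fun i => C (v i))))
    (fun i => C (w1 i)) q
  have e3 : (M.updateCol p (M.mulVec (fun i => C (v i)))).mulVec (fun i => C (w1 i)) =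
      M.mulVec (fun i => C (w1 i)) := by
    funext i
    simp only [Matrix.mulVec, dotProduct]
    refine Finset.sum_congr rfl fun j _ => ?_
    by_cases hj : j = p
    · subst hj; simp [hw1p]
    · simp [hj]
  rw [e3, e1, hu, hu', Matrix.det_updateCol_smul, Matrix.updateCol_comm _ hpq,
    Matrix.det_updateCol_smul] at e2
  have e4 : (X - C t) ^ 2 ∣ C (w1 q) * (C (v p) * M.det) := by
    rw [← e2, sq]
    exact mul_dvd_mul_left _ (dvd_mul_right _ _)
  rw [← mul_assoc, ← C_mul] at e4
  exact (IsUnit.dvd_mul_left (isUnit_C.2 (by simp [hq, hp]))).1 e4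

lemma zk_charmatrix_map {n : ℕ} (A : Matrix (Fin n) (Fin n) ℂ) (l : ℂ) (v : Fin n → ℂ) :
    (A.charmatrix.map (eval l)).mulVec v = l • v - A.mulVec v := by
  have : A.charmatrix.map (eval l) = Matrix.scalar (Fin n) l - A := by
    ext i j
    by_cases h : i = j
    · subst h; simp
    · simp [h]
  rw [this, Matrix.sub_mulVec]
  congr 1
  ext i
  simp [Matrix.scalar_apply, Matrix.mulVec_diagonal]

lemma zk_eig_two {n : ℕ} (A : Matrix (Fin n) (Fin n) ℂ) (l : ℂ) (v w : Fin n → ℂ)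
    (hv0 : v ≠ 0) (hw : ∀ c : ℂ, w ≠ c • v)
    (hv : A.mulVec v = l • v) (hw' : A.mulVec w = l • w) :
    A.charpoly.derivative.eval l = 0 := by
  have h := zk_two_ker A.charmatrix l v w hv0 hw
    (by rw [zk_charmatrix_map, hv, sub_self]) (by rw [zk_charmatrix_map, hw', sub_self])
  obtain ⟨q, hq⟩ := h
  rw [Matrix.charpoly, hq]
  simp [derivative_mul, derivative_pow]

lemma zk_charpoly_root {n : ℕ} (A : Matrix (Fin n) (Fin n) ℂ) (l : ℂ) :
    A.charpoly.eval l = 0 ↔ ∃ v, v ≠ 0 ∧ A.mulVec v = l • v := by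
  have h1 : A.charpoly.eval l = (A.charmatrix.map (eval l)).det := by
    rw [Matrix.charpoly]
    exact (coe_evalRingHom l ▸ RingHom.map_det (evalRingHom l) A.charmatrix)
  rw [h1, ← Matrix.exists_mulVec_eq_zero_iff]
  simp only [zk_charmatrix_map, sub_eq_zero, ne_eq]
  exact exists_congr fun v => and_congr_right fun _ => eq_comm

/-- discriminant of the characteristic polynomial -/
def zkDisc {n : ℕ} {R : Type*} [CommRing R] (A : Matrix (Fin n) (Fin n) R) : R :=
  resultant A.charpoly A.charpoly.derivative n (n - 1)

lemma zkDisc_map {n : ℕ} {R S : Type*} [CommRing R] [CommRing S] (φ : R →+* S)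
    (A : Matrix (Fin n) (Fin n) R) : zkDisc (A.map φ) = φ (zkDisc A) := by
  rw [zkDisc, zkDisc, ← resultant_map_map, Matrix.charpoly_map, derivative_map]

lemma zkDisc_ne_zero_iff {n : ℕ} (A : Matrix (Fin n) (Fin n) ℂ) :
    zkDisc A ≠ 0 ↔ ∀ l, A.charpoly.eval l = 0 → A.charpoly.derivative.eval l ≠ 0 := by
  have hd : A.charpoly.natDegree = n := by simp
  apply zk_res_ne_zero_iff _ _ _ _ hd A.charpoly_monic.ne_zero
  exact (natDegree_derivative_le _).trans (by rw [hd])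

/-- Kalman determinant -/
def zkKal {n : ℕ} {R : Type*} [CommRing R] (l : Fin n → R) (A : Matrix (Fin n) (Fin n) R) : R :=
  (Matrix.of fun i : Fin n => Matrix.vecMul l (A ^ (i : ℕ))).det

lemma zkKal_map {n : ℕ} {R S : Type*} [CommRing R] [CommRing S] (φ : R →+* S)
    (l : Fin n → R) (A : Matrix (Fin n) (Fin n) R) :
    zkKal (fun i => φ (l i)) (A.map φ) = φ (zkKal l A) := by
  rw [zkKal, zkKal, RingHom.map_det]
  congr 1
  ext i j
  have h : (A.map φ) ^ (i : ℕ) = (A ^ (i : ℕ)).map φ := (Matrix.map_pow A φ i).symm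
  simp [Matrix.vecMul, dotProduct, h]

lemma zk_pow_eig {n : ℕ} {R : Type*} [CommRing R] (A : Matrix (Fin n) (Fin n) R) (l : R)
    (v : Fin n → R) (hv : A.mulVec v = l • v) (i : ℕ) : (A ^ i).mulVec v = l ^ i • v := by
  induction i with
  | zero => simp
  | succ i ih => rw [pow_succ, ← Matrix.mulVec_mulVec, hv, Matrix.mulVec_smul, ih, smul_smul,
      pow_succ, mul_comm]

lemma zkKal_ker {n : ℕ} (l : Fin n → ℂ) (A : Matrix (Fin n) (Fin n) ℂ) (v : Fin n → ℂ) (m : ℂ)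
    (hv : A.mulVec v = m • v) (hl : l ⬝ᵥ v = 0) :
    (Matrix.of fun i : Fin n => Matrix.vecMul l (A ^ (i : ℕ))).mulVec v = 0 := by
  funext i
  change Matrix.vecMul l (A ^ (i : ℕ)) ⬝ᵥ v = 0
  rw [← Matrix.dotProduct_mulVec, zk_pow_eig A m v hv, dotProduct_smul, hl, smul_zero]

lemma zkKal_eq_zero_iff {n : ℕ} (l : Fin n → ℂ) (A : Matrix (Fin n) (Fin n) ℂ) :
    zkKal l A = 0 ↔ ∃ v, v ≠ 0 ∧ (∃ m : ℂ, A.mulVec v = m • v) ∧ l ⬝ᵥ v = 0 := by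
  constructor
  · intro h
    obtain ⟨v, hv0, hv⟩ := Matrix.exists_mulVec_eq_zero_iff.2 h
    have h1 : ∀ i < n, l ⬝ᵥ (A ^ i).mulVec v = 0 := by
      intro i hi
      have := congrFun hv ⟨i, hi⟩
      rw [Matrix.dotProduct_mulVec]
      exact this
    have h2 : ∀ i, l ⬝ᵥ (A ^ i).mulVec v = 0 := by
      intro i
      rw [Matrix.pow_eq_aeval_mod_charpoly, aeval_eq_sum_range, Matrix.sum_mulVec, dotProduct_sum]
      refine Finset.sum_eq_zero fun j hj => ?_
      rw [Matrix.smul_mulVec, dotProduct_smul]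
      by_cases hjn : j < n
      · rw [h1 j hjn, smul_zero]
      · rw [coeff_eq_zero_of_degree_lt, zero_smul]
        refine (degree_modByMonic_lt _ A.charpoly_monic).trans_le ?_
        rw [Matrix.charpoly_degree_eq_dim]
        simpa using hjn
    let W : Submodule ℂ (Fin n → ℂ) :=
      { carrier := {u | ∀ i, l ⬝ᵥ (A ^ i).mulVec u = 0}
        add_mem' := by
          intro a b ha hb i
          rw [Matrix.mulVec_add, dotProduct_add, ha i, hb i, add_zero]
        zero_mem' := by intro i; simp
        smul_mem' := by
          intro c a ha i
          rw [Matrix.mulVec_smul, dotProduct_smul, ha i, smul_zero] }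
    have hW : ∀ u ∈ W, (Matrix.toLin' A) u ∈ W := by
      intro u hu i
      have := hu (i + 1)
      rwa [pow_succ, ← Matrix.mulVec_mulVec] at this
    have : Nontrivial W := ⟨⟨⟨v, h2⟩, 0, fun h => hv0 (congrArg Subtype.val h)⟩⟩
    obtain ⟨m, hm⟩ := Module.End.exists_eigenvalue ((Matrix.toLin' A).restrict hW)
    obtain ⟨u, hu⟩ := hm.exists_hasEigenvector
    refine ⟨u.1, fun h => hu.2 (Subtype.ext h), ⟨m, ?_⟩, by simpa using u.2 0⟩
    have := congrArg Subtype.val hu.apply_eq_smul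
    simpa using this
  · rintro ⟨v, hv0, ⟨m, hm⟩, hl⟩
    exact Matrix.exists_mulVec_eq_zero_iff.1 ⟨v, hv0, zkKal_ker l A v m hm hl⟩



lemma zk_open {ι : Type*} (p : MvPolynomial ι ℂ) : zOpen {x | MvPolynomial.eval x p ≠ 0} :=
  TopologicalSpace.isOpen_generateFrom_of_mem ⟨p, rfl⟩

lemma zk_dense {ι : Type*} (p : MvPolynomial ι ℂ) (hp : p ≠ 0) :
    zDense {x | MvPolynomial.eval x p ≠ 0} := by
  let _ := zTop ι
  have hb : TopologicalSpace.IsTopologicalBasis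
      {U : Set (ι → ℂ) | ∃ p : MvPolynomial ι ℂ, U = {x | MvPolynomial.eval x p ≠ 0}} := by
    have := TopologicalSpace.isTopologicalBasis_of_subbasis_of_inter
      (r := {U : Set (ι → ℂ) | ∃ p : MvPolynomial ι ℂ, U = {x | MvPolynomial.eval x p ≠ 0}}) rfl (by
        rintro _ ⟨p, rfl⟩ _ ⟨q, rfl⟩
        exact ⟨p * q, by ext x; simp [not_or]⟩)
    convert this using 1
    symm
    apply Set.insert_eq_of_mem
    exact ⟨1, by simp⟩
  change Dense _
  rw [hb.dense_iff]
  rintro _ ⟨q, rfl⟩ ⟨x, hx⟩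
  have hq : q ≠ 0 := by rintro rfl; simp at hx
  by_contra hne
  have : p * q = 0 := by
    apply MvPolynomial.funext
    intro y
    by_contra hy
    simp only [map_mul, map_zero, mul_eq_zero, not_or] at hy
    exact hne ⟨y, hy.2, hy.1⟩
  exact (mul_ne_zero hp hq) this

lemma zk_subset_closure {ι : Type*} (S : Set (ι → ℂ)) : S ⊆ zClosure S := by
  let _ := zTop ι
  exact subset_closure

lemma zk_closure_vanish {ι : Type*} (S : Set (ι → ℂ)) (p : MvPolynomial ι ℂ)
    (h : ∀ x ∈ S, MvPolynomial.eval x p = 0) (x : ι → ℂ) (hx : x ∈ zClosure S) :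
    MvPolynomial.eval x p = 0 := by
  let _ := zTop ι
  have hc : IsClosed {x : ι → ℂ | MvPolynomial.eval x p = 0} := by
    rw [← isOpen_compl_iff]
    exact zk_open p
  exact closure_minimal (s := S) h hc hx

/-- generic matrix and vectors -/
def zkGM (n s : ℕ) : Matrix (Fin n) (Fin n) (MvPolynomial (MIdx n s) ℂ) :=
  Matrix.of fun i j => MvPolynomial.X (Sum.inl (i, j))
def zkGV (n s : ℕ) (p : Fin s) : Fin n → MvPolynomial (MIdx n s) ℂ :=
  fun k => MvPolynomial.X (Sum.inr (p, k))

lemma zkGM_eval {n s : ℕ} (x : MIdx n s → ℂ) :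
    (zkGM n s).map (MvPolynomial.eval x) = toMat (matPart x) := by
  ext i j; simp [zkGM, toMat, matPart]

lemma zkGV_eval {n s : ℕ} (x : MIdx n s → ℂ) (p : Fin s) :
    (fun k => MvPolynomial.eval x (zkGV n s p k)) = vecPart x p := by
  ext i; simp [zkGV, vecPart]

lemma zk_mulVec_map {n : ℕ} {R S : Type*} [CommRing R] [CommRing S] (φ : R →+* S)
    (A : Matrix (Fin n) (Fin n) R) (v : Fin n → R) (i : Fin n) :
    φ (A.mulVec v i) = (A.map φ).mulVec (fun k => φ (v k)) i := by
  simp [Matrix.mulVec, dotProduct]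

lemma zk_closure_eig {n s k : ℕ} (P : IdxPartition s k) (x : MIdx n s → ℂ)
    (hx : x ∈ WsPcone n P) (p : Fin s) (hv : vecPart x p ≠ 0) :
    ∃ l : ℂ, (toMat (matPart x)).mulVec (vecPart x p) = l • vecPart x p := by
  have key : ∀ a b, (toMat (matPart x)).mulVec (vecPart x p) a * vecPart x p b -
      (toMat (matPart x)).mulVec (vecPart x p) b * vecPart x p a = 0 := by
    intro a b
    have hev : ∀ y : MIdx n s → ℂ, MvPolynomial.eval y ((zkGM n s).mulVec (zkGV n s p) a * zkGV n s p b -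
        (zkGM n s).mulVec (zkGV n s p) b * zkGV n s p a) =
        (toMat (matPart y)).mulVec (vecPart y p) a * vecPart y p b -
        (toMat (matPart y)).mulVec (vecPart y p) b * vecPart y p a := by
      intro y
      rw [map_sub, map_mul, map_mul, zk_mulVec_map, zk_mulVec_map, zkGM_eval, zkGV_eval,
        ← zkGV_eval]
    rw [← hev]
    refine zk_closure_vanish _ _ ?_ x hx
    rintro y ⟨⟨_, hy⟩, _⟩
    obtain ⟨_, l, hl⟩ := hy p
    rw [hev, hl]
    simp only [Pi.smul_apply, smul_eq_mul]; ring
  obtain ⟨b, hb⟩ := Function.ne_iff.1 hv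
  simp only [Pi.zero_apply] at hb
  refine ⟨(toMat (matPart x)).mulVec (vecPart x p) b / vecPart x p b, ?_⟩
  funext a
  have := key a b
  simp only [Pi.smul_apply, smul_eq_mul]
  field_simp
  linear_combination this

lemma zk_closure_prop {n s k : ℕ} (P : IdxPartition s k) (x : MIdx n s → ℂ)
    (hx : x ∈ WsPcone n P) (i : Fin k) (p q : Fin s) (hp : p ∈ P.block i) (hq : q ∈ P.block i)
    (hv : vecPart x p ≠ 0) :
    ∃ c : ℂ, vecPart x q = c • vecPart x p := by
  have key : ∀ a b, vecPart x q a * vecPart x p b - vecPart x q b * vecPart x p a = 0 := by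
    intro a b
    have hev : ∀ y : MIdx n s → ℂ, MvPolynomial.eval y (zkGV n s q a * zkGV n s p b -
        zkGV n s q b * zkGV n s p a) =
        vecPart y q a * vecPart y p b - vecPart y q b * vecPart y p a := by
      intro y
      simp [zkGV, vecPart]
    rw [← hev]
    refine zk_closure_vanish _ _ ?_ x hx
    rintro y ⟨_, _, hy, _⟩
    obtain ⟨c, hc⟩ := hy i q hq p hp
    simp only at hc
    rw [hev, hc]
    simp only [Pi.smul_apply, smul_eq_mul]; ring
  obtain ⟨b, hb⟩ := Function.ne_iff.1 hv
  simp only [Pi.zero_apply] at hb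
  refine ⟨vecPart x q b / vecPart x p b, ?_⟩
  funext a
  have := key a b
  simp only [Pi.smul_apply, smul_eq_mul]
  field_simp
  linear_combination this

/-- The divided difference form. -/
def zkG {n : ℕ} {R : Type*} [CommRing R] (A : Matrix (Fin n) (Fin n) R) (v w : Fin n → R)
    (a b : Fin n) : R :=
  ∑ m ∈ Finset.range n, A.charpoly.coeff (m + 1) *
    ∑ j ∈ Finset.range (m + 1), (A ^ j).mulVec v a * (A ^ (m - j)).mulVec w b

lemma zkG_map {n : ℕ} {R S : Type*} [CommRing R] [CommRing S] (φ : R →+* S)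
    (A : Matrix (Fin n) (Fin n) R) (v w : Fin n → R) (a b : Fin n) :
    φ (zkG A v w a b) = zkG (A.map φ) (fun k => φ (v k)) (fun k => φ (w k)) a b := by
  have h : ∀ i : ℕ, (A.map φ) ^ i = (A ^ i).map φ := fun i => (Matrix.map_pow A φ i).symm
  simp only [zkG, map_sum, map_mul, zk_mulVec_map, h, Matrix.charpoly_map, coeff_map]

lemma zkG_eig {n : ℕ} (A : Matrix (Fin n) (Fin n) ℂ) (v w : Fin n → ℂ) (l m : ℂ)
    (hv : A.mulVec v = l • v) (hw : A.mulVec w = m • w) (a b : Fin n) :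
    zkG A v w a b = (∑ r ∈ Finset.range n, A.charpoly.coeff (r + 1) *
      ∑ j ∈ Finset.range (r + 1), l ^ j * m ^ (r - j)) * (v a * w b) := by
  rw [zkG, Finset.sum_mul]
  refine Finset.sum_congr rfl fun r _ => ?_
  rw [mul_assoc, Finset.sum_mul]
  congr 1
  refine Finset.sum_congr rfl fun j _ => ?_
  rw [zk_pow_eig A l v hv, zk_pow_eig A m w hw]
  simp only [Pi.smul_apply, smul_eq_mul]; ring

lemma zk_dd_sub {n : ℕ} (A : Matrix (Fin n) (Fin n) ℂ) (l m : ℂ) :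
    (∑ r ∈ Finset.range n, A.charpoly.coeff (r + 1) *
      ∑ j ∈ Finset.range (r + 1), l ^ j * m ^ (r - j)) * (l - m) =
      A.charpoly.eval l - A.charpoly.eval m := by
  have hd : A.charpoly.natDegree = n := by simp
  rw [eval_eq_sum_range, eval_eq_sum_range, hd, Finset.sum_range_succ', Finset.sum_range_succ',
    Finset.sum_mul]
  simp only [pow_zero, add_sub_add_right_eq_sub, ← Finset.sum_sub_distrib]
  refine Finset.sum_congr rfl fun r _ => ?_
  have := (Commute.all l m).geom_sum₂_mul (r + 1)
  simp only [Nat.add_sub_cancel] at this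
  rw [mul_assoc, this]; ring

lemma zk_dd_self {n : ℕ} (A : Matrix (Fin n) (Fin n) ℂ) (l : ℂ) :
    (∑ r ∈ Finset.range n, A.charpoly.coeff (r + 1) *
      ∑ j ∈ Finset.range (r + 1), l ^ j * l ^ (r - j)) = A.charpoly.derivative.eval l := by
  have hd : A.charpoly.natDegree = n := by simp
  rw [derivative_eval, sum_over_range' _ (by simp) (n + 1) (by omega), Finset.sum_range_succ']
  simp only [Nat.cast_zero, mul_zero, zero_mul, add_zero]
  refine Finset.sum_congr rfl fun r _ => ?_
  have : ∀ j ∈ Finset.range (r + 1), l ^ j * l ^ (r - j) = l ^ r := by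
    intro j hj
    rw [← pow_add]; congr 1
    have := Finset.mem_range.1 hj; omega
  rw [Finset.sum_congr rfl this]
  simp [mul_assoc]

lemma zk_closure_distinct {n s k : ℕ} (P : IdxPartition s k) (x : MIdx n s → ℂ)
    (hx : x ∈ WsPcone n P) (i j : Fin k) (hij : i ≠ j) (p q : Fin s) (hp : p ∈ P.block i)
    (hq : q ∈ P.block j) (d : ℂ)
    (hdisc : zkDisc (d • toMat (matPart x)) ≠ 0)
    (hv : vecPart x p ≠ 0) (hw : vecPart x q ≠ 0) (l m : ℂ)
    (hl : (d • toMat (matPart x)).mulVec (vecPart x p) = l • vecPart x p)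
    (hm : (d • toMat (matPart x)).mulVec (vecPart x q) = m • vecPart x q) : l ≠ m := by
  have key : ∀ a b, zkG (d • toMat (matPart x)) (vecPart x p) (vecPart x q) a b = 0 := by
    intro a b
    have hev : ∀ y : MIdx n s → ℂ, MvPolynomial.eval y
        (zkG ((MvPolynomial.C d : MvPolynomial (MIdx n s) ℂ) • zkGM n s) (zkGV n s p) (zkGV n s q) a b) =
        zkG (d • toMat (matPart y)) (vecPart y p) (vecPart y q) a b := by
      intro y
      rw [zkG_map, zkGV_eval, zkGV_eval, ← zkGM_eval]
      congr 1
      ext i j; simp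
    rw [← hev]
    refine zk_closure_vanish _ _ ?_ x hx
    rintro y ⟨⟨_, hy⟩, hy1, hy2, hy3⟩
    obtain ⟨hp0, l, hl⟩ := hy p
    obtain ⟨hq0, m, hm⟩ := hy q
    have hl' : (d • toMat (matPart y)).mulVec (vecPart y p) = (d * l) • vecPart y p := by
      rw [Matrix.smul_mulVec, hl, smul_smul]
    have hm' : (d • toMat (matPart y)).mulVec (vecPart y q) = (d * m) • vecPart y q := by
      rw [Matrix.smul_mulVec, hm, smul_smul]
    rw [hev, zkG_eig _ _ _ _ _ hl' hm']
    by_cases hlm : d * l = d * m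
    · rw [← hlm, zk_dd_self, zk_eig_two _ _ (vecPart y p) (vecPart y q) hp0 ?_ hl' (hlm ▸ hm'),
        zero_mul]
      intro c hc
      let r : Fin k → Fin s := fun t => if t = i then p else if t = j then q else P.rep t
      have hr := hy3 r (by
        intro t
        simp only [r]
        split_ifs with h1 h2
        · rwa [h1]
        · rwa [h2]
        · exact Finset.min'_mem _ _)
      have h2 := hr.comp ![i, j] (by
        intro a b hab
        fin_cases a <;> fin_cases b <;> simp_all)
      have h3 : ((fun i => vecPart y (r i)) ∘ ![i, j]) = ![vecPart y p, vecPart y q] := by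
        funext a
        fin_cases a <;> simp [r, hij.symm]
      rw [h3, LinearIndependent.pair_iff' hp0] at h2
      exact h2 c hc.symm
    · have h1 := zk_dd_sub (d • toMat (matPart y)) (d * l) (d * m)
      rw [(zk_charpoly_root _ _).2 ⟨_, hp0, hl'⟩, (zk_charpoly_root _ _).2 ⟨_, hq0, hm'⟩,
        sub_self] at h1
      rw [(mul_eq_zero.1 h1).resolve_right (sub_ne_zero.2 hlm), zero_mul]
  rintro rfl
  obtain ⟨a, ha⟩ := Function.ne_iff.1 hv
  obtain ⟨b, hb⟩ := Function.ne_iff.1 hw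
  have h1 := key a b
  rw [zkG_eig _ _ _ _ _ hl hm, zk_dd_self] at h1
  have h2 := (zkDisc_ne_zero_iff _).1 hdisc l ((zk_charpoly_root _ _).2 ⟨_, hv, hl⟩)
  simp only [Pi.zero_apply] at ha hb
  exact (mul_ne_zero h2 (mul_ne_zero ha hb)) h1



section Line
variable {n s : ℕ} {γ : Fin (s + 1) → ℕ} {R S : Type*} [CommRing R] [CommRing S]

def zkB (e : Option (Fin (n ^ 2 - γ 0)) ≃ Fin n × Fin n) (a : MSliceParam n s γ → R) :
    Matrix (Fin n × Fin n) (Fin n × Fin n) R :=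
  Matrix.of fun x y => (e.symm x).elim (if y = e none then 1 else 0)
    (fun r => a (Sum.inl (r, some y)))

def zkY (e : Option (Fin (n ^ 2 - γ 0)) ≃ Fin n × Fin n) (a : MSliceParam n s γ → R) (τ : R) :
    Fin n × Fin n → R :=
  fun x => (e.symm x).elim τ (fun r => - a (Sum.inl (r, none)))

def zkL (e : Option (Fin (n ^ 2 - γ 0)) ≃ Fin n × Fin n) (a : MSliceParam n s γ → R) (τ : R) :
    Matrix (Fin n) (Fin n) R :=
  Matrix.of fun i j => ((zkB e a).adjugate.mulVec (zkY e a τ)) (i, j)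

lemma zkB_map (e : Option (Fin (n ^ 2 - γ 0)) ≃ Fin n × Fin n) (φ : R →+* S)
    (a : MSliceParam n s γ → R) : (zkB e a).map φ = zkB e (fun q => φ (a q)) := by
  ext x y
  simp only [zkB, Matrix.map_apply, Matrix.of_apply]
  cases e.symm x <;> simp [apply_ite φ]

lemma zkL_map (e : Option (Fin (n ^ 2 - γ 0)) ≃ Fin n × Fin n) (φ : R →+* S)
    (a : MSliceParam n s γ → R) (τ : R) :
    (zkL e a τ).map φ = zkL e (fun q => φ (a q)) (φ τ) := by
  ext i j
  have hY : ∀ x, φ (zkY e a τ x) = zkY e (fun q => φ (a q)) (φ τ) x := by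
    intro x
    simp only [zkY]
    cases e.symm x <;> simp
  have hB : (zkB e (fun q => φ (a q))).adjugate = (zkB e a).adjugate.map φ := by
    rw [← zkB_map]
    exact (RingHom.map_adjugate φ (zkB e a)).symm
  simp only [zkL, Matrix.map_apply, Matrix.of_apply, Matrix.mulVec, dotProduct, map_sum, map_mul,
    hY, hB]

lemma zkB_mulVec (e : Option (Fin (n ^ 2 - γ 0)) ≃ Fin n × Fin n) (a : MSliceParam n s γ → R)
    (x : Fin n × Fin n → R) (τ : R) :
    (zkB e a).mulVec x = zkY e a τ ↔ x (e none) = τ ∧ ∀ r : Fin (n ^ 2 - γ 0),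
      a (Sum.inl (r, none)) + ∑ ij, a (Sum.inl (r, some ij)) * x ij = 0 := by
  rw [funext_iff, ← e.forall_congr_right, Option.forall]
  simp only [Matrix.mulVec, dotProduct, zkB, zkY, Matrix.of_apply, Equiv.symm_apply_apply,
    Option.elim, ite_mul, one_mul, zero_mul, Finset.sum_ite_eq', Finset.sum_ite_eq,
    Finset.mem_univ, if_true]
  refine and_congr Iff.rfl (forall_congr' fun r => ?_)
  rw [eq_neg_iff_add_eq_zero, add_comm]

lemma zkB_L (e : Option (Fin (n ^ 2 - γ 0)) ≃ Fin n × Fin n) (a : MSliceParam n s γ → ℂ)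
    (hB : (zkB e a).det ≠ 0) (x : Fin n × Fin n → ℂ) (τ : ℂ) :
    (zkB e a).mulVec x = zkY e a τ ↔ (zkB e a).det • toMat x = zkL e a τ := by
  constructor
  · intro h
    ext i j
    simp only [zkL, ← h, Matrix.mulVec_mulVec, Matrix.adjugate_mul, Matrix.of_apply,
      Matrix.smul_mulVec, Matrix.one_mulVec, toMat]
    rfl
  · intro h
    have h1 : (zkB e a).det • x = (zkB e a).adjugate.mulVec (zkY e a τ) := by
      funext ⟨i, j⟩
      exact congrFun (congrFun h i) j
    have h2 := congrArg (zkB e a).mulVec h1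
    rw [Matrix.mulVec_smul, Matrix.mulVec_mulVec, Matrix.mul_adjugate, Matrix.smul_mulVec,
      Matrix.one_mulVec] at h2
    exact smul_right_injective _ hB h2

def zkEll (i : Fin s) (i0 i1 : Fin (n - γ i.succ)) (a : MSliceParam n s γ → R) : Fin n → R :=
  fun k => a (Sum.inr (⟨i, i1⟩, none)) * a (Sum.inr (⟨i, i0⟩, some k)) -
    a (Sum.inr (⟨i, i0⟩, none)) * a (Sum.inr (⟨i, i1⟩, some k))

def zkK (e : Option (Fin (n ^ 2 - γ 0)) ≃ Fin n × Fin n) (i : Fin s) (i0 i1 : Fin (n - γ i.succ))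
    (a : MSliceParam n s γ → R) (τ : R) : R :=
  zkKal (zkEll i i0 i1 a) (zkL e a τ)

def zkGG (e : Option (Fin (n ^ 2 - γ 0)) ≃ Fin n × Fin n) (r : ∀ j : Fin s, Fin (n - γ j.succ))
    (a : MSliceParam n s γ → R) (τ : R) : R :=
  zkDisc (zkL e a τ) * ∏ j, zkKal (fun k => a (Sum.inr (⟨j, r j⟩, some k))) (zkL e a τ)

lemma zkK_map (e : Option (Fin (n ^ 2 - γ 0)) ≃ Fin n × Fin n) (i : Fin s)
    (i0 i1 : Fin (n - γ i.succ)) (a : MSliceParam n s γ → R) (τ : R) (φ : R →+* S) :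
    φ (zkK e i i0 i1 a τ) = zkK e i i0 i1 (fun q => φ (a q)) (φ τ) := by
  rw [zkK, zkK, ← zkKal_map, zkL_map]
  congr 1
  funext k
  simp [zkEll]

lemma zkGG_map (e : Option (Fin (n ^ 2 - γ 0)) ≃ Fin n × Fin n)
    (r : ∀ j : Fin s, Fin (n - γ j.succ)) (a : MSliceParam n s γ → R) (τ : R) (φ : R →+* S) :
    φ (zkGG e r a τ) = zkGG e r (fun q => φ (a q)) (φ τ) := by
  simp only [zkGG, map_mul, map_prod, ← zkKal_map, ← zkDisc_map, zkL_map]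

def zkKp (e : Option (Fin (n ^ 2 - γ 0)) ≃ Fin n × Fin n) (i : Fin s) (i0 i1 : Fin (n - γ i.succ))
    (a : MSliceParam n s γ → R) : R[X] := zkK e i i0 i1 (fun q => C (a q)) X

def zkGp (e : Option (Fin (n ^ 2 - γ 0)) ≃ Fin n × Fin n) (r : ∀ j : Fin s, Fin (n - γ j.succ))
    (a : MSliceParam n s γ → R) : R[X] := zkGG e r (fun q => C (a q)) X

lemma zkKp_map (e : Option (Fin (n ^ 2 - γ 0)) ≃ Fin n × Fin n) (i : Fin s)
    (i0 i1 : Fin (n - γ i.succ)) (a : MSliceParam n s γ → R) (φ : R →+* S) :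
    (zkKp e i i0 i1 a).map φ = zkKp e i i0 i1 (fun q => φ (a q)) := by
  rw [← coe_mapRingHom, zkKp, zkK_map]
  simp [zkKp]

lemma zkGp_map (e : Option (Fin (n ^ 2 - γ 0)) ≃ Fin n × Fin n)
    (r : ∀ j : Fin s, Fin (n - γ j.succ)) (a : MSliceParam n s γ → R) (φ : R →+* S) :
    (zkGp e r a).map φ = zkGp e r (fun q => φ (a q)) := by
  rw [← coe_mapRingHom, zkGp, zkGG_map]
  simp [zkGp]

lemma zkKp_eval (e : Option (Fin (n ^ 2 - γ 0)) ≃ Fin n × Fin n) (i : Fin s)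
    (i0 i1 : Fin (n - γ i.succ)) (a : MSliceParam n s γ → R) (t : R) :
    (zkKp e i i0 i1 a).eval t = zkK e i i0 i1 a t := by
  rw [← coe_evalRingHom, zkKp, zkK_map]
  simp

lemma zkGp_eval (e : Option (Fin (n ^ 2 - γ 0)) ≃ Fin n × Fin n)
    (r : ∀ j : Fin s, Fin (n - γ j.succ)) (a : MSliceParam n s γ → R) (t : R) :
    (zkGp e r a).eval t = zkGG e r a t := by
  rw [← coe_evalRingHom, zkGp, zkGG_map]
  simp

lemma zkKal_deg (l : Fin n → ℂ) (A : Matrix (Fin n) (Fin n) ℂ[X])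
    (hA : ∀ i j, (A i j).natDegree ≤ 1) :
    (zkKal (fun k => C (l k)) A).natDegree ≤ ∑ i : Fin n, (i : ℕ) := by
  have hp : ∀ m i j, ((A ^ m) i j).natDegree ≤ m := by
    intro m
    induction m with
    | zero =>
      intro i j
      rw [pow_zero, Matrix.one_apply]
      split_ifs <;> simp
    | succ m ih =>
      intro i j
      rw [pow_succ, Matrix.mul_apply]
      refine natDegree_sum_le_of_forall_le _ _ fun k _ => ?_
      exact natDegree_mul_le.trans (Nat.add_le_add (ih _ _) (hA _ _))
  rw [zkKal, Matrix.det_apply]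
  refine natDegree_sum_le_of_forall_le _ _ fun σ _ => ?_
  refine (natDegree_smul_le _ _).trans ?_
  rw [← Equiv.sum_comp σ]
  refine (natDegree_prod_le _ _).trans (Finset.sum_le_sum fun i _ => ?_)
  simp only [Matrix.of_apply, Matrix.vecMul, dotProduct]
  refine natDegree_sum_le_of_forall_le _ _ fun k _ => ?_
  exact (natDegree_C_mul_le _ _).trans (hp _ _ _)

lemma zkKp_deg (e : Option (Fin (n ^ 2 - γ 0)) ≃ Fin n × Fin n) (i : Fin s)
    (i0 i1 : Fin (n - γ i.succ)) (a : MSliceParam n s γ → ℂ) :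
    (zkKp e i i0 i1 a).natDegree ≤ ∑ i : Fin n, (i : ℕ) := by
  have h1 : zkEll i i0 i1 (fun q => C (a q)) = fun k => C (zkEll i i0 i1 a k) := by
    funext k; simp [zkEll]
  rw [zkKp, zkK, h1]
  apply zkKal_deg
  intro x y
  have hB : (zkB e (fun q => C (a q))).adjugate = (zkB e a).adjugate.map C := by
    rw [← zkB_map]
    exact (RingHom.map_adjugate C (zkB e a)).symm
  simp only [zkL, Matrix.of_apply, hB, Matrix.mulVec, dotProduct, Matrix.map_apply]
  refine natDegree_sum_le_of_forall_le _ _ fun k _ => ?_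
  refine (natDegree_C_mul_le _ _).trans ?_
  simp only [zkY]
  cases e.symm k
  · exact natDegree_X_le
  · simp

structure zkGood (e : Option (Fin (n ^ 2 - γ 0)) ≃ Fin n × Fin n) (i : Fin s)
    (i0 i1 : Fin (n - γ i.succ)) (r : ∀ j : Fin s, Fin (n - γ j.succ))
    (a : MSliceParam n s γ → ℂ) : Prop where
  det : (zkB e a).det ≠ 0
  const : ∀ q, a (Sum.inr (q, none)) ≠ 0
  ne : zkKp e i i0 i1 a ≠ 0
  deg : (zkKp e i i0 i1 a).natDegree = ∑ i : Fin n, (i : ℕ)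
  der : ∀ t, zkK e i i0 i1 a t = 0 → (zkKp e i i0 i1 a).derivative.eval t ≠ 0
  gg : ∀ t, zkK e i i0 i1 a t = 0 → zkGG e r a t ≠ 0

def zkPhi (e : Option (Fin (n ^ 2 - γ 0)) ≃ Fin n × Fin n) (i : Fin s)
    (i0 i1 : Fin (n - γ i.succ)) (r : ∀ j : Fin s, Fin (n - γ j.succ)) (E : ℕ)
    (a : MSliceParam n s γ → R) : R :=
  (zkB e a).det * (∏ q, a (Sum.inr (q, none))) *
    (zkKp e i i0 i1 a).coeff (∑ i : Fin n, (i : ℕ)) *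
    resultant (zkKp e i i0 i1 a) ((zkKp e i i0 i1 a).derivative * zkGp e r a)
      (∑ i : Fin n, (i : ℕ)) E

lemma zkPhi_map (e : Option (Fin (n ^ 2 - γ 0)) ≃ Fin n × Fin n) (i : Fin s)
    (i0 i1 : Fin (n - γ i.succ)) (r : ∀ j : Fin s, Fin (n - γ j.succ)) (E : ℕ)
    (a : MSliceParam n s γ → R) (φ : R →+* S) :
    φ (zkPhi e i i0 i1 r E a) = zkPhi e i i0 i1 r E (fun q => φ (a q)) := by
  simp only [zkPhi, map_mul, map_prod, ← resultant_map_map, Polynomial.map_mul, ← derivative_map,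
    zkKp_map, zkGp_map, ← coeff_map]
  rw [RingHom.map_det]
  congr 4
  · exact zkB_map e φ a
  · exact zkKp_map ..
  · rw [Polynomial.map_mul, ← derivative_map, zkKp_map, zkGp_map]

lemma zkPhi_iff (e : Option (Fin (n ^ 2 - γ 0)) ≃ Fin n × Fin n) (i : Fin s)
    (i0 i1 : Fin (n - γ i.succ)) (r : ∀ j : Fin s, Fin (n - γ j.succ)) (E : ℕ)
    (a : MSliceParam n s γ → ℂ)
    (hE : ((zkKp e i i0 i1 a).derivative * zkGp e r a).natDegree ≤ E) :
    zkPhi e i i0 i1 r E a ≠ 0 ↔ zkGood e i i0 i1 r a := by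
  rw [zkPhi, mul_ne_zero_iff, mul_ne_zero_iff, mul_ne_zero_iff, Finset.prod_ne_zero_iff]
  constructor
  · rintro ⟨⟨⟨h1, h2⟩, h3⟩, h4⟩
    have hne : zkKp e i i0 i1 a ≠ 0 := by
      intro h; rw [h] at h3; simp at h3
    have hd := le_antisymm (zkKp_deg e i i0 i1 a) (le_natDegree_of_ne_zero h3)
    rw [zk_res_ne_zero_iff _ _ _ _ hd hne hE] at h4
    refine ⟨h1, fun q => h2 q (Finset.mem_univ _), hne, hd, fun t ht => ?_, fun t ht => ?_⟩
    · have := h4 t (by rw [zkKp_eval, ht])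
      rw [eval_mul] at this
      exact left_ne_zero_of_mul this
    · have := h4 t (by rw [zkKp_eval, ht])
      rw [eval_mul, zkGp_eval] at this
      exact right_ne_zero_of_mul this
  · rintro ⟨h1, h2, h3, h4, h5, h6⟩
    refine ⟨⟨⟨h1, fun q _ => h2 q⟩, ?_⟩, ?_⟩
    · rw [← h4]; simpa using h3
    · rw [zk_res_ne_zero_iff _ _ _ _ h4 h3 hE]
      intro t ht
      rw [zkKp_eval] at ht
      rw [eval_mul, zkGp_eval]
      exact mul_ne_zero (h5 t ht) (h6 t ht)

lemma zk_generic (e : Option (Fin (n ^ 2 - γ 0)) ≃ Fin n × Fin n) (i : Fin s)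
    (i0 i1 : Fin (n - γ i.succ)) (r : ∀ j : Fin s, Fin (n - γ j.succ))
    (a0 : MSliceParam n s γ → ℂ) (h0 : zkGood e i i0 i1 r a0) :
    ∃ U : Set (MSliceParam n s γ → ℂ), zOpen U ∧ zDense U ∧ ∀ a ∈ U, zkGood e i i0 i1 r a := by
  let v : MSliceParam n s γ → MvPolynomial (MSliceParam n s γ) ℂ := MvPolynomial.X
  let E := ((zkKp e i i0 i1 v).derivative * zkGp e r v).natDegree
  have hE : ∀ a : MSliceParam n s γ → ℂ,
      ((zkKp e i i0 i1 a).derivative * zkGp e r a).natDegree ≤ E := by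
    intro a
    have : (zkKp e i i0 i1 a).derivative * zkGp e r a =
        ((zkKp e i i0 i1 v).derivative * zkGp e r v).map (MvPolynomial.eval a) := by
      rw [Polynomial.map_mul, ← derivative_map, zkKp_map, zkGp_map]
      simp [v]
    rw [this]
    exact natDegree_map_le
  have hev : ∀ a : MSliceParam n s γ → ℂ,
      MvPolynomial.eval a (zkPhi e i i0 i1 r E v) = zkPhi e i i0 i1 r E a := by
    intro a
    rw [zkPhi_map]; simp [v]
  refine ⟨_, zk_open (zkPhi e i i0 i1 r E v), zk_dense _ ?_, ?_⟩
  · intro h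
    have h1 := hev a0
    rw [h, map_zero] at h1
    exact (zkPhi_iff e i i0 i1 r E a0 (hE a0)).2 h0 h1.symm
  · intro a ha
    rw [Set.mem_ofPred_eq, hev] at ha
    exact (zkPhi_iff e i i0 i1 r E a (hE a)).1 ha

end Line


/-- the evaluation polynomial of the functional on the j-th eigenvector -/
def zkF (l : ℕ → ℂ) (j : ℕ) : ℂ[X] :=
  ∑ i ∈ Finset.range (j + 1), C (l i * (j.descFactorial i : ℂ)) * X ^ i

lemma zkF_zero (l : ℕ → ℂ) (j : ℕ) : (zkF l j).eval 0 = l 0 := by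
  simp [zkF, eval_finsetSum, Finset.sum_range_succ']

lemma zkF_congr (l l2 : ℕ → ℂ) (j : ℕ) (h : ∀ i ≤ j, l i = l2 i) : zkF l j = zkF l2 j := by
  refine Finset.sum_congr rfl fun i hi => ?_
  rw [h i (by simpa [Nat.lt_succ_iff] using hi)]

lemma zkF_deg (l : ℕ → ℂ) (j : ℕ) (h : l j ≠ 0) : (zkF l j).natDegree = j ∧ zkF l j ≠ 0 := by
  have hc : (zkF l j).coeff j = l j * (j.factorial : ℂ) := by
    simp only [zkF, finsetSum_coeff, coeff_C_mul_X_pow]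
    rw [Finset.sum_ite_eq, if_pos (by simp), Nat.descFactorial_self]
  have hc0 : (zkF l j).coeff j ≠ 0 := by
    rw [hc]; exact mul_ne_zero h (by exact_mod_cast j.factorial_ne_zero)
  refine ⟨le_antisymm ?_ (le_natDegree_of_ne_zero hc0), fun h => hc0 (by simp [h])⟩
  refine natDegree_sum_le_of_forall_le _ _ fun i hi => ?_
  refine (natDegree_C_mul_X_pow_le _ _).trans ?_
  simpa [Nat.lt_succ_iff] using hi

lemma zk_sep_iff (G : ℂ[X]) :
    G.Separable ↔ ∀ t, G.eval t = 0 → G.derivative.eval t ≠ 0 := by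
  rw [Separable, isCoprime_iff_aeval_ne_zero_of_isAlgClosed ℂ ℂ]
  simp only [coe_aeval_eq_eval]
  constructor
  · intro h t ht; have := h t; tauto
  · intro h t; have := h t; tauto

lemma zk_cop_iff (G H : ℂ[X]) :
    IsCoprime G H ↔ ∀ t, G.eval t = 0 → H.eval t ≠ 0 := by
  rw [isCoprime_iff_aeval_ne_zero_of_isAlgClosed ℂ ℂ]
  simp only [coe_aeval_eq_eval]
  constructor
  · intro h t ht; have := h t; tauto
  · intro h t; have := h t; tauto

lemma zk_seq (n : ℕ) : ∃ l : ℕ → ℂ, l 0 = 1 ∧ (∀ i < n, l i ≠ 0) ∧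
    (∏ j ∈ Finset.range n, zkF l j).Separable := by
  induction n with
  | zero => exact ⟨fun _ => 1, rfl, by simp, by simp⟩
  | succ n ih =>
    rcases Nat.eq_zero_or_pos n with rfl | hn
    · refine ⟨fun _ => 1, rfl, by simp, ?_⟩
      simp [zkF]
    obtain ⟨l, h0, h1, h2⟩ := ih
    set Q := ∏ j ∈ Finset.range n, zkF l j with hQ
    set R : ℂ[X] := ∑ i ∈ Finset.range n, C (l i * (n.descFactorial i : ℂ)) * X ^ i with hR
    set H : ℂ[X] := Q * (C (n : ℂ) * R - X * R.derivative) with hH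
    have hR0 : R.eval 0 = 1 := by
      obtain ⟨m, rfl⟩ : ∃ m, n = m + 1 := ⟨n - 1, by omega⟩
      simp [hR, eval_finsetSum, Finset.sum_range_succ', h0]
    have hH0 : H ≠ 0 := by
      intro h
      have : H.eval 0 = n := by
        simp [hH, hR0, hQ, eval_prod, zkF_zero, h0]
      rw [h, eval_zero] at this
      exact hn.ne (by exact_mod_cast this)
    obtain ⟨μ, hμ⟩ := Infinite.exists_notMem_finset
      (insert 0 (H.roots.toFinset.image fun t => - R.eval t / t ^ n))
    simp only [Finset.mem_insert, Finset.mem_image, Multiset.mem_toFinset, mem_roots hH0, IsRoot,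
      not_or, not_exists, not_and] at hμ
    have hf : (n.factorial : ℂ) ≠ 0 := by exact_mod_cast n.factorial_ne_zero
    set l2 := Function.update l n (μ / n.factorial) with hl2
    have hG : zkF l2 n = R + C μ * X ^ n := by
      rw [zkF, Finset.sum_range_succ]
      congr 1
      · refine Finset.sum_congr rfl fun i hi => ?_
        rw [hl2, Function.update_of_ne (by simp at hi; omega)]
      · rw [hl2, Function.update_self, Nat.descFactorial_self, div_mul_cancel₀ _ hf]
    have hQ2 : ∏ j ∈ Finset.range n, zkF l2 j = Q := by
      refine Finset.prod_congr rfl fun j hj => ?_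
      apply zkF_congr
      intro i hi
      rw [hl2, Function.update_of_ne (by simp at hj; omega)]
    have key : ∀ t, (R + C μ * X ^ n).eval t = 0 → H.eval t ≠ 0 := by
      intro t ht hHt
      have ht0 : t ≠ 0 := by
        rintro rfl
        simp [hR0, hn.ne'] at ht
      apply hμ.2 t hHt
      simp at ht
      field_simp
      linear_combination -ht
    refine ⟨l2, ?_, ?_, ?_⟩
    · rw [hl2, Function.update_of_ne hn.ne, h0]
    · intro i hi
      rcases eq_or_ne i n with rfl | hin
      · rw [hl2, Function.update_self]; exact div_ne_zero hμ.1 hf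
      · rw [hl2, Function.update_of_ne hin]; exact h1 i (by omega)
    · rw [Finset.prod_range_succ, hQ2, hG]
      refine h2.mul ?_ ?_
      · rw [zk_sep_iff]
        intro t ht hd
        apply key t ht
        simp only [eval_add, eval_mul, eval_C, eval_pow, eval_X] at ht
        simp only [derivative_add, derivative_mul, derivative_C, derivative_X_pow, eval_add,
          eval_mul, eval_C, eval_pow, eval_X, zero_mul, zero_add, eval_natCast,
          map_natCast] at hd
        simp only [hH, eval_mul, eval_sub, eval_C, eval_X]
        have hp : t ^ n = t * t ^ (n - 1) := by
          rw [← pow_succ']; congr 1; omega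
        rw [hp] at ht
        have : (n : ℂ) * eval t R - t * eval t (derivative R) = 0 := by
          linear_combination (n : ℂ) * ht - t * hd
        rw [this, mul_zero]
      · rw [isCoprime_comm, zk_cop_iff]
        intro t ht hd
        apply key t ht
        rw [hH, eval_mul, hd, zero_mul]


def zkA (n : ℕ) (d t : ℂ) : Matrix (Fin n) (Fin n) ℂ :=
  Matrix.of fun i j => d * ((if i = j then t * (i : ℕ) else 0) +
    (if (j : ℕ) = i + 1 then 1 else 0))

def zkV (n : ℕ) (t : ℂ) (j : ℕ) : Fin n → ℂ := fun i => t ^ (i : ℕ) * (j.descFactorial i : ℂ)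

lemma zkA_eig (n : ℕ) (d t : ℂ) (j : Fin n) :
    (zkA n d t).mulVec (zkV n t j) = (d * (t * (j : ℕ))) • zkV n t j := by
  funext i
  have h2 : ∑ k : Fin n, (if (k : ℕ) = i + 1 then (1 : ℂ) else 0) * zkV n t j k =
      t ^ ((i : ℕ) + 1) * ((j : ℕ).descFactorial (i + 1) : ℂ) := by
    by_cases h : (i : ℕ) + 1 < n
    · rw [Finset.sum_eq_single ⟨i + 1, h⟩]
      · simp [zkV]
      · intro b _ hb
        rw [if_neg, zero_mul]
        intro hb2; apply hb; ext; exact hb2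
      · simp
    · rw [Nat.descFactorial_of_lt (by have := j.2; omega)]
      simp only [Nat.cast_zero, mul_zero]
      refine Finset.sum_eq_zero fun b _ => ?_
      rw [if_neg (by have := b.2; omega), zero_mul]
  have h3 : ((j : ℕ).descFactorial (i + 1) : ℂ) = ((j : ℕ) - (i : ℕ)) * ((j : ℕ).descFactorial i : ℂ) := by
    rcases le_or_gt (i : ℕ) j with h | h
    · rw [Nat.descFactorial_succ]; push_cast [Nat.cast_sub h]; ring
    · rw [Nat.descFactorial_of_lt h, Nat.descFactorial_of_lt (by omega)]; simp
  simp only [zkA, Matrix.mulVec, dotProduct, Matrix.of_apply, mul_assoc, ← Finset.mul_sum, add_mul,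
    Finset.sum_add_distrib, h2, Pi.smul_apply, smul_eq_mul]
  simp only [ite_mul, zero_mul, Finset.sum_ite_eq, Finset.mem_univ, if_true, h3]
  simp only [zkV]
  ring

lemma zkA_disc (n : ℕ) (d t : ℂ) (hd : d ≠ 0) (ht : t ≠ 0) : zkDisc (zkA n d t) ≠ 0 := by
  have h1 : (zkA n d t).charpoly = ∏ i : Fin n, (X - C (d * (t * (i : ℕ)))) := by
    rw [Matrix.charpoly_of_isUpperTriangular]
    · refine Finset.prod_congr rfl fun i _ => ?_
      simp [zkA]
    · intro i j hij
      simp only [id] at hij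
      simp only [zkA, Matrix.of_apply]
      rw [if_neg (by rintro rfl; exact lt_irrefl _ hij), if_neg (by simp only [Fin.lt_def] at hij; omega)]
      simp
  rw [zkDisc_ne_zero_iff, ← zk_sep_iff, h1, separable_prod_X_sub_C_iff]
  intro i j hij
  have := mul_left_cancel₀ ht (mul_left_cancel₀ hd hij)
  ext; exact_mod_cast this

lemma zkA_kal (n : ℕ) (d t : ℂ) (hd : d ≠ 0) (ht : t ≠ 0) (l : Fin n → ℂ) :
    zkKal l (zkA n d t) = 0 ↔ ∃ j : Fin n, l ⬝ᵥ zkV n t j = 0 := by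
  have hV : ∀ j : Fin n, zkV n t j ≠ 0 := by
    intro j h
    have := congrFun h ⟨0, by have := j.2; omega⟩
    simp [zkV] at this
  rw [zkKal_eq_zero_iff]
  constructor
  · rintro ⟨v, hv0, ⟨m, hm⟩, hl⟩
    have hr : (zkA n d t).charpoly.eval m = 0 := (zk_charpoly_root _ _).2 ⟨v, hv0, hm⟩
    have h1 : (zkA n d t).charpoly = ∏ i : Fin n, (X - C (d * (t * (i : ℕ)))) := by
      rw [Matrix.charpoly_of_isUpperTriangular]
      · refine Finset.prod_congr rfl fun i _ => ?_
        simp [zkA]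
      · intro i j hij
        simp only [id] at hij
        simp only [zkA, Matrix.of_apply]
        rw [if_neg (by rintro rfl; exact lt_irrefl _ hij), if_neg (by simp only [Fin.lt_def] at hij; omega)]
        simp
    have hr2 := hr
    rw [h1, eval_prod, Finset.prod_eq_zero_iff] at hr2
    obtain ⟨j, -, hj⟩ := hr2
    have hj : m = d * (t * (j : ℕ)) := by simpa [sub_eq_zero] using hj
    refine ⟨j, ?_⟩
    by_contra hne
    refine (zkDisc_ne_zero_iff _).1 (zkA_disc n d t hd ht) m hr
      (zk_eig_two _ m v (zkV n t j) hv0 ?_ hm (hj ▸ zkA_eig n d t j))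
    intro c hc
    apply hne
    rw [hc, dotProduct_smul, hl, smul_zero]
  · rintro ⟨j, hj⟩
    exact ⟨_, hV j, ⟨_, zkA_eig n d t j⟩, hj⟩

lemma zkV_F (n : ℕ) (t : ℂ) (l : ℕ → ℂ) (j : Fin n) :
    (fun i : Fin n => l i) ⬝ᵥ zkV n t j = (zkF l j).eval t := by
  simp only [dotProduct, zkV, zkF, eval_finsetSum, eval_mul, eval_C, eval_pow, eval_X]
  rw [Fin.sum_univ_eq_sum_range (fun i => l i * (t ^ i * ((j : ℕ).descFactorial i : ℂ))) n]
  rw [← Finset.sum_subset (Finset.range_mono (show (j : ℕ) + 1 ≤ n from j.2))]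
  · refine Finset.sum_congr rfl fun i _ => by ring
  · intro x _ hx
    rw [Nat.descFactorial_of_lt (by simp at hx; omega)]; simp



section Example
variable {n s : ℕ} {γ : Fin (s + 1) → ℕ}

open Classical in
def zkEx (e : Option (Fin (n ^ 2 - γ 0)) ≃ Fin n × Fin n) (i : Fin s)
    (i1 : Fin (n - γ i.succ)) (l : ℕ → ℂ) : MSliceParam n s γ → ℂ
  | Sum.inl (r, some y) => (if e (some r) = y then 1 else 0) -
      (if y = e none then zkA n 1 1 (e (some r)).1 (e (some r)).2 -
        zkA n 1 0 (e (some r)).1 (e (some r)).2 else 0)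
  | Sum.inl (r, none) => - zkA n 1 0 (e (some r)).1 (e (some r)).2
  | Sum.inr (_, none) => 1
  | Sum.inr (q, some k) => (if (k : ℕ) = 0 then 1 else 0) -
      (if q = ⟨i, i1⟩ then l k else 0)

lemma zkA_line (t : ℂ) (i j : Fin n) : zkA n 1 t i j = zkA n 1 0 i j +
    t * (zkA n 1 1 i j - zkA n 1 0 i j) := by
  simp only [zkA, Matrix.of_apply]
  split_ifs <;> ring

lemma zkA_smul (d t : ℂ) (i j : Fin n) : zkA n d t i j = d * zkA n 1 t i j := by
  simp [zkA, Matrix.of_apply]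

lemma zkEx_sys (e : Option (Fin (n ^ 2 - γ 0)) ≃ Fin n × Fin n) (hn : 2 ≤ n)
    (he : e none = (⟨1, hn⟩, ⟨1, hn⟩)) (i : Fin s)
    (i1 : Fin (n - γ i.succ)) (l : ℕ → ℂ) (x : Fin n × Fin n → ℂ) (t : ℂ) :
    (zkB e (zkEx e i i1 l)).mulVec x = zkY e (zkEx e i i1 l) t ↔
      x = fun y => zkA n 1 t y.1 y.2 := by
  have hnone : ∀ t, zkA n 1 t (e none).1 (e none).2 = t := by
    intro t; rw [he]; simp [zkA]
  rw [zkB_mulVec, funext_iff, ← e.forall_congr_right, Option.forall, hnone]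
  refine and_congr_right fun hx => forall_congr' fun r => ?_
  simp only [zkEx, sub_mul, ite_mul, one_mul, zero_mul, Finset.sum_sub_distrib, Finset.sum_ite_eq,
    Finset.sum_ite_eq', Finset.mem_univ, if_true, hx]
  rw [zkA_line t]
  constructor
  · intro h; linear_combination h
  · intro h; linear_combination h

lemma zkEx_det (e : Option (Fin (n ^ 2 - γ 0)) ≃ Fin n × Fin n) (hn : 2 ≤ n)
    (he : e none = (⟨1, hn⟩, ⟨1, hn⟩)) (i : Fin s)
    (i1 : Fin (n - γ i.succ)) (l : ℕ → ℂ) : (zkB e (zkEx e i i1 l)).det ≠ 0 := by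
  intro h
  obtain ⟨v, hv0, hv⟩ := Matrix.exists_mulVec_eq_zero_iff.2 h
  have h1 := (zkEx_sys e hn he i i1 l _ 0).2 rfl
  have h2 : (zkB e (zkEx e i i1 l)).mulVec (v + fun y => zkA n 1 0 y.1 y.2) =
      zkY e (zkEx e i i1 l) 0 := by
    rw [Matrix.mulVec_add, hv, zero_add, h1]
  rw [zkEx_sys e hn he] at h2
  exact hv0 (by simpa using h2)

lemma zkEx_L (e : Option (Fin (n ^ 2 - γ 0)) ≃ Fin n × Fin n) (hn : 2 ≤ n)
    (he : e none = (⟨1, hn⟩, ⟨1, hn⟩)) (i : Fin s)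
    (i1 : Fin (n - γ i.succ)) (l : ℕ → ℂ) (t : ℂ) :
    zkL e (zkEx e i i1 l) t = zkA n (zkB e (zkEx e i i1 l)).det t := by
  rw [← (zkB_L e _ (zkEx_det e hn he i i1 l) _ t).1 ((zkEx_sys e hn he i i1 l _ t).2 rfl)]
  ext x y
  rw [zkA_smul]
  rfl

lemma zkEx_good (e : Option (Fin (n ^ 2 - γ 0)) ≃ Fin n × Fin n) (hn : 2 ≤ n)
    (he : e none = (⟨1, hn⟩, ⟨1, hn⟩)) (i : Fin s)
    (i0 i1 : Fin (n - γ i.succ)) (h01 : i0 ≠ i1) (r : ∀ j : Fin s, Fin (n - γ j.succ))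
    (hr : r i = i0) : ∃ a, zkGood e i i0 i1 r a := by
  obtain ⟨l, hl0, hl1, hsep⟩ := zk_seq n
  set a := zkEx e i i1 l with ha
  set Q := ∏ j ∈ Finset.range n, zkF l j with hQ
  have hdet := zkEx_det e hn he i i1 l
  have hEll : zkEll i i0 i1 a = fun k : Fin n => l k := by
    funext k
    have : (⟨i, i0⟩ : Σ j : Fin s, Fin (n - γ j.succ)) ≠ ⟨i, i1⟩ := by
      intro h; exact h01 (by simpa using h)
    simp [zkEll, ha, zkEx, this]
  have hK : ∀ t, t ≠ 0 → (zkK e i i0 i1 a t = 0 ↔ Q.eval t = 0) := by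
    intro t ht
    rw [zkK, hEll, zkEx_L e hn he, zkA_kal _ _ _ hdet ht, hQ, eval_prod, Finset.prod_eq_zero_iff]
    simp only [zkV_F, Finset.mem_range]
    constructor
    · rintro ⟨j, hj⟩; exact ⟨j, j.2, hj⟩
    · rintro ⟨j, h1, h2⟩; exact ⟨⟨j, h1⟩, h2⟩
  have hQ0 : Q.eval 0 = 1 := by
    rw [hQ, eval_prod]
    exact Finset.prod_eq_one fun j _ => by rw [zkF_zero, hl0]
  have hQne : Q ≠ 0 := by intro h; rw [h] at hQ0; simp at hQ0
  have hQd : Q.natDegree = ∑ i : Fin n, (i : ℕ) := by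
    rw [hQ, natDegree_prod _ _ (fun j hj => (zkF_deg l j (hl1 j (by simpa using hj))).2),
      Fin.sum_univ_eq_sum_range (fun i => i) n]
    exact Finset.sum_congr rfl fun j hj => (zkF_deg l j (hl1 j (by simpa using hj))).1
  have hKne : zkKp e i i0 i1 a ≠ 0 := by
    intro h
    have hXQ : X * Q ≠ 0 := mul_ne_zero X_ne_zero hQne
    obtain ⟨t, ht⟩ := Infinite.exists_notMem_finset (X * Q).roots.toFinset
    rw [Multiset.mem_toFinset, mem_roots hXQ, IsRoot, eval_mul, eval_X, mul_eq_zero, not_or] at ht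
    apply ht.2
    rw [← hK t ht.1, ← zkKp_eval, h, eval_zero]
  have hdvd : Q ∣ zkKp e i i0 i1 a := by
    apply (IsAlgClosed.splits Q).dvd_of_roots_le_roots hQne
    rw [Multiset.le_iff_subset (nodup_roots hsep)]
    intro t ht
    rw [mem_roots hQne, IsRoot] at ht
    rw [mem_roots hKne, IsRoot, zkKp_eval, hK t]
    · exact ht
    · rintro rfl; rw [hQ0] at ht; exact one_ne_zero ht
  obtain ⟨c, hc⟩ := hdvd
  have hc0 : c ≠ 0 := by rintro rfl; exact hKne (by rw [hc, mul_zero])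
  have hcd : c.natDegree = 0 := by
    have := zkKp_deg e i i0 i1 a
    rw [hc, natDegree_mul hQne hc0, hQd] at this
    omega
  obtain ⟨u, rfl⟩ := natDegree_eq_zero.1 hcd
  have hu : u ≠ 0 := by rintro rfl; simp at hc0
  have hroot : ∀ t, zkK e i i0 i1 a t = 0 → t ≠ 0 ∧ Q.eval t = 0 := by
    intro t ht
    rw [← zkKp_eval, hc, eval_mul, eval_C, mul_eq_zero, or_iff_left hu] at ht
    exact ⟨by rintro rfl; rw [hQ0] at ht; exact one_ne_zero ht, ht⟩
  refine ⟨a, hdet, ?_, hKne, ?_, ?_, ?_⟩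
  · intro q; simp [ha, zkEx]
  · rw [hc, natDegree_mul hQne hc0, hcd, hQd, add_zero]
  · intro t ht
    rw [hc, derivative_mul, derivative_C, mul_zero, add_zero, eval_mul, eval_C]
    exact mul_ne_zero ((zk_sep_iff Q).1 hsep t (hroot t ht).2) hu
  · intro t ht
    obtain ⟨ht0, -⟩ := hroot t ht
    rw [zkGG, zkEx_L e hn he]
    refine mul_ne_zero (zkA_disc _ _ _ hdet ht0) (Finset.prod_ne_zero_iff.2 fun j _ => ?_)
    rw [Ne, zkA_kal _ _ _ hdet ht0]
    rintro ⟨m, hm⟩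
    have hne : (⟨j, r j⟩ : Σ j : Fin s, Fin (n - γ j.succ)) ≠ ⟨i, i1⟩ := by
      intro h
      have hj : j = i := congrArg Sigma.fst h
      subst hj
      exact h01 (by rw [← hr]; simpa using h)
    have hrow : (fun k : Fin n => a (Sum.inr (⟨j, r j⟩, some k))) =
        fun k : Fin n => if (k : ℕ) = 0 then (1 : ℂ) else 0 := by
      funext k; simp [ha, zkEx, hne]
    rw [hrow] at hm
    have hz : (fun k : Fin n => if (k : ℕ) = 0 then (1 : ℂ) else 0) ⬝ᵥ zkV n t m = 1 := by
      rw [dotProduct, Finset.sum_eq_single ⟨0, by omega⟩]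
      · simp [zkV]
      · intro b _ hb
        rw [if_neg, zero_mul]
        intro h; apply hb; ext; exact h
      · simp
    rw [hz] at hm
    exact one_ne_zero hm

end Example


section Count
variable {n s : ℕ} {γ : Fin (s + 1) → ℕ}

lemma zk_prop_of_disc (M : Matrix (Fin n) (Fin n) ℂ) (hM : zkDisc M ≠ 0) (l : ℂ)
    (v w : Fin n → ℂ) (hv0 : v ≠ 0) (hv : M.mulVec v = l • v) (hw : M.mulVec w = l • w) :
    ∃ c : ℂ, w = c • v := by
  by_contra h
  push Not at h
  exact (zkDisc_ne_zero_iff M).1 hM l ((zk_charpoly_root M l).2 ⟨v, hv0, hv⟩)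
    (zk_eig_two M l v w hv0 h hv hw)

lemma zk_same_eig (M : Matrix (Fin n) (Fin n) ℂ) (l m : ℂ) (v : Fin n → ℂ) (hv0 : v ≠ 0)
    (hl : M.mulVec v = l • v) (hm : M.mulVec v = m • v) : l = m := by
  rw [hl] at hm
  exact smul_left_injective ℂ hv0 hm

lemma zk_lam (e : Option (Fin (n ^ 2 - γ 0)) ≃ Fin n × Fin n) (i : Fin s)
    (i0 i1 : Fin (n - γ i.succ)) (r : ∀ j : Fin s, Fin (n - γ j.succ))
    (a : MSliceParam n s γ → ℂ) (h : zkGood e i i0 i1 r a) (t : ℂ)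
    (ht : zkK e i i0 i1 a t = 0) :
    ∃ lam : ℂ, (zkL e a t).charpoly.eval lam = 0 ∧ ∀ v l, v ≠ 0 → (zkL e a t).mulVec v = l • v →
      (zkEll i i0 i1 a ⬝ᵥ v = 0 ↔ l = lam) := by
  have hD : zkDisc (zkL e a t) ≠ 0 := left_ne_zero_of_mul (h.gg t ht)
  obtain ⟨w, hw0, ⟨lam, hw⟩, hlw⟩ := (zkKal_eq_zero_iff _ _).1 ht
  refine ⟨lam, (zk_charpoly_root _ _).2 ⟨w, hw0, hw⟩, fun v l hv0 hv => ⟨fun hlv => ?_, ?_⟩⟩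
  · by_contra hne
    have hind : ∀ c : ℂ, v ≠ c • w := by
      rintro c rfl
      apply hne
      refine zk_same_eig (zkL e a t) _ _ _ hv0 hv ?_
      rw [Matrix.mulVec_smul, hw, smul_comm]
    let Mp : Matrix (Fin n) (Fin n) ℂ[X] := Matrix.of fun k : Fin n =>
      Matrix.vecMul (zkEll i i0 i1 (fun q => C (a q))) (zkL e (fun q => C (a q)) X ^ (k : ℕ))
    have hMp : Mp.map (eval t) = Matrix.of fun k : Fin n =>
        Matrix.vecMul (zkEll i i0 i1 a) (zkL e a t ^ (k : ℕ)) := by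
      have hL : zkL e a t = (zkL e (fun q => C (a q)) X).map (evalRingHom t) := by
        rw [zkL_map]; simp
      have hp : ∀ m : ℕ, zkL e a t ^ m =
          (zkL e (fun q => C (a q)) X ^ m).map (evalRingHom t) := by
        intro m
        rw [hL]
        exact (Matrix.map_pow _ _ _).symm
      ext x y
      simp [Mp, Matrix.vecMul, dotProduct, eval_finsetSum, zkEll, hp]
    have h2 := zk_two_ker Mp t w v hw0 hind
      (by rw [hMp]; exact zkKal_ker _ _ _ _ hw hlw) (by rw [hMp]; exact zkKal_ker _ _ _ _ hv hlv)
    change (X - C t) ^ 2 ∣ zkKp e i i0 i1 a at h2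
    apply h.der t ht
    obtain ⟨u, hu⟩ := h2
    rw [hu]
    simp [derivative_mul, derivative_pow]
  · rintro rfl
    obtain ⟨c, rfl⟩ := zk_prop_of_disc _ hD l w v hw0 hw hv
    rw [dotProduct_smul, hlw, smul_zero]

lemma zk_nv (e : Option (Fin (n ^ 2 - γ 0)) ≃ Fin n × Fin n) (i : Fin s)
    (i0 i1 : Fin (n - γ i.succ)) (r : ∀ j : Fin s, Fin (n - γ j.succ))
    (a : MSliceParam n s γ → ℂ) (h : zkGood e i i0 i1 r a) (t : ℂ)
    (ht : zkK e i i0 i1 a t = 0) (j : Fin s) (l : ℂ) (hl : (zkL e a t).charpoly.eval l = 0) :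
    ∃ v, v ≠ 0 ∧ (zkL e a t).mulVec v = l • v ∧
      a (Sum.inr (⟨j, r j⟩, none)) + (fun k => a (Sum.inr (⟨j, r j⟩, some k))) ⬝ᵥ v = 0 ∧
      ∀ w, (zkL e a t).mulVec w = l • w →
        a (Sum.inr (⟨j, r j⟩, none)) + (fun k => a (Sum.inr (⟨j, r j⟩, some k))) ⬝ᵥ w = 0 →
        w = v := by
  have hD : zkDisc (zkL e a t) ≠ 0 := left_ne_zero_of_mul (h.gg t ht)
  have hKj := Finset.prod_ne_zero_iff.1 (right_ne_zero_of_mul (h.gg t ht)) j (Finset.mem_univ _)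
  set m := fun k => a (Sum.inr (⟨j, r j⟩, some k)) with hm
  set c0 := a (Sum.inr (⟨j, r j⟩, none)) with hc0
  have hc : c0 ≠ 0 := h.const _
  obtain ⟨u, hu0, hu⟩ := (zk_charpoly_root _ _).1 hl
  have hmu : m ⬝ᵥ u ≠ 0 := by
    intro hz
    exact hKj ((zkKal_eq_zero_iff _ _).2 ⟨u, hu0, ⟨l, hu⟩, hz⟩)
  refine ⟨(-c0 / (m ⬝ᵥ u)) • u, smul_ne_zero (div_ne_zero (neg_ne_zero.2 hc) hmu) hu0, ?_, ?_, ?_⟩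
  · rw [Matrix.mulVec_smul, hu, smul_comm]
  · rw [dotProduct_smul, smul_eq_mul]; field_simp; ring
  · intro w hw hw2
    obtain ⟨c, rfl⟩ := zk_prop_of_disc _ hD l u w hu0 hu hw
    congr 1
    rw [dotProduct_smul, smul_eq_mul] at hw2
    rw [eq_div_iff hmu]; linear_combination hw2

lemma zk_slice_iff (i : Fin s)
    (i0 i1 : Fin (n - γ i.succ)) (r : ∀ j : Fin s, Fin (n - γ j.succ)) (hr : r i = i0)
    (hall : ∀ q : Fin (n - γ i.succ), q = i0 ∨ q = i1)
    (hone : ∀ j, j ≠ i → ∀ q : Fin (n - γ j.succ), q = r j)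
    (a : MSliceParam n s γ → ℂ) (hc : ∀ q, a (Sum.inr (q, none)) ≠ 0)
    (v : Fin s → Fin n → ℂ) :
    (∀ j q, a (Sum.inr (⟨j, q⟩, none)) + (fun k => a (Sum.inr (⟨j, q⟩, some k))) ⬝ᵥ v j = 0) ↔
    (∀ j, a (Sum.inr (⟨j, r j⟩, none)) + (fun k => a (Sum.inr (⟨j, r j⟩, some k))) ⬝ᵥ v j = 0) ∧
      zkEll i i0 i1 a ⬝ᵥ v i = 0 := by
  have hE : zkEll i i0 i1 a ⬝ᵥ v i = a (Sum.inr (⟨i, i1⟩, none)) *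
      ((fun k => a (Sum.inr (⟨i, i0⟩, some k))) ⬝ᵥ v i) - a (Sum.inr (⟨i, i0⟩, none)) *
      ((fun k => a (Sum.inr (⟨i, i1⟩, some k))) ⬝ᵥ v i) := by
    simp only [zkEll, dotProduct, Finset.mul_sum, ← Finset.sum_sub_distrib]
    exact Finset.sum_congr rfl fun k _ => by ring
  constructor
  · intro h
    refine ⟨fun j => h j _, ?_⟩
    rw [hE]
    linear_combination a (Sum.inr (⟨i, i1⟩, none)) * h i i0 - a (Sum.inr (⟨i, i0⟩, none)) * h i i1
  · rintro ⟨h1, h2⟩ j q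
    rcases eq_or_ne j i with rfl | hj
    · have h3 := h1 j
      rw [hr] at h3
      rcases hall q with rfl | rfl
      · exact h3
      · apply mul_left_cancel₀ (hc ⟨j, i0⟩)
        rw [hE] at h2
        linear_combination a (Sum.inr (⟨j, q⟩, none)) * h3 - h2
    · rw [hone j hj q]; exact h1 j

lemma zk_equiv_emb {k : ℕ} {α : Type} (f : α ≃ Fin n) (x : α) (z : Fin n) (b b' : Fin k) :
    Nonempty ({σ : Fin k ↪ α // σ b = x} ≃ {σ : Fin k ↪ Fin n // σ b' = z}) := by
  let f' : α ≃ Fin n := f.trans (Equiv.swap (f x) z)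
  have hf' : f' x = z := by simp [f']
  refine ⟨Equiv.subtypeEquiv (Equiv.embeddingCongr (Equiv.swap b b') f') fun σ => ?_⟩
  simp [Equiv.embeddingCongr, ← hf']

end Count


section Count2
variable {n s : ℕ} {γ : Fin (s + 1) → ℕ}

lemma zk_card_roots (f : ℂ[X]) (hf : f ≠ 0) (h : ∀ t, f.eval t = 0 → f.derivative.eval t ≠ 0) :
    Nat.card {t // f.eval t = 0} = f.natDegree := by
  have h1 : f.roots.Nodup := nodup_roots ((zk_sep_iff f).2 h)
  have h2 := splits_iff_card_roots.1 (IsAlgClosed.splits f)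
  rw [← h2, ← Multiset.toFinset_card_of_nodup h1]
  refine Nat.subtype_card _ fun t => ?_
  rw [Multiset.mem_toFinset, mem_roots hf, IsRoot]

lemma zk_mem_iff {k : ℕ} (hn : 2 ≤ n) (P : IdxPartition s k) (blk : Fin s → Fin k)
    (hblk : ∀ p c, p ∈ P.block c ↔ blk p = c) (d : ℂ) (hd : d ≠ 0)
    (M : Matrix (Fin n) (Fin n) ℂ) (hM : zkDisc M ≠ 0)
    (x : MIdx n s → ℂ) (hx : d • toMat (matPart x) = M) (hv0 : ∀ j, vecPart x j ≠ 0) :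
    x ∈ WsPcone n P ↔ ∃ μ : Fin k → ℂ, Function.Injective μ ∧
      ∀ j, M.mulVec (vecPart x j) = μ (blk j) • vecPart x j := by
  constructor
  · intro hmem
    choose rep hrep using P.nonempty
    have heig : ∀ j, ∃ l : ℂ, M.mulVec (vecPart x j) = l • vecPart x j := by
      intro j
      obtain ⟨l, hl⟩ := zk_closure_eig P x hmem j (hv0 j)
      exact ⟨d * l, by rw [← hx, Matrix.smul_mulVec, hl, smul_smul]⟩
    choose lam hlam using heig
    refine ⟨fun c => lam (rep c), ?_, fun j => ?_⟩
    · intro c c' hcc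
      by_contra hne
      exact zk_closure_distinct P x hmem c c' hne (rep c) (rep c') (hrep c) (hrep c') d
        (by rw [hx]; exact hM) (hv0 _) (hv0 _) _ _ (by rw [hx]; exact hlam _)
        (by rw [hx]; exact hlam _) hcc
    · obtain ⟨c, hc⟩ := zk_closure_prop P x hmem (blk j) (rep (blk j)) j (hrep _)
        ((hblk _ _).2 rfl) (hv0 _)
      rw [hc, Matrix.mulVec_smul, hlam, smul_comm]
  · rintro ⟨μ, hμ, hv⟩
    apply zk_subset_closure
    have hx2 : toMat (matPart x) = d⁻¹ • M := by rw [← hx, smul_smul, inv_mul_cancel₀ hd, one_smul]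
    refine ⟨⟨?_, fun j => ⟨hv0 j, d⁻¹ * μ (blk j), ?_⟩⟩, hv0, ?_, ?_⟩
    · intro h0
      have hM0 : M = 0 := by
        rw [← hx, h0]; ext i j; simp [toMat]
      obtain ⟨c, hc⟩ := zk_prop_of_disc M hM 0 (Pi.single ⟨0, by omega⟩ 1)
        (Pi.single ⟨1, by omega⟩ 1) (by
          intro h; have := congrFun h ⟨0, by omega⟩; simp at this) (by rw [hM0, Matrix.zero_mulVec, zero_smul])
        (by rw [hM0, Matrix.zero_mulVec, zero_smul])
      have := congrFun hc ⟨1, by omega⟩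
      simp at this
    · rw [hx2, Matrix.smul_mulVec, hv, smul_smul]
    · intro c p hp q hq
      refine zk_prop_of_disc M hM (μ c) _ _ (hv0 q) ?_ ?_
      · rw [← (hblk q c).1 hq]; exact hv q
      · rw [← (hblk p c).1 hp]; exact hv p
    · intro r hr
      refine Module.End.eigenvectors_linearIndependent' (Matrix.toLin' M) μ hμ _ fun c => ?_
      rw [Module.End.hasEigenvector_iff, Module.End.mem_eigenspace_iff]
      refine ⟨?_, hv0 _⟩
      rw [Matrix.toLin'_apply, hv, (hblk _ _).1 (hr c)]

lemma zk_count {k : ℕ} (hn : 2 ≤ n) (P : IdxPartition s k)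
    (e : Option (Fin (n ^ 2 - γ 0)) ≃ Fin n × Fin n) (i : Fin s)
    (i0 i1 : Fin (n - γ i.succ)) (r : ∀ j : Fin s, Fin (n - γ j.succ)) (hr : r i = i0)
    (hall : ∀ q : Fin (n - γ i.succ), q = i0 ∨ q = i1)
    (hone : ∀ j, j ≠ i → ∀ q : Fin (n - γ j.succ), q = r j)
    (a : MSliceParam n s γ → ℂ) (h : zkGood e i i0 i1 r a) (b : Fin k) (z : Fin n) :
    (WsPcone n P ∩ mSlice γ a).ncard =
      (∑ i : Fin n, (i : ℕ)) * Nat.card {σ : Fin k ↪ Fin n // σ b = z} := by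
  obtain ⟨blk, hblk⟩ : ∃ blk : Fin s → Fin k, ∀ p c, p ∈ P.block c ↔ blk p = c := by
    choose blk hblk using P.cover
    refine ⟨blk, fun p c => ⟨fun hp => ?_, fun hp => hp ▸ hblk p⟩⟩
    by_contra hne
    exact Finset.disjoint_left.1 (P.disj _ _ hne) (hblk p) hp
  choose rep hrep using P.nonempty
  have hrep : ∀ c, blk (rep c) = c := fun c => (hblk _ _).1 (hrep c)
  choose lam hlam1 hlam2 using zk_lam e i i0 i1 r a h
  choose nv hnv0 hnv1 hnv2 hnv3 using zk_nv e i i0 i1 r a h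
  have hD : ∀ t, zkK e i i0 i1 a t = 0 → zkDisc (zkL e a t) ≠ 0 :=
    fun t ht => left_ne_zero_of_mul (h.gg t ht)
  set δ := (zkB e a).det with hδ
  have hδ0 : δ ≠ 0 := h.det
  let Rt : ℂ → Type := fun t => {l : ℂ // (zkL e a t).charpoly.eval l = 0}
  let D : Type := Σ t : {t // zkK e i i0 i1 a t = 0},
    {σ : Fin k ↪ Rt t.1 // σ (blk i) = ⟨lam t.1 t.2, hlam1 t.1 t.2⟩}
  -- membership in the slice
  have hslice : ∀ x : MIdx n s → ℂ, x ∈ mSlice γ a ↔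
      δ • toMat (matPart x) = zkL e a (matPart x (e none)) ∧
      (∀ j, a (Sum.inr (⟨j, r j⟩, none)) +
        (fun k => a (Sum.inr (⟨j, r j⟩, some k))) ⬝ᵥ vecPart x j = 0) ∧
      zkEll i i0 i1 a ⬝ᵥ vecPart x i = 0 := by
    intro x
    rw [← zk_slice_iff i i0 i1 r hr hall hone a h.const, hδ, ← zkB_L e a h.det, zkB_mulVec]
    simp only [true_and]
    exact Iff.rfl
  let Φ : D → (MIdx n s → ℂ) := fun y => Sum.elim (fun ij => δ⁻¹ * zkL e a y.1.1 ij.1 ij.2)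
    (fun jk => nv y.1.1 y.1.2 jk.1 (y.2.1 (blk jk.1)).1 (y.2.1 (blk jk.1)).2 jk.2)
  have hΦm : ∀ y, δ • toMat (matPart (Φ y)) = zkL e a y.1.1 := by
    intro y
    ext p q
    change δ * (δ⁻¹ * zkL e a y.1.1 p q) = _
    rw [mul_inv_cancel_left₀ hδ0]
  have hΦ0 : ∀ y j, vecPart (Φ y) j ≠ 0 :=
    fun y j => hnv0 y.1.1 y.1.2 j _ (y.2.1 (blk j)).2
  have hΦ1 : ∀ y j, (zkL e a y.1.1).mulVec (vecPart (Φ y) j) =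
      (y.2.1 (blk j)).1 • vecPart (Φ y) j :=
    fun y j => hnv1 y.1.1 y.1.2 j _ (y.2.1 (blk j)).2
  have hΦ2 : ∀ y j, a (Sum.inr (⟨j, r j⟩, none)) +
        (fun k => a (Sum.inr (⟨j, r j⟩, some k))) ⬝ᵥ vecPart (Φ y) j = 0 :=
    fun y j => hnv2 y.1.1 y.1.2 j _ (y.2.1 (blk j)).2
  clear_value Φ
  have hΦt : ∀ y, matPart (Φ y) (e none) = y.1.1 := by
    intro y
    exact ((zkB_mulVec e a _ _).1 ((zkB_L e a h.det _ _).2 (hΦm y))).1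
  have hΦmem : ∀ y, Φ y ∈ WsPcone n P ∩ mSlice γ a := by
    intro y
    refine ⟨?_, ?_⟩
    · rw [zk_mem_iff hn P blk hblk δ hδ0 _ (hD _ y.1.2) _ (hΦm y) (hΦ0 y)]
      refine ⟨fun c => (y.2.1 c).1, fun c c' hc => y.2.1.injective (Subtype.ext hc), fun j => ?_⟩
      exact hΦ1 y j
    · rw [hslice, hΦt]
      refine ⟨hΦm y, hΦ2 y, ?_⟩
      rw [hlam2 y.1.1 y.1.2 _ (y.2.1 (blk i)).1 (hΦ0 y i) (hΦ1 y i), y.2.2]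
  have hinj : Function.Injective Φ := by
    rintro ⟨⟨t, ht⟩, σ, hσ⟩ ⟨⟨t2, ht2⟩, σ2, hσ2⟩ heq
    have htt : t = t2 := by
      have h1 := hΦt ⟨⟨t, ht⟩, σ, hσ⟩
      rw [heq, hΦt] at h1
      exact h1.symm
    subst htt
    have : σ = σ2 := by
      ext c
      have h1 := hΦ1 ⟨⟨t, ht⟩, σ, hσ⟩ (rep c)
      have h2 := hΦ1 ⟨⟨t, ht2⟩, σ2, hσ2⟩ (rep c)
      rw [← heq] at h2
      rw [hrep] at h1 h2
      exact zk_same_eig (zkL e a t) _ _ _ (hΦ0 _ _) h1 h2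
    subst this
    rfl
  have hsurj : ∀ x ∈ WsPcone n P ∩ mSlice γ a, ∃ y, Φ y = x := by
    rintro x ⟨hx1, hx2⟩
    rw [hslice] at hx2
    obtain ⟨hm, hv, hl⟩ := hx2
    set t := matPart x (e none) with htdef
    have hv0 : ∀ j, vecPart x j ≠ 0 := by
      intro j hj
      have := hv j
      rw [hj, dotProduct_zero, add_zero] at this
      exact h.const _ this
    have ht : zkK e i i0 i1 a t = 0 := by
      obtain ⟨l, hl2⟩ := zk_closure_eig P x hx1 i (hv0 i)
      refine (zkKal_eq_zero_iff _ _).2 ⟨_, hv0 i, ⟨δ * l, ?_⟩, hl⟩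
      rw [← hm, Matrix.smul_mulVec, hl2, smul_smul]
    rw [zk_mem_iff hn P blk hblk δ hδ0 _ (hD _ ht) _ hm hv0] at hx1
    obtain ⟨μ, hμ, hμv⟩ := hx1
    have hroot : ∀ c, (zkL e a t).charpoly.eval (μ c) = 0 := by
      intro c
      refine (zk_charpoly_root _ _).2 ⟨vecPart x (rep c), hv0 _, ?_⟩
      rw [hμv, hrep]
    let σ : Fin k ↪ Rt t := ⟨fun c => ⟨μ c, hroot c⟩, fun c c' hc => hμ (congrArg Subtype.val hc)⟩
    have hσ : σ (blk i) = ⟨lam t ht, hlam1 t ht⟩ :=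
      Subtype.ext ((hlam2 t ht _ _ (hv0 i) (hμv i)).1 hl)
    let y : D := ⟨⟨t, ht⟩, σ, hσ⟩
    refine ⟨y, ?_⟩
    have e1 : matPart (Φ y) = matPart x := by
      have h1 := (hΦm y).trans hm.symm
      have h2 := smul_right_injective _ hδ0 h1
      funext ⟨p, q⟩
      exact congrFun (congrFun h2 p) q
    have e2 : ∀ j, vecPart (Φ y) j = vecPart x j := by
      intro j
      rw [hnv3 t ht j (μ (blk j)) (hroot _) (vecPart x j) (hμv j) (hv j)]
      exact hnv3 t ht j (μ (blk j)) (hroot _) (vecPart (Φ y) j) (hΦ1 y j) (hΦ2 y j)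
    funext w
    rcases w with ij | ⟨j, m⟩
    · exact congrFun e1 ij
    · exact congrFun (e2 j) m
  have hcardT : (WsPcone n P ∩ mSlice γ a).ncard = Nat.card D := by
    rw [← Nat.card_coe_set_eq]
    symm
    refine Nat.card_congr (Equiv.ofBijective
      (fun y => (⟨Φ y, hΦmem y⟩ : ↥(WsPcone n P ∩ mSlice γ a))) ⟨?_, ?_⟩)
    · intro y y2 hy
      exact hinj (congrArg Subtype.val hy)
    · rintro ⟨x, hx⟩
      obtain ⟨y, hy⟩ := hsurj x hx
      exact ⟨y, Subtype.ext hy⟩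
  have hRt : ∀ t, zkK e i i0 i1 a t = 0 → Nat.card (Rt t) = n := by
    intro t ht
    have := zk_card_roots (zkL e a t).charpoly (zkL e a t).charpoly_monic.ne_zero
      ((zkDisc_ne_zero_iff _).1 (hD t ht))
    rw [Matrix.charpoly_natDegree_eq_dim, Fintype.card_fin] at this
    exact this
  have hfib : ∀ t : {t // zkK e i i0 i1 a t = 0},
      Nonempty ({σ : Fin k ↪ Rt t.1 // σ (blk i) = ⟨lam t.1 t.2, hlam1 t.1 t.2⟩} ≃
        {σ : Fin k ↪ Fin n // σ b = z}) := by
    intro t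
    have : Finite (Rt t.1) := Nat.finite_of_card_ne_zero (by rw [hRt _ t.2]; omega)
    exact zk_equiv_emb (Finite.equivFinOfCardEq (hRt _ t.2)) _ z _ b
  have hKroots : Nat.card {t // zkK e i i0 i1 a t = 0} = ∑ i : Fin n, (i : ℕ) := by
    rw [← h.deg, ← zk_card_roots (zkKp e i i0 i1 a) h.ne
      (fun t ht => h.der t (by rwa [zkKp_eval] at ht))]
    simp only [zkKp_eval]
  rw [hcardT, ← hKroots, ← Nat.card_prod]
  exact Nat.card_congr ((Equiv.sigmaCongrRight fun t => (hfib t).some).trans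
    (Equiv.sigmaEquivProd _ _))

end Count2


lemma zk_hasMD_two {n s k : ℕ} (hn : 2 ≤ n) (P : IdxPartition s k) (i : Fin s) (b : Fin k)
    (z : Fin n) :
    hasMD (WsPcone n P) (specialExp n s i)
      ((∑ i : Fin n, (i : ℕ)) * Nat.card {σ : Fin k ↪ Fin n // σ b = z}) := by
  have g0 : specialExp n s i 0 = 1 := by simp [specialExp]
  have gi : n - specialExp n s i i.succ = 2 := by
    simp [specialExp]; omega
  have gj : ∀ j, j ≠ i → n - specialExp n s i j.succ = 1 := by
    intro j hj
    simp [specialExp, hj]; omega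
  have hpos : ∀ j : Fin s, 0 < n - specialExp n s i j.succ := by
    intro j
    rcases eq_or_ne j i with rfl | hj
    · omega
    · rw [gj j hj]; omega
  have hcard : Fintype.card (Option (Fin (n ^ 2 - specialExp n s i 0))) =
      Fintype.card (Fin n × Fin n) := by
    have : 0 < n ^ 2 := by positivity
    simp only [Fintype.card_option, Fintype.card_fin, Fintype.card_prod, g0]
    rw [← pow_two]; omega
  let e0 := Fintype.equivOfCardEq hcard
  let e := e0.trans (Equiv.swap (e0 none) (⟨1, hn⟩, ⟨1, hn⟩))
  have he : e none = (⟨1, hn⟩, ⟨1, hn⟩) := by simp [e]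
  let i0 : Fin (n - specialExp n s i i.succ) := ⟨0, by omega⟩
  let i1 : Fin (n - specialExp n s i i.succ) := ⟨1, by omega⟩
  let r : ∀ j : Fin s, Fin (n - specialExp n s i j.succ) := fun j => ⟨0, hpos j⟩
  have h01 : i0 ≠ i1 := by simp [i0, i1]
  obtain ⟨a0, ha0⟩ := zkEx_good e hn he i i0 i1 h01 r rfl
  obtain ⟨U, hU1, hU2, hU3⟩ := zk_generic e i i0 i1 r a0 ha0
  refine ⟨U, hU1, hU2, fun a ha => ?_⟩
  refine zk_count hn P e i i0 i1 r rfl ?_ ?_ a (hU3 a ha) b z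
  · intro q
    have := q.2
    have hq : (q : ℕ) = 0 ∨ (q : ℕ) = 1 := by omega
    rcases hq with hq | hq
    · left; exact Fin.ext hq
    · right; exact Fin.ext hq
  · intro j hj q
    have := q.2
    have h1 := gj j hj
    exact Fin.ext (by simp only [r]; omega)

lemma zk_hasMD_one {s k : ℕ} (P : IdxPartition s k) (hk : k ≤ 1) (i : Fin s) :
    hasMD (WsPcone 1 P) (specialExp 1 s i) 0 := by
  have g0 : 1 ^ 2 - specialExp 1 s i 0 = 0 := by simp [specialExp]
  have gj : ∀ j : Fin s, 1 - specialExp 1 s i j.succ = 1 := by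
    intro j
    simp [specialExp]
  let p : MvPolynomial (MSliceParam 1 s (specialExp 1 s i)) ℂ :=
    ∏ q, (MvPolynomial.X (Sum.inr (q, none)) * MvPolynomial.X (Sum.inr (q, some 0)))
  have hp : p ≠ 0 := by
    refine Finset.prod_ne_zero_iff.2 fun q _ => mul_ne_zero ?_ ?_ <;> exact MvPolynomial.X_ne_zero _
  refine ⟨_, zk_open p, zk_dense p hp, fun a ha => ?_⟩
  have ha : ∀ q, a (Sum.inr (q, none)) ≠ 0 ∧ a (Sum.inr (q, some 0)) ≠ 0 := by
    intro q
    have h1 : MvPolynomial.eval a p ≠ 0 := ha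
    simp only [p, map_prod, map_mul, MvPolynomial.eval_X] at h1
    have h2 := Finset.prod_ne_zero_iff.1 h1 q (Finset.mem_univ _)
    exact mul_ne_zero_iff.1 h2
  apply Set.Infinite.ncard
  let q0 : ∀ j : Fin s, Fin (1 - specialExp 1 s i j.succ) := fun j => ⟨0, by rw [gj]; omega⟩
  let w : Fin s → Fin 1 → ℂ := fun j _ =>
    -a (Sum.inr (⟨j, q0 j⟩, none)) / a (Sum.inr (⟨j, q0 j⟩, some 0))
  have hw : ∀ j, w j 0 ≠ 0 := fun j => div_ne_zero (neg_ne_zero.2 (ha _).1) (ha _).2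
  let Φ : ℂ → (MIdx 1 s → ℂ) := fun t => Sum.elim (fun _ => t) (fun jk => w jk.1 jk.2)
  have hinj : Function.Injective Φ := fun t t2 h => congrFun h (Sum.inl (0, 0))
  have hinf : (Φ '' {0}ᶜ).Infinite :=
    (Set.finite_singleton (0 : ℂ)).infinite_compl.image hinj.injOn
  refine hinf.mono ?_
  rintro _ ⟨t, ht, rfl⟩
  have ht : t ≠ 0 := ht
  have hwj : ∀ j, w j ≠ 0 := fun j h => hw j (congrFun h 0)
  refine ⟨zk_subset_closure _ ⟨⟨?_, ?_⟩, ?_, ?_, ?_⟩, ?_, ?_⟩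
  · intro h
    exact ht (congrFun h (0, 0))
  · intro j
    refine ⟨hwj j, t, ?_⟩
    funext x
    obtain rfl : x = 0 := Subsingleton.elim _ _
    simp [Matrix.mulVec, dotProduct, toMat, matPart, Φ]
  · exact hwj
  · intro c x _ y _
    refine ⟨w x 0 / w y 0, ?_⟩
    funext z
    obtain rfl : z = 0 := Subsingleton.elim _ _
    change w x 0 = w x 0 / w y 0 * w y 0
    rw [div_mul_cancel₀ _ (hw y)]
  · intro r _
    have hs : Subsingleton (Fin k) := by
      rw [Fin.subsingleton_iff_le_one]; exact hk
    rw [linearIndependent_subsingleton_index_iff]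
    exact fun c => hwj _
  · intro q
    exact absurd q.2 (by omega)
  · intro j q
    obtain rfl : q = q0 j := by
      apply Fin.ext
      have := q.2
      have h1 := gj j
      simp only [q0]; omega
    change _ + ∑ k : Fin 1, _ * w j k = 0
    rw [Fin.sum_univ_one]
    change _ + _ * (-a (Sum.inr (⟨j, q0 j⟩, none)) / a (Sum.inr (⟨j, q0 j⟩, some 0))) = 0
    rw [mul_div_cancel₀ _ (ha _).2, add_neg_cancel]

lemma zk_blocks_le {s k : ℕ} (P : IdxPartition s k) : k ≤ s := by
  choose rep hrep using P.nonempty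
  have : Function.Injective rep := by
    intro c d h
    by_contra hne
    exact Finset.disjoint_left.1 (P.disj _ _ hne) (hrep c) (h ▸ hrep d)
  simpa using Fintype.card_le_of_injective rep this

lemma zk_main (n s k : ℕ) (hn : 0 < n) (hs : 0 < s) (hsn : s ≤ n)
    (P : IdxPartition s k) :
    ∃ c : ℕ,
      (∀ i : Fin s, hasMD (WsPcone n P) (specialExp n s i) c) ∧
      (∀ i : Fin k, hasMD (WsPcone n (singletonPartition k)) (specialExp n k i) c) := by
  obtain ⟨b, -⟩ := P.cover ⟨0, hs⟩
  rcases Nat.lt_or_ge n 2 with h | h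
  · obtain rfl : n = 1 := by omega
    have hk : k ≤ 1 := (zk_blocks_le P).trans hsn
    exact ⟨0, fun i => zk_hasMD_one P hk i, fun i => zk_hasMD_one _ hk i⟩
  · exact ⟨_, fun i => zk_hasMD_two h P i b ⟨0, hn⟩,
      fun i => zk_hasMD_two h (singletonPartition k) i b ⟨0, hn⟩⟩

end ZK

/-- For every partition `P` of `{1, …, s}`, the coefficient `c_{s,P}` of
`h_0 ∑_i h_1^{n-1} ⋯ h_i^{n-2} ⋯ h_s^{n-1}` in `[W_{s,P}]` equals the coefficient of
`h_0 ∑_i h_1^{n-1} ⋯ h_i^{n-2} ⋯ h_{|P|}^{n-1}` in `[W̃_{|P|}]`. -/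
theorem WsP_coefficient_equality (n s k : ℕ) (hn : 0 < n) (hs : 0 < s) (hsn : s ≤ n)
    (P : IdxPartition s k) :
    ∃ c : ℕ,
      (∀ i : Fin s, hasMD (WsPcone n P) (specialExp n s i) c) ∧
      (∀ i : Fin k, hasMD (WsPcone n (singletonPartition k)) (specialExp n k i) c) := by
  exact zk_main n s k hn hs hsn P

end
end
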